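/- arXiv:2407.12586 — 5 statements merged into one kernel-verified Lean document; each statement's English description precedes it below -/
import Mathlib

section
/- Let a_1 and a_2 be positive integers such that gcd(2^{a_1}+1, 2^{a_2}+1) = 1, and let b_1 and b_2 be the 2-parts of a_1 and a_2 (the largest powers of 2 dividing them); assume b_1 > b_2. Let m = log_2(b_1/b_2) (a positive integer, since b_1 and b_2 are powers of 2), and set i_1 = ((2^{a_1}+1)/(2^{b_1}+1)) · ∏_{k=1}^{m} (2^{b_1/2^k} − 1) = ((2^{a_1}+1)/(2^{b_1}+1)) · (2^{b_1/2}−1)(2^{b_1/4}−1)⋯(2^{b_2}−1), and i_2 = (2^{a_2}+1)/(2^{b_2}+1). Then 2^{a_1}+1 does not divide i_1, 2^{a_2}+1 does not divide i_2, and V(i_1/(2^{a_1}+1) + i_2/(2^{a_2}+1)) = 1/4. -/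
/-- `IsV2 V` says that `V : ℚ → ℚ` is the Kubert `V`-function in characteristic 2:
for any rational `x` (with odd denominator), any `k ≥ 1` and any integer `a` with
`0 ≤ a < 2^k - 1` such that `x - a/(2^k - 1)` is an integer, `V x` equals the
binary digit sum of `a` divided by `k`. -/
def IsV2 (V : ℚ → ℚ) : Prop :=
  ∀ (x : ℚ) (k a : ℕ), 0 < k → a < 2 ^ k - 1 →
    (∃ z : ℤ, x - (a : ℚ) / ((2 : ℚ) ^ k - 1) = (z : ℚ)) →
    V x = ((Nat.digits 2 a).sum : ℚ) / (k : ℚ)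

/-!
Write `q = 2 ^ b₂` and `Q = q ^ 2 ^ m = 2 ^ b₁`. Cancelling the cofactors of `2 ^ b₁ + 1` and
`2 ^ b₂ + 1`, the argument of `V` is `P / (Q + 1) + 1 / (q + 1)` with
`P = ∏ k < m, (q ^ 2 ^ k - 1)`. Its numerator over `Q ^ 2 - 1` is the Thue–Morse word of length
`2 ^ m` in the two letters `u = 2 * (q - 1)` and `0`, written in base `X = q ^ 2`: such a word and
its complement add up to `u * ∏ k < m, (X ^ 2 ^ k + 1)` and differ by
`u * ∏ k < m, (X ^ 2 ^ k - 1)`. For `m > 0` both letters occur `2 ^ (m - 1)` times, and `u` has `b₂`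
ones among its `2 * b₂` binary digits, so a quarter of all binary digits of the word are ones.
-/

open Finset

section DigitSum

variable {β : ℕ}

theorem sum_digits_add_pow_mul (hβ : 1 < β) {n x : ℕ} (hx : x < β ^ n) (y : ℕ) :
    (Nat.digits β (x + β ^ n * y)).sum = (Nat.digits β x).sum + (Nat.digits β y).sum := by
  rcases Nat.eq_zero_or_pos y with rfl | hy
  · simp
  have hlen : (Nat.digits β x).length + (n - (Nat.digits β x).length) = n :=
    Nat.add_sub_cancel' ((Nat.digits_length_le_iff hβ x).2 hx)
  have happend := Nat.digits_append_zeroes_append_digits (n := x)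
    (k := n - (Nat.digits β x).length) hβ hy
  rw [hlen] at happend
  simp [← happend]

theorem sum_digits_pow_sub_one (hβ : 1 < β) (n : ℕ) :
    (Nat.digits β (β ^ n - 1)).sum = n * (β - 1) := by
  induction n with
  | zero => simp
  | succ n ih =>
    have hpos : 0 < β ^ n := by positivity
    have hsplit : β ^ (n + 1) - 1 = β ^ n - 1 + β ^ n * (β - 1) := by
      have := Nat.le_mul_of_pos_right (β ^ n) (Nat.zero_lt_of_lt hβ)
      rw [pow_succ, Nat.mul_sub_one]
      omega
    rw [hsplit, sum_digits_add_pow_mul hβ (by omega), ih,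
      Nat.digits_of_lt β (β - 1) (by omega) (by omega), List.sum_singleton, add_one_mul]

theorem lt_pow_sub_one_of_sum_digits_lt (hβ : 1 < β) {n x : ℕ} (hx : x < β ^ n)
    (hsum : (Nat.digits β x).sum < n * (β - 1)) : x < β ^ n - 1 := by
  refine lt_of_le_of_ne (Nat.le_sub_one_of_lt hx) fun h ↦ ?_
  rw [h, sum_digits_pow_sub_one hβ] at hsum
  exact hsum.false

end DigitSum

theorem sum_digits_two_mul_two_pow_sub_one (n : ℕ) :
    (Nat.digits 2 (2 * (2 ^ n - 1))).sum = n := by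
  have hshift := sum_digits_add_pow_mul one_lt_two (n := 1) (x := 0) (by norm_num) (2 ^ n - 1)
  simpa [sum_digits_pow_sub_one] using hshift

/-- The number whose base-`X` digits, read from the top, spell the Thue–Morse word of length `2 ^ m`
in the letters `u` and `w`, starting with `u`. Exchanging `u` and `w` gives the complementary word.
The letters are blocks of digits in a smaller base when `X` is a power of that base. -/
def thueMorseBlock (X : ℕ) : ℕ → ℕ → ℕ → ℕ
  | u, _, 0 => u
  | u, w, m + 1 => thueMorseBlock X w u m + X ^ 2 ^ m * thueMorseBlock X u w m

section ThueMorse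

theorem thueMorseBlock_lt {X u w : ℕ} (hu : u < X) (hw : w < X) (m : ℕ) :
    thueMorseBlock X u w m < X ^ 2 ^ m := by
  induction m generalizing u w with
  | zero => simpa [thueMorseBlock] using hu
  | succ m ih =>
    calc thueMorseBlock X w u m + X ^ 2 ^ m * thueMorseBlock X u w m
        < X ^ 2 ^ m * (thueMorseBlock X u w m + 1) := by linarith [ih hw hu]
      _ ≤ X ^ 2 ^ m * X ^ 2 ^ m := Nat.mul_le_mul_left _ (ih hu hw)
      _ = X ^ 2 ^ (m + 1) := by ring

theorem sum_digits_thueMorseBlock_succ_eq_add {β n u w : ℕ} (hβ : 1 < β) (hu : u < β ^ n)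
    (hw : w < β ^ n) (m : ℕ) :
    (Nat.digits β (thueMorseBlock (β ^ n) u w (m + 1))).sum =
      (Nat.digits β (thueMorseBlock (β ^ n) w u m)).sum +
        (Nat.digits β (thueMorseBlock (β ^ n) u w m)).sum := by
  have hlt := thueMorseBlock_lt hw hu m
  rw [← pow_mul] at hlt
  rw [thueMorseBlock, ← pow_mul, sum_digits_add_pow_mul hβ hlt]

theorem sum_digits_thueMorseBlock_succ {β n u w : ℕ} (hβ : 1 < β) (hu : u < β ^ n)
    (hw : w < β ^ n) (m : ℕ) :
    (Nat.digits β (thueMorseBlock (β ^ n) u w (m + 1))).sum =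
      2 ^ m * ((Nat.digits β u).sum + (Nat.digits β w).sum) := by
  induction m generalizing u w with
  | zero =>
    rw [sum_digits_thueMorseBlock_succ_eq_add hβ hu hw, thueMorseBlock, thueMorseBlock, pow_zero,
      one_mul, add_comm]
  | succ m ih =>
    rw [sum_digits_thueMorseBlock_succ_eq_add hβ hu hw, ih hw hu, ih hu hw]
    ring

variable {R : Type*} [CommRing R]

theorem thueMorseBlock_add_swap_mul (X u w m : ℕ) :
    ((thueMorseBlock X u w m : R) + thueMorseBlock X w u m) * (X - 1) =
      (u + w) * (X ^ 2 ^ m - 1) := by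
  induction m with
  | zero => simp [thueMorseBlock]
  | succ m ih =>
    simp only [thueMorseBlock]
    push_cast
    linear_combination (1 + (X : R) ^ 2 ^ m) * ih

theorem thueMorseBlock_sub_swap (X u w m : ℕ) :
    (thueMorseBlock X u w m : R) - thueMorseBlock X w u m =
      (u - w) * ∏ k ∈ range m, ((X : R) ^ 2 ^ k - 1) := by
  induction m with
  | zero => simp [thueMorseBlock]
  | succ m ih =>
    simp only [thueMorseBlock, prod_range_succ]
    push_cast
    linear_combination ((X : R) ^ 2 ^ m - 1) * ih

end ThueMorse

theorem sub_one_mul_prod_sq_pow_two_pow_sub_one {R : Type*} [CommRing R] (q : R) (m : ℕ) :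
    (q - 1) * ∏ k ∈ range m, ((q ^ 2) ^ 2 ^ k - 1) =
      (∏ k ∈ range m, (q ^ 2 ^ k - 1)) * (q ^ 2 ^ m - 1) := by
  rw [← prod_range_succ, prod_range_succ', mul_comm, pow_zero, pow_one]
  simp only [← pow_mul, ← pow_succ']

theorem prod_pow_two_pow_sub_one_le {q : ℕ} (hq : 0 < q) (m : ℕ) :
    ∏ k ∈ range m, (q ^ 2 ^ k - 1) ≤ q ^ 2 ^ m := by
  induction m with
  | zero => simpa using Nat.one_le_of_lt hq
  | succ m ih =>
    rw [prod_range_succ, pow_succ 2, mul_two, pow_add]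
    exact Nat.mul_le_mul ih (Nat.sub_le _ 1)

theorem prod_pow_two_pow_sub_one_pos {q : ℕ} (hq : 1 < q) (m : ℕ) :
    0 < ∏ k ∈ range m, (q ^ 2 ^ k - 1) :=
  prod_pos fun _ _ ↦ Nat.sub_pos_of_lt (Nat.one_lt_pow (by positivity) hq)

theorem not_pow_two_pow_add_one_dvd_prod {q : ℕ} (hq : 1 < q) (m : ℕ) :
    ¬ q ^ 2 ^ m + 1 ∣ ∏ k ∈ range m, (q ^ 2 ^ k - 1) :=
  Nat.not_dvd_of_pos_of_lt (prod_pow_two_pow_sub_one_pos hq m)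
    (Nat.lt_succ_of_le (prod_pow_two_pow_sub_one_le (Nat.zero_lt_of_lt hq) m))

theorem thueMorseBlock_sq_mul_add_one {q : ℕ} (hq : 1 < q) (m : ℕ) :
    (thueMorseBlock (q ^ 2) (2 * (q - 1)) 0 m : ℚ) * (q + 1) =
      (q ^ 2 ^ m) ^ 2 - 1 + (∏ k ∈ range m, ((q : ℚ) ^ 2 ^ k - 1)) * (q ^ 2 ^ m - 1) * (q + 1) := by
  have hq_sub : (q : ℚ) - 1 ≠ 0 := sub_ne_zero.2 (by exact_mod_cast hq.ne')
  have hsum := thueMorseBlock_add_swap_mul (R := ℚ) (q ^ 2) (2 * (q - 1)) 0 m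
  have hdiff := thueMorseBlock_sub_swap (R := ℚ) (q ^ 2) (2 * (q - 1)) 0 m
  push_cast [Nat.cast_pred (Nat.zero_lt_of_lt hq)] at hsum hdiff
  rw [pow_right_comm (q : ℚ) 2 (2 ^ m)] at hsum
  have hsum' : ((thueMorseBlock (q ^ 2) (2 * (q - 1)) 0 m : ℚ) +
      thueMorseBlock (q ^ 2) 0 (2 * (q - 1)) m) * (q + 1) = 2 * ((q ^ 2 ^ m) ^ 2 - 1) := by
    refine mul_right_cancel₀ hq_sub ?_
    linear_combination hsum
  have hprod := sub_one_mul_prod_sq_pow_two_pow_sub_one (q : ℚ) m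
  linear_combination hsum' / 2 + (q + 1) / 2 * hdiff + (q + 1) * hprod

theorem prod_div_add_one_div_eq_thueMorseBlock_div {q : ℕ} (hq : 1 < q) (m : ℕ) :
    ((∏ k ∈ range m, (q ^ 2 ^ k - 1) : ℕ) : ℚ) / ((q : ℚ) ^ 2 ^ m + 1) + 1 / ((q : ℚ) + 1) =
      thueMorseBlock (q ^ 2) (2 * (q - 1)) 0 m / (((q : ℚ) ^ 2) ^ 2 ^ m - 1) := by
  have hprod : ((∏ k ∈ range m, (q ^ 2 ^ k - 1) : ℕ) : ℚ) =
      ∏ k ∈ range m, ((q : ℚ) ^ 2 ^ k - 1) := by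
    rw [Nat.cast_prod]
    exact prod_congr rfl fun k _ ↦ by rw [Nat.cast_pred (by positivity), Nat.cast_pow]
  have hq_one : (1 : ℚ) < q := by exact_mod_cast hq
  have hQ_one : (1 : ℚ) < (q : ℚ) ^ 2 ^ m := one_lt_pow₀ hq_one (by positivity)
  have hnum := thueMorseBlock_sq_mul_add_one hq m
  rw [hprod, pow_right_comm (q : ℚ) 2 (2 ^ m)]
  generalize (q : ℚ) ^ 2 ^ m = Q at *
  have hQ_add : Q + 1 ≠ 0 := by linarith
  have hq_add : (q : ℚ) + 1 ≠ 0 := by linarith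
  have hQ_sq : Q ^ 2 - 1 ≠ 0 := by nlinarith
  rw [div_add_div _ _ hQ_add hq_add, div_eq_div_iff (mul_ne_zero hQ_add hq_add) hQ_sq]
  linear_combination -(Q + 1) * hnum

theorem IsV2.apply_prod_div_add_one_div {V : ℚ → ℚ} (hV : IsV2 V) {b m : ℕ} (hb : 0 < b)
    (hm : 0 < m) :
    V (((∏ k ∈ range m, ((2 ^ b) ^ 2 ^ k - 1) : ℕ) : ℚ) / (((2 : ℚ) ^ b) ^ 2 ^ m + 1) +
      1 / ((2 : ℚ) ^ b + 1)) = 1 / 4 := by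
  obtain ⟨m, rfl⟩ := Nat.exists_eq_add_one_of_ne_zero hm.ne'
  have hq : 1 < 2 ^ b := Nat.one_lt_two_pow hb.ne'
  have hu : 2 * (2 ^ b - 1) < 2 ^ (b * 2) := by
    have := Nat.mul_le_mul_right (2 ^ b) hq
    rw [mul_two, pow_add]
    omega
  set t := thueMorseBlock (2 ^ (b * 2)) (2 * (2 ^ b - 1)) 0 (m + 1) with ht
  have hdigits : (Nat.digits 2 t).sum = 2 ^ m * b := by
    rw [ht, sum_digits_thueMorseBlock_succ one_lt_two hu (by positivity),
      sum_digits_two_mul_two_pow_sub_one, Nat.digits_zero, List.sum_nil, add_zero]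
  have hpos : 0 < 2 ^ m * b := by positivity
  have hwidth : b * 2 * 2 ^ (m + 1) = 4 * (2 ^ m * b) := by ring
  have hlt : t < 2 ^ (b * 2 * 2 ^ (m + 1)) := by
    rw [pow_mul]
    exact thueMorseBlock_lt hu (by positivity) (m + 1)
  have hvalue := prod_div_add_one_div_eq_thueMorseBlock_div hq (m + 1)
  rw [← pow_mul 2 b 2, ← ht, Nat.cast_pow, Nat.cast_ofNat, ← pow_mul _ b 2,
    ← pow_mul _ (b * 2)] at hvalue
  rw [hvalue, hV _ (b * 2 * 2 ^ (m + 1)) t (by omega)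
    (lt_pow_sub_one_of_sum_digits_lt one_lt_two hlt (by omega)) ⟨0, by simp⟩, hdigits, hwidth]
  have : ((2 ^ m * b : ℕ) : ℚ) ≠ 0 := by exact_mod_cast hpos.ne'
  rw [Nat.cast_mul 4, Nat.cast_ofNat]
  field_simp

theorem pow_two_pow_padicValNat_add_one_dvd (x : ℕ) {a : ℕ} (ha : a ≠ 0) :
    x ^ 2 ^ padicValNat 2 a + 1 ∣ x ^ a + 1 := by
  have hodd : Odd (Nat.divMaxPow a 2) :=
    Nat.not_even_iff_odd.1 (mt Even.two_dvd (Nat.not_dvd_divMaxPow one_lt_two ha))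
  have hdvd := hodd.nat_add_dvd_pow_add_pow (x ^ 2 ^ padicValNat 2 a) 1
  rwa [one_pow, ← pow_mul, Nat.pow_padicValNat_mul_divMaxPow] at hdvd

theorem prod_Icc_two_pow_mul_div {M : Type*} [CommMonoid M] (f : ℕ → M) (b m : ℕ) :
    ∏ k ∈ Icc 1 m, f (2 ^ m * b / 2 ^ k) = ∏ k ∈ range m, f (2 ^ k * b) := by
  refine prod_nbij' (m - ·) (m - ·) ?_ ?_ ?_ ?_ fun k hk ↦ ?_
  any_goals grind
  have hsplit : 2 ^ m * b = 2 ^ k * (2 ^ (m - k) * b) := by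
    rw [← mul_assoc, ← pow_add, Nat.add_sub_cancel' (mem_Icc.1 hk).2]
  rw [hsplit, Nat.mul_div_cancel_left _ (by positivity)]

theorem pow_log_div_mul {β i j : ℕ} (hβ : 1 < β) (hji : j ≤ i) :
    β ^ Nat.log β (β ^ i / β ^ j) * β ^ j = β ^ i := by
  rw [Nat.pow_div hji (by omega), Nat.log_pow hβ, ← pow_add, Nat.sub_add_cancel hji]

theorem dvd_div_mul_iff {M N : ℕ} (hMN : M ∣ N) (hN : N ≠ 0) (P : ℕ) :
    N ∣ N / M * P ↔ M ∣ P := by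
  obtain ⟨c, rfl⟩ := hMN
  rw [Nat.mul_div_cancel_left c (by grind), mul_comm M, Nat.mul_dvd_mul_iff_left (by grind)]

theorem cast_div_mul_div_self {K : Type*} [Field K] [CharZero K] {M N : ℕ} (hMN : M ∣ N)
    (hN : N ≠ 0) (P : ℕ) : ((N / M * P : ℕ) : K) / N = P / M := by
  have hN_cast : (N : K) ≠ 0 := by exact_mod_cast hN
  rw [Nat.cast_mul, Nat.cast_div_charZero hMN]
  field_simp

/-- For positive integers `a₁, a₂` with `gcd(2^{a₁}+1, 2^{a₂}+1)=1`, `b_j = 2`-part of `a_j`,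
`b₁ > b₂`, `m = log₂(b₁/b₂)`, and
`i₁ = ((2^{a₁}+1)/(2^{b₁}+1)) ∏_{k=1}^{m} (2^{b₁/2^k}-1)`, `i₂ = (2^{a₂}+1)/(2^{b₂}+1)`,
one has `2^{a₁}+1 ∤ i₁`, `2^{a₂}+1 ∤ i₂`, and `V(i₁/(2^{a₁}+1) + i₂/(2^{a₂}+1)) = 1/4`. -/
theorem stmt_9 (V : ℚ → ℚ) (hV : IsV2 V) (a₁ a₂ : ℕ) (ha₁ : 0 < a₁) (ha₂ : 0 < a₂)
    (hcop : Nat.Coprime (2 ^ a₁ + 1) (2 ^ a₂ + 1))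
    (b₁ b₂ : ℕ) (hb₁ : b₁ = 2 ^ (padicValNat 2 a₁)) (hb₂ : b₂ = 2 ^ (padicValNat 2 a₂))
    (hgt : b₂ < b₁)
    (m : ℕ) (hm : m = Nat.log 2 (b₁ / b₂))
    (i₁ i₂ : ℕ)
    (hi₁ : i₁ = ((2 ^ a₁ + 1) / (2 ^ b₁ + 1)) * ∏ k ∈ Finset.Icc 1 m, (2 ^ (b₁ / 2 ^ k) - 1))
    (hi₂ : i₂ = (2 ^ a₂ + 1) / (2 ^ b₂ + 1)) :
    ¬ ((2 ^ a₁ + 1) ∣ i₁) ∧ ¬ ((2 ^ a₂ + 1) ∣ i₂) ∧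
      V ((i₁ : ℚ) / ((2 : ℚ) ^ a₁ + 1) + (i₂ : ℚ) / ((2 : ℚ) ^ a₂ + 1)) = 1 / 4 := by
  have hdvd₁ : 2 ^ b₁ + 1 ∣ 2 ^ a₁ + 1 := hb₁ ▸ pow_two_pow_padicValNat_add_one_dvd 2 ha₁.ne'
  have hdvd₂ : 2 ^ b₂ + 1 ∣ 2 ^ a₂ + 1 := hb₂ ▸ pow_two_pow_padicValNat_add_one_dvd 2 ha₂.ne'
  have hb : b₁ = 2 ^ m * b₂ := by
    rw [hb₁, hb₂, Nat.pow_lt_pow_iff_right one_lt_two] at hgt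
    rw [hm, hb₁, hb₂, pow_log_div_mul one_lt_two hgt.le]
  have hb₂_pos : 0 < b₂ := hb₂ ▸ by positivity
  have hm_pos : 0 < m := Nat.pos_of_ne_zero fun h ↦ by simp [hb, h] at hgt
  have hpow : 2 ^ b₁ = (2 ^ b₂) ^ 2 ^ m := by rw [hb, pow_mul']
  rw [hb, prod_Icc_two_pow_mul_div (2 ^ · - 1), ← hb] at hi₁
  simp only [pow_mul'] at hi₁
  rw [← mul_one (_ / _)] at hi₂
  refine ⟨?_, ?_, ?_⟩
  · rw [hi₁, dvd_div_mul_iff hdvd₁ (Nat.succ_ne_zero _), hpow]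
    exact not_pow_two_pow_add_one_dvd_prod (Nat.one_lt_two_pow hb₂_pos.ne') m
  · rw [hi₂, dvd_div_mul_iff hdvd₂ (Nat.succ_ne_zero _)]
    exact Nat.not_dvd_of_pos_of_lt one_pos (by simp)
  · have hfrac₁ := cast_div_mul_div_self (K := ℚ) hdvd₁ (Nat.succ_ne_zero _)
      (∏ k ∈ range m, ((2 ^ b₂) ^ 2 ^ k - 1))
    have hfrac₂ := cast_div_mul_div_self (K := ℚ) hdvd₂ (Nat.succ_ne_zero _) 1
    rw [← hi₁, hpow] at hfrac₁
    rw [← hi₂] at hfrac₂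
    have hvalue := hV.apply_prod_div_add_one_div hb₂_pos hm_pos
    push_cast at hfrac₁ hfrac₂ hvalue ⊢
    rwa [hfrac₁, hfrac₂]
end

section
/- Let b_1 > b_2 be powers of 2, let m = log_2(b_1/b_2) ≥ 1, and set B = ∏_{k=0}^{m−1} (2^{b_1/2^k} − 1) + ∏_{k=0}^{m−1} (2^{b_1/2^k} + 1), i.e., B = (2^{b_1}−1)(2^{b_1/2}−1)⋯(2^{2b_2}−1) + (2^{b_1}+1)(2^{b_1/2}+1)⋯(2^{2b_2}+1). Then 0 < (2^{b_2}−1)·B < 2^{2b_1} − 1, and the binary expansion of (2^{b_2}−1)·B has exactly b_1/2 digits equal to 1. -/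
/-!
The argument works in any base `q ≥ 2`, with sums of digits in place of the count of ones. Put
`x = q ^ (2 * b₂)`. Read from the last factor to the first, the two products are
`∏ i < m, (x ^ 2 ^ i ∓ 1)`, and both expand into the powers `x ^ i` with `i < 2 ^ m`, the first one
with Thue–Morse signs. So their sum is twice the sum of half of these powers. After multiplication
by `q ^ b₂ - 1`, each surviving power carries the block `2 * (q ^ b₂ - 1) < x`. The blocks do not
overlap, there are `2 ^ (m - 1)` of them, and each has digit sum `(q - 1) * b₂`.
-/

section Digits

variable {q : ℕ}

lemma sum_digits_add_pow_mul_s10 (hq : 1 < q) {k r : ℕ} (hr : r < q ^ k) (n : ℕ) :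
    (q.digits (r + q ^ k * n)).sum = (q.digits r).sum + (q.digits n).sum := by
  rcases n.eq_zero_or_pos with rfl | hn
  · simp
  · obtain ⟨j, rfl⟩ := Nat.exists_eq_add_of_le ((Nat.digits_length_le_iff hq r).mpr hr)
    rw [← Nat.digits_append_zeroes_append_digits hq hn]
    simp

lemma sum_digits_eq_mod_add_sum_digits_div (hq : 1 < q) (n : ℕ) :
    (q.digits n).sum = n % q + (q.digits (n / q)).sum := by
  rcases n.eq_zero_or_pos with rfl | hn
  · simp
  · rw [Nat.digits_def' hq hn, List.sum_cons]

lemma sum_digits_add_sum_digits_of_add_add_one_eq_pow (hq : 1 < q) {k m n : ℕ}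
    (h : m + n + 1 = q ^ k) : (q.digits m).sum + (q.digits n).sum = (q - 1) * k := by
  induction k generalizing m n with
  | zero =>
    obtain ⟨rfl, rfl⟩ : m = 0 ∧ n = 0 := by rw [pow_zero] at h; omega
    simp
  | succ k ih =>
    have hm := Nat.mod_add_div m q
    have hn := Nat.mod_add_div n q
    have hm_lt : m % q < q := Nat.mod_lt m (by omega)
    have hn_lt : n % q < q := Nat.mod_lt n (by omega)
    have hmod : m % q + n % q + 1 = q := by
      have hdvd : q ∣ m % q + n % q + 1 := by
        rw [← Nat.dvd_add_left (Dvd.intro (m / q + n / q) rfl),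
          show m % q + n % q + 1 + q * (m / q + n / q) = q ^ (k + 1) by linarith]
        exact dvd_pow_self q k.succ_ne_zero
      exact Nat.eq_of_dvd_of_lt_two_mul (by omega) hdvd (by omega)
    have hdiv : m / q + n / q + 1 = q ^ k := by
      refine Nat.eq_of_mul_eq_mul_left (show 0 < q by omega) ?_
      rw [← pow_succ']
      linarith
    calc (q.digits m).sum + (q.digits n).sum
        = (m % q + n % q) + ((q.digits (m / q)).sum + (q.digits (n / q)).sum) := by
          rw [sum_digits_eq_mod_add_sum_digits_div hq m,
            sum_digits_eq_mod_add_sum_digits_div hq n]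
          ring
      _ = (q - 1) + (q - 1) * k := by
          rw [ih hdiv, show m % q + n % q = q - 1 by omega]
      _ = (q - 1) * (k + 1) := by ring

lemma sum_digits_pow_sub_one_mul (hq : 1 < q) {k n : ℕ} (hn : 0 < n) (hnk : n ≤ q ^ k) :
    (q.digits ((q ^ k - 1) * n)).sum = (q - 1) * k := by
  have hsplit : (q ^ k - 1) * n = (q ^ k - n) + q ^ k * (n - 1) := by
    obtain ⟨n, rfl⟩ := Nat.exists_eq_add_of_le' hn
    obtain ⟨t, ht⟩ := Nat.exists_eq_add_of_le hnk
    rw [ht, Nat.add_sub_cancel_left, Nat.add_sub_cancel,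
      show n + 1 + t - 1 = n + t by omega]
    ring
  rw [hsplit, sum_digits_add_pow_mul_s10 hq (by omega),
    sum_digits_add_sum_digits_of_add_add_one_eq_pow hq (k := k) (by omega)]

end Digits

lemma count_one_eq_sum_of_forall_lt_two {l : List ℕ} (hl : ∀ d ∈ l, d < 2) :
    l.count 1 = l.sum := by
  induction l with
  | nil => rfl
  | cons d l ih =>
    rw [List.forall_mem_cons] at hl
    rw [List.count_cons, List.sum_cons, ih hl.2]
    obtain rfl | rfl : d = 0 ∨ d = 1 := by omega
    · simp
    · simp [add_comm]

/-- The sum of the products of the `x ^ 2 ^ i - 1` and of the `x ^ 2 ^ i + 1` for `i < n`. It is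
twice the sum of the `x ^ i`, `i < 2 ^ n`, that have sign `+` in the first product. -/
def factorSum (x n : ℕ) : ℕ :=
  ∏ i ∈ Finset.range n, (x ^ 2 ^ i - 1) + ∏ i ∈ Finset.range n, (x ^ 2 ^ i + 1)

/-- The companion of `factorSum` for the terms with sign `-`; the pair satisfies a linear recursion
in `n`. The outer subtraction never truncates, by `prod_sub_one_le_prod_add_one`. -/
def factorDiff (x n : ℕ) : ℕ :=
  ∏ i ∈ Finset.range n, (x ^ 2 ^ i + 1) - ∏ i ∈ Finset.range n, (x ^ 2 ^ i - 1)

section Products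

variable {x : ℕ}

lemma prod_sub_one_le_prod_add_one (x n : ℕ) :
    ∏ i ∈ Finset.range n, (x ^ 2 ^ i - 1) ≤ ∏ i ∈ Finset.range n, (x ^ 2 ^ i + 1) :=
  Finset.prod_le_prod' fun _ _ => by omega

lemma factorSum_pos (x n : ℕ) : 0 < factorSum x n :=
  Nat.add_pos_right _ (Finset.prod_pos fun _ _ => Nat.succ_pos _)

lemma factorSum_succ (hx : 0 < x) (n : ℕ) :
    factorSum x (n + 1) = factorDiff x n + x ^ 2 ^ n * factorSum x n := by
  obtain ⟨d, hd⟩ := Nat.exists_eq_add_of_le (prod_sub_one_le_prod_add_one x n)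
  obtain ⟨y, hy⟩ := Nat.exists_eq_add_of_le' (Nat.pow_pos hx : 0 < x ^ 2 ^ n)
  simp only [factorSum, factorDiff, Finset.prod_range_succ, hd, hy, Nat.add_sub_cancel,
    Nat.add_sub_cancel_left]
  ring

lemma factorDiff_succ (hx : 0 < x) (n : ℕ) :
    factorDiff x (n + 1) = factorSum x n + x ^ 2 ^ n * factorDiff x n := by
  obtain ⟨d, hd⟩ := Nat.exists_eq_add_of_le (prod_sub_one_le_prod_add_one x n)
  obtain ⟨y, hy⟩ := Nat.exists_eq_add_of_le' (Nat.pow_pos hx : 0 < x ^ 2 ^ n)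
  simp only [factorSum, factorDiff, Finset.prod_range_succ, hd, hy, Nat.add_sub_cancel,
    Nat.add_sub_cancel_left]
  refine Nat.sub_eq_of_eq_add ?_
  ring

lemma sub_one_mul_factorSum_add_factorDiff (hx : 0 < x) (n : ℕ) :
    (x - 1) * (factorSum x n + factorDiff x n) = 2 * (x ^ 2 ^ n - 1) := by
  have htelescope : (x - 1) * ∏ i ∈ Finset.range n, (x ^ 2 ^ i + 1) = x ^ 2 ^ n - 1 := by
    zify [hx, Nat.pow_pos hx (n := 2 ^ n)]
    simpa [mul_comm] using (pow_two_pow_sub_pow_two_pow (x := (x : ℤ)) (y := 1) n).symm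
  have hsum : factorSum x n + factorDiff x n = 2 * ∏ i ∈ Finset.range n, (x ^ 2 ^ i + 1) := by
    have := prod_sub_one_le_prod_add_one x n
    unfold factorSum factorDiff
    omega
  rw [hsum, ← htelescope]
  ring

lemma mul_factorSum_add_factorDiff_lt {c : ℕ} (hc : 2 * c < x) (n : ℕ) :
    c * (factorSum x n + factorDiff x n) < x ^ 2 ^ n := by
  have hpow : 0 < x ^ 2 ^ n := Nat.pow_pos (by omega)
  have hle : 2 * c * (factorSum x n + factorDiff x n) ≤ 2 * (x ^ 2 ^ n - 1) := by
    rw [← sub_one_mul_factorSum_add_factorDiff (by omega)]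
    exact Nat.mul_le_mul_right _ (by omega)
  rw [mul_assoc] at hle
  omega

lemma mul_factorSum_lt_pow_sub_one {c : ℕ} (hc : 2 * c < x - 1) (n : ℕ) :
    c * factorSum x n < x ^ 2 ^ n - 1 := by
  have hlt : 2 * c * (factorSum x n + factorDiff x n) < 2 * (x ^ 2 ^ n - 1) := by
    rw [← sub_one_mul_factorSum_add_factorDiff (by omega)]
    exact Nat.mul_lt_mul_of_pos_right hc (Nat.add_pos_left (factorSum_pos x n) _)
  linarith [Nat.zero_le (c * factorDiff x n)]

end Products

section DigitSums

variable {q c d : ℕ}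

lemma sum_digits_mul_factorSum_succ (hq : 1 < q) (hc : 2 * c < q ^ d) (n : ℕ) :
    (q.digits (c * factorSum (q ^ d) (n + 1))).sum =
      (q.digits (c * factorDiff (q ^ d) n)).sum + (q.digits (c * factorSum (q ^ d) n)).sum := by
  have hlt := mul_factorSum_add_factorDiff_lt hc n
  rw [mul_add, ← pow_mul] at hlt
  rw [factorSum_succ (by omega), mul_add, mul_left_comm, ← pow_mul,
    sum_digits_add_pow_mul_s10 hq (by omega)]

lemma sum_digits_mul_factorDiff_succ (hq : 1 < q) (hc : 2 * c < q ^ d) (n : ℕ) :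
    (q.digits (c * factorDiff (q ^ d) (n + 1))).sum =
      (q.digits (c * factorSum (q ^ d) n)).sum + (q.digits (c * factorDiff (q ^ d) n)).sum := by
  have hlt := mul_factorSum_add_factorDiff_lt hc n
  rw [mul_add, ← pow_mul] at hlt
  rw [factorDiff_succ (by omega), mul_add, mul_left_comm, ← pow_mul,
    sum_digits_add_pow_mul_s10 hq (by omega)]

lemma sum_digits_mul_factorSum (hq : 1 < q) (hc : 2 * c < q ^ d) (n : ℕ) :
    (q.digits (c * factorSum (q ^ d) (n + 1))).sum = 2 ^ n * (q.digits (2 * c)).sum := by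
  rw [sum_digits_mul_factorSum_succ hq hc]
  induction n with
  | zero => simp [factorSum, factorDiff, mul_comm]
  | succ n ih =>
    rw [sum_digits_mul_factorSum_succ hq hc, sum_digits_mul_factorDiff_succ hq hc, pow_succ']
    linarith

end DigitSums

lemma prod_range_mul_two_pow_div {M : Type*} [CommMonoid M] (f : ℕ → M) (a m : ℕ) :
    ∏ k ∈ Finset.range m, f (a * 2 ^ m / 2 ^ k) = ∏ i ∈ Finset.range m, f (2 * a * 2 ^ i) := by
  rw [← Finset.prod_range_reflect]
  refine Finset.prod_congr rfl fun i hi => congrArg f ?_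
  obtain ⟨j, rfl⟩ := Nat.exists_eq_add_of_lt (Finset.mem_range.mp hi)
  rw [show i + j + 1 - 1 - i = j by omega]
  exact Nat.div_eq_of_eq_mul_left (by positivity) (by ring)

lemma pow_eq_pow_mul_pow_log_div {p e f : ℕ} (hp : 1 < p) (hef : f ≤ e) :
    p ^ e = p ^ f * p ^ Nat.log p (p ^ e / p ^ f) := by
  rw [Nat.pow_div hef (by omega), Nat.log_pow hp, ← pow_add, Nat.add_sub_cancel' hef]

theorem stmt_10_general {q b₁ b₂ m B : ℕ} (hq : 1 < q) (hb₂ : 0 < b₂) (hb₁ : b₁ = b₂ * 2 ^ m)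
    (hm : 1 ≤ m)
    (hB : B = (∏ k ∈ Finset.range m, (q ^ (b₁ / 2 ^ k) - 1)) +
      ∏ k ∈ Finset.range m, (q ^ (b₁ / 2 ^ k) + 1)) :
    0 < (q ^ b₂ - 1) * B ∧ (q ^ b₂ - 1) * B < q ^ (2 * b₁) - 1 ∧
      (q.digits ((q ^ b₂ - 1) * B)).sum = (q - 1) * (b₁ / 2) := by
  have hB_eq : B = factorSum (q ^ (2 * b₂)) m := by
    rw [hB, hb₁, prod_range_mul_two_pow_div (fun a => q ^ a - 1),
      prod_range_mul_two_pow_div (fun a => q ^ a + 1)]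
    simp only [factorSum, pow_mul]
  have hpow : 1 < q ^ b₂ := Nat.one_lt_pow hb₂.ne' hq
  have hblock : 2 * (q ^ b₂ - 1) < q ^ (2 * b₂) - 1 := by
    rw [mul_comm 2 b₂, pow_mul, ← one_pow 2, Nat.sq_sub_sq, one_pow]
    exact Nat.mul_lt_mul_of_pos_right (by omega) (by omega)
  obtain ⟨n, rfl⟩ := Nat.exists_eq_add_of_le' hm
  refine ⟨?_, ?_, ?_⟩
  · rw [hB_eq]
    exact Nat.mul_pos (by omega) (factorSum_pos _ _)
  · rw [hB_eq, hb₁, ← mul_assoc, pow_mul q (2 * b₂)]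
    exact mul_factorSum_lt_pow_sub_one hblock _
  · have hhalf : b₁ / 2 = b₂ * 2 ^ n := by
      rw [hb₁, pow_succ, ← mul_assoc, Nat.mul_div_cancel _ two_pos]
    rw [hB_eq, sum_digits_mul_factorSum hq (by omega), mul_comm 2,
      sum_digits_pow_sub_one_mul hq two_pos hpow, hhalf]
    ring

/-- Let `b₁ > b₂` be powers of 2, `m = log₂(b₁/b₂) ≥ 1`, and
`B = ∏_{k=0}^{m-1} (2^{b₁/2^k} - 1) + ∏_{k=0}^{m-1} (2^{b₁/2^k} + 1)`. Then
`0 < (2^{b₂}-1) B < 2^{2 b₁} - 1` and the binary expansion of `(2^{b₂}-1) B` has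
exactly `b₁/2` digits equal to `1`. -/
theorem stmt_10 (b₁ b₂ : ℕ) (e₁ e₂ : ℕ) (hb₁ : b₁ = 2 ^ e₁) (hb₂ : b₂ = 2 ^ e₂)
    (hgt : b₂ < b₁) (m : ℕ) (hm : m = Nat.log 2 (b₁ / b₂)) (hm1 : 1 ≤ m)
    (B : ℕ)
    (hB : B = (∏ k ∈ Finset.range m, (2 ^ (b₁ / 2 ^ k) - 1)) +
      ∏ k ∈ Finset.range m, (2 ^ (b₁ / 2 ^ k) + 1)) :
    0 < (2 ^ b₂ - 1) * B ∧ (2 ^ b₂ - 1) * B < 2 ^ (2 * b₁) - 1 ∧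
      (Nat.digits 2 ((2 ^ b₂ - 1) * B)).count 1 = b₁ / 2 := by
  have hb₁' : b₁ = b₂ * 2 ^ m := by
    subst hb₁ hb₂ hm
    exact pow_eq_pow_mul_pow_log_div one_lt_two ((Nat.pow_lt_pow_iff_right one_lt_two).mp hgt).le
  rw [count_one_eq_sum_of_forall_lt_two fun _ => Nat.digits_lt_base one_lt_two]
  simpa using stmt_10_general one_lt_two (hb₂ ▸ Nat.two_pow_pos e₂) hb₁' hm1 hB
end

section
/- Let t ≥ 3 and let a_1 > a_2 > ⋯ > a_t be positive integers such that the numbers 2^{a_1}+1, …, 2^{a_t}+1 are pairwise coprime. Then there exists a rational number x with odd denominator such that V(2; a_1, …, a_t; x) < −1/2. -/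
/-- `Vmulti V r x = V(2; r₁, …, r_t; x) = ∑_{S ⊆ {1,…,t}} (-1)^{t - |S|} V((∏_{j ∈ S} (2^{r_j}+1)) x)`. -/
def Vmulti (V : ℚ → ℚ) {t : ℕ} (r : Fin t → ℕ) (x : ℚ) : ℚ :=
  ∑ S : Finset (Fin t), (-1 : ℚ) ^ (t - S.card) * V ((∏ j ∈ S, ((2 : ℚ) ^ (r j) + 1)) * x)

/-!
Shifted by `1 / 2`, Kubert's function is an average of sawtooth functions `Int.fract x - 1 / 2`
along the orbit of doubling, so it is odd away from the integers and satisfies the distribution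
relations `∑ b < N, f (x + b / N) = f (N * x)`. Call `x` generic if its denominator divides
`∏ n j` and has a common factor with every `n j = 2 ^ a j + 1`. The terms of the alternating sum at
generic points `x` and `-x` cancel except the one for the full product, so the two values are
symmetric about `-1 / 2`, and it suffices to find a generic point where the value is not `-1 / 2`.

For two indices there is one with value `-3 / 4`, namely the inverse of
`(2 ^ d + 1) * (2 ^ a j + 1)`, where `d = gcd (a i) (a j)`, `a i / d` is odd and `a j / d` is even.
If the value were `-1 / 2` at every generic point after adding an index `m`, then, by the
distribution relation for `N = n m`, the deviation `F` from `-1 / 2` before adding it would satisfy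
`F x = -(n m - 2) * F (n m * x)`. Since `x ↦ n m * x` has finite orbits modulo `1`, this forces
`F = 0` as soon as `n m > 3`, which holds for all but at most one index.
-/

open Finset

theorem den_natCast_mul (N : ℕ) (x : ℚ) : ((N : ℚ) * x).den = x.den / N.gcd x.den := by
  rw [Rat.mul_den, Rat.num_natCast, Rat.den_natCast, one_mul, Int.natAbs_mul, Int.natAbs_natCast,
    x.reduced.gcd_mul_right_cancel]

theorem den_natCast_mul_dvd_iff {N M : ℕ} {x : ℚ} :
    ((N : ℚ) * x).den ∣ M ↔ x.den ∣ N * M := by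
  rw [den_natCast_mul, Nat.div_dvd_iff_dvd_mul (N.gcd_dvd_right _)
    (N.gcd_pos_of_pos_right x.den_pos), Nat.gcd_comm, Nat.dvd_gcd_mul_iff_dvd_mul]

theorem den_natCast_mul_of_coprime {N : ℕ} {x : ℚ} (h : N.Coprime x.den) :
    ((N : ℚ) * x).den = x.den := by
  rw [den_natCast_mul, h.gcd_eq_one, Nat.div_one]

theorem den_natCast_div_natCast_dvd (b N : ℕ) : ((b : ℚ) / N).den ∣ N := by
  simpa only [Rat.divInt_eq_div, Int.cast_natCast, Int.natCast_dvd_natCast] using Rat.den_dvd b N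

theorem den_add_of_coprime {x y : ℚ} (h : x.den.Coprime y.den) :
    (x + y).den = x.den * y.den := by
  have hx : x.den ∣ (x + y).den := h.dvd_of_dvd_mul_right <| by
    simpa only [add_sub_cancel_right] using Rat.sub_den_dvd (x + y) y
  have hy : y.den ∣ (x + y).den := h.symm.dvd_of_dvd_mul_right <| by
    simpa only [add_sub_cancel_left] using Rat.sub_den_dvd (x + y) x
  exact (Rat.add_den_dvd x y).antisymm (h.mul_dvd_of_dvd_of_dvd hx hy)

theorem exists_eq_intCast_add_natCast_div {x : ℚ} {M : ℕ} (hM : 0 < M) (hx : x.den ∣ M) :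
    ∃ z : ℤ, ∃ a < M, x = z + (a : ℚ) / M := by
  obtain ⟨c, hc⟩ := hx
  have hM' : (0 : ℤ) < M := by exact_mod_cast hM
  obtain ⟨a, ha⟩ := Int.eq_ofNat_of_zero_le ((x.num * c).emod_nonneg hM'.ne')
  refine ⟨x.num * c / M, a, ?_, ?_⟩
  · have := (x.num * c).emod_lt_of_pos hM'
    omega
  · have hdivmod : (M : ℚ) * (x.num * c / M : ℤ) + a = x.num * c := by
      exact_mod_cast ha ▸ (x.num * c).mul_ediv_add_emod M
    have hnum : x * x.den = x.num := x.mul_den_eq_num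
    have hMc : (M : ℚ) = x.den * c := by exact_mod_cast hc
    field_simp
    linear_combination x * hMc + c * hnum - hdivmod

theorem exists_dvd_two_pow_sub_one {d : ℕ} (hd : Odd d) : ∃ k, 0 < k ∧ d ∣ 2 ^ k - 1 :=
  ⟨d.totient, Nat.totient_pos.2 hd.pos, (Nat.modEq_iff_dvd' Nat.one_le_two_pow).1
    (Nat.ModEq.pow_totient hd.coprime_two_left).symm⟩

theorem two_pow_add_one_dvd_two_pow_sub_one {a k : ℕ} (h : 2 * a ∣ k) :
    2 ^ a + 1 ∣ 2 ^ k - 1 := by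
  have hsq : 2 ^ (2 * a) - 1 = (2 ^ a + 1) * (2 ^ a - 1) := by
    rw [mul_comm, pow_mul]
    exact Nat.sq_sub_sq (2 ^ a) 1
  exact (Dvd.intro _ hsq.symm).trans (by simpa using Nat.pow_sub_pow_dvd_pow_sub_pow 2 1 h)

theorem exists_two_pow_add_one_dvd {A B : ℕ} (hA : A ≠ 0)
    (h : (2 ^ A + 1).Coprime (2 ^ B + 1)) :
    ∃ d, 0 < d ∧ (2 ^ d + 1 ∣ 2 ^ A + 1 ∧ 2 ^ d + 1 ∣ 2 ^ B - 1 ∨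
      2 ^ d + 1 ∣ 2 ^ B + 1 ∧ 2 ^ d + 1 ∣ 2 ^ A - 1) := by
  obtain ⟨d, u, v, hd, huv, rfl, rfl⟩ := Nat.exists_coprime' (Nat.gcd_pos_of_pos_left B hA.bot_lt)
  have hodd : ∀ {w}, Odd w → 2 ^ d + 1 ∣ 2 ^ (w * d) + 1 := fun hw => by
    simpa only [pow_mul', one_pow] using hw.nat_add_dvd_pow_add_pow (2 ^ d) 1
  have heven : ∀ {w}, Even w → 2 ^ d + 1 ∣ 2 ^ (w * d) - 1 := fun hw =>
    two_pow_add_one_dvd_two_pow_sub_one (mul_dvd_mul_right hw.two_dvd d)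
  rcases u.even_or_odd with hu | hu <;> rcases v.even_or_odd with hv | hv
  · exact absurd huv (Nat.not_coprime_of_dvd_of_dvd one_lt_two hu.two_dvd hv.two_dvd)
  · exact ⟨d, hd, .inr ⟨hodd hv, heven hu⟩⟩
  · exact ⟨d, hd, .inl ⟨hodd hu, heven hv⟩⟩
  · exact absurd h (Nat.not_coprime_of_dvd_of_dvd (by simp) (hodd hu) (hodd hv))

theorem sum_range_mul_of_periodic {M : Type*} [AddCommMonoid M] {f : ℕ → M} {n c : ℕ}
    (hf : Function.Periodic f n) (hc : c.Coprime n) :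
    ∑ b ∈ range n, f (c * b) = ∑ b ∈ range n, f b := by
  rcases n.eq_zero_or_pos with rfl | hn
  · simp
  have hmaps : Set.MapsTo (fun b => c * b % n) (range n) (range n) :=
    fun b _ => by simpa using Nat.mod_lt _ hn
  have hinj : Set.InjOn (fun b => c * b % n) (range n) := by
    intro b hb b' hb' h
    exact (Nat.ModEq.cancel_left_of_coprime hc.symm h).eq_of_lt_of_lt (by simpa using hb)
      (by simpa using hb')
  refine sum_nbij (fun b => c * b % n) hmaps hinj
    (surjOn_of_injOn_of_card_le _ hmaps hinj le_rfl) fun b _ => (hf.map_mod_nat _).symm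

theorem sum_range_div_two_pow_add_sum_digits {k a : ℕ} (hk : k ≠ 0) (ha : a < 2 ^ k) :
    ∑ j ∈ range k, a / 2 ^ (j + 1) + (Nat.digits 2 a).sum = a := by
  have hlog : ∑ j ∈ range k, a / 2 ^ (j + 1) = ∑ j ∈ range (Nat.log 2 a).succ, a / 2 ^ (j + 1) :=
    eventually_constant_sum
      (fun j hj => Nat.div_eq_of_lt <| Nat.lt_pow_of_log_lt one_lt_two (by omega))
      (Nat.succ_le_of_lt (Nat.log_lt_of_lt_pow' hk ha))
  have hlegendre : ∑ j ∈ range (Nat.log 2 a).succ, a / 2 ^ (j + 1) = a - (Nat.digits 2 a).sum := by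
    simpa using Nat.sub_one_mul_sum_log_div_pow_eq_sub_sum_digits (p := 2) a
  rw [hlog, hlegendre, Nat.sub_add_cancel (Nat.digit_sum_le 2 a)]

theorem two_pow_mul_div_two_pow_sub_one {k a i : ℕ} (ha : a < 2 ^ k - 1) (hi : i ≤ k) :
    2 ^ i * a / (2 ^ k - 1) = a / 2 ^ (k - i) := by
  obtain ⟨N, hN⟩ := Nat.exists_eq_add_one.2 (Nat.two_pow_pos k)
  rw [hN, Nat.add_sub_cancel] at ha ⊢
  have hpow : 2 ^ i * 2 ^ (k - i) = N + 1 := by rw [← pow_add, Nat.add_sub_of_le hi, hN]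
  have hdiv := Nat.div_add_mod a (2 ^ (k - i))
  set q := a / 2 ^ (k - i)
  set r := a % 2 ^ (k - i)
  have hr : r < 2 ^ (k - i) := Nat.mod_lt _ (Nat.two_pow_pos _)
  -- Multiplication by `2 ^ i` rotates the `k` binary digits of `a`: the leading ones, which form
  -- `q`, move to the end.
  have hrot : 2 ^ i * a = 2 ^ i * r + q + N * q := by
    rw [← hdiv, mul_add, ← mul_assoc, hpow]
    ring
  have hrem : 2 ^ i * r + q < N := by
    refine lt_of_mul_lt_mul_left' (a := 2 ^ (k - i)) ?_
    calc 2 ^ (k - i) * (2 ^ i * r + q) = r * N + a := by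
          linear_combination r * hpow + hdiv
      _ < r * N + N := by gcongr
      _ = (r + 1) * N := by ring
      _ ≤ 2 ^ (k - i) * N := by gcongr; exact hr
  rw [hrot, Nat.add_mul_div_left _ _ (by omega), Nat.div_eq_of_lt hrem, zero_add]

theorem sum_two_pow_mul_mod {k a : ℕ} (hk : k ≠ 0) (ha : a < 2 ^ k - 1) :
    ∑ i ∈ range k, 2 ^ i * a % (2 ^ k - 1) = (2 ^ k - 1) * (Nat.digits 2 a).sum := by
  have hquot : ∑ i ∈ range k, 2 ^ i * a / (2 ^ k - 1) + (Nat.digits 2 a).sum = a := by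
    rw [← sum_range_reflect]
    convert sum_range_div_two_pow_add_sum_digits hk (ha.trans_le (Nat.sub_le _ _)) using 2
    refine sum_congr rfl fun i hi => ?_
    rw [mem_range] at hi
    rw [two_pow_mul_div_two_pow_sub_one ha (by omega)]
    congr 2
    omega
  have hsum : ∑ i ∈ range k, 2 ^ i * a = (2 ^ k - 1) * a := by
    rw [← sum_mul, Nat.geomSum_eq le_rfl, Nat.div_one]
  have hsplit : (2 ^ k - 1) * ∑ i ∈ range k, 2 ^ i * a / (2 ^ k - 1)
      + ∑ i ∈ range k, 2 ^ i * a % (2 ^ k - 1) = (2 ^ k - 1) * a := by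
    rw [mul_sum, ← sum_add_distrib, ← hsum]
    exact sum_congr rfl fun i _ => Nat.div_add_mod _ _
  conv_rhs at hsplit => rw [← hquot]
  linarith

/-- An odd ordinary distribution in Kubert's sense on the rational numbers with odd denominator:
`f` is `1`-periodic, odd away from the integers, and its sums over the translates by `b / N` are
`f (N * x)`. The value at integers is not required to vanish, and nothing is said about rational
numbers with even denominator. -/
structure IsOddDistribution (f : ℚ → ℚ) : Prop where
  map_add_one {x : ℚ} : Odd x.den → f (x + 1) = f x
  map_neg {x : ℚ} : Odd x.den → x.den ≠ 1 → f (-x) = -f x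
  sum_map_add_div {x : ℚ} {N : ℕ} : Odd x.den → Odd N →
    ∑ b ∈ range N, f (x + (b : ℚ) / N) = f (N * x)

theorem odd_den_add {x y : ℚ} (hx : Odd x.den) (hy : Odd y.den) : Odd (x + y).den :=
  (hx.mul hy).of_dvd_nat (Rat.add_den_dvd x y)

theorem odd_den_natCast_mul (N : ℕ) {x : ℚ} (hx : Odd x.den) : Odd ((N : ℚ) * x).den :=
  hx.of_dvd_nat (den_natCast_mul_dvd_iff.2 (dvd_mul_left _ _))

theorem odd_den_natCast_div_natCast (b : ℕ) {N : ℕ} (hN : Odd N) : Odd ((b : ℚ) / N).den :=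
  hN.of_dvd_nat (den_natCast_div_natCast_dvd b N)

namespace IsOddDistribution

variable {f : ℚ → ℚ}

theorem map_add_intCast (hf : IsOddDistribution f) {x : ℚ} (hx : Odd x.den) (z : ℤ) :
    f (x + z) = f x := by
  induction z using Int.induction_on with
  | zero => simp
  | succ i ih =>
    rw [← ih, Int.cast_add, Int.cast_one, ← add_assoc,
      hf.map_add_one (by rwa [Rat.add_intCast_den])]
  | pred i ih =>
    rw [← ih, ← hf.map_add_one (by rwa [Rat.add_intCast_den])]
    congr 1
    push_cast
    ring

theorem map_eq_of_den_sub_eq_one (hf : IsOddDistribution f) {x y : ℚ} (hy : Odd y.den)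
    (hxy : (x - y).den = 1) : f x = f y := by
  rw [← hf.map_add_intCast hy (x - y).num, Rat.coe_int_num_of_den_eq_one hxy, add_sub_cancel]

theorem map_eq_neg_of_den_add_eq_one (hf : IsOddDistribution f) {x y : ℚ} (hy : Odd y.den)
    (hy1 : y.den ≠ 1) (hxy : (x + y).den = 1) : f x = -f y := by
  rw [← hf.map_neg hy hy1]
  exact hf.map_eq_of_den_sub_eq_one (by rwa [Rat.neg_den]) (by rwa [sub_neg_eq_add])

theorem map_eq_map_zero (hf : IsOddDistribution f) {x : ℚ} (hx : x.den = 1) : f x = f 0 :=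
  hf.map_eq_of_den_sub_eq_one odd_one (by rwa [sub_zero])

theorem sum_map_mul_add_div (hf : IsOddDistribution f) {x : ℚ} {N c : ℕ} (hx : Odd x.den)
    (hN : Odd N) (hc : c.Coprime N) :
    ∑ b ∈ range N, f (c * (x + (b : ℚ) / N)) = f (N * (c * x)) := by
  have hcx := odd_den_natCast_mul c hx
  have hper : Function.Periodic (fun b : ℕ => f (c * x + (b : ℚ) / N)) N := by
    intro b
    have hN0 : (N : ℚ) ≠ 0 := by exact_mod_cast hN.pos.ne'
    simp only [Nat.cast_add, add_div, div_self hN0, ← add_assoc]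
    exact hf.map_add_one (odd_den_add hcx (odd_den_natCast_div_natCast b hN))
  rw [← hf.sum_map_add_div hcx hN, ← sum_range_mul_of_periodic hper hc]
  refine sum_congr rfl fun b _ => ?_
  push_cast
  ring_nf

end IsOddDistribution

/-- The sawtooth function (first Bernoulli polynomial of the fractional part), with value `-1 / 2`
rather than `0` at the integers. -/
def sawtooth (x : ℚ) : ℚ := Int.fract x - 1 / 2

theorem sawtooth_periodic : Function.Periodic sawtooth 1 := fun x => by
  rw [sawtooth, Int.fract_add_one, sawtooth]

theorem sawtooth_neg {x : ℚ} (hx : x.den ≠ 1) : sawtooth (-x) = -sawtooth x := by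
  have hfract : Int.fract x ≠ 0 := by
    rintro h
    obtain ⟨z, rfl⟩ := Int.fract_eq_zero_iff.1 h
    exact hx (Rat.den_intCast z)
  rw [sawtooth, sawtooth, Int.fract_neg hfract]
  ring

theorem sum_sawtooth_add_div {N : ℕ} (hN : N ≠ 0) (x : ℚ) :
    ∑ b ∈ range N, sawtooth (x + (b : ℚ) / N) = sawtooth (N * x) := by
  have hN0 : (N : ℚ) ≠ 0 := by exact_mod_cast hN
  have hNpos : (0 : ℚ) < N := by exact_mod_cast hN.bot_lt
  have hper : Function.Periodic
      (fun x => ∑ b ∈ range N, sawtooth (x + (b : ℚ) / N) - sawtooth (N * x)) (1 / (N : ℚ)) := by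
    intro x
    have hshift : ∀ b : ℕ, x + 1 / (N : ℚ) + b / N = x + (b + 1 : ℕ) / N := fun b => by
      push_cast
      ring
    have hwrap := sum_range_succ' (fun b : ℕ => sawtooth (x + (b : ℚ) / N)) N
    rw [sum_range_succ, div_self hN0, sawtooth_periodic, Nat.cast_zero, zero_div, add_zero,
      add_left_inj] at hwrap
    simp only [hshift]
    rw [← hwrap, mul_add, mul_one_div_cancel hN0, sawtooth_periodic]
  obtain ⟨y, ⟨hy0, hyN⟩, hxy⟩ := hper.exists_mem_Ico₀ (by positivity) x
  have hNy : N * y < 1 := by rwa [lt_div_iff₀' hNpos] at hyN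
  have hsmall : ∀ b ∈ range N, sawtooth (y + (b : ℚ) / N) = (y - 1 / 2) + b / N := fun b hb => by
    have hb' : (b : ℚ) + 1 ≤ N := by exact_mod_cast mem_range.1 hb
    rw [sawtooth, Int.fract_eq_self.2 ⟨by positivity, ?_⟩]
    · ring
    · rw [lt_div_iff₀' hNpos] at hyN
      field_simp
      linarith
  have hgauss : (∑ b ∈ range N, (b : ℚ)) = N * (N - 1) / 2 := by
    rw [eq_div_iff two_ne_zero, ← Nat.cast_pred hN.bot_lt, ← Nat.cast_sum]
    exact_mod_cast sum_range_id_mul_two N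
  rw [← sub_eq_zero, hxy, sum_congr rfl hsmall, sum_add_distrib, sum_const, card_range, ← sum_div,
    hgauss, sawtooth, Int.fract_eq_self.2 ⟨by positivity, hNy⟩]
  rw [nsmul_eq_mul]
  field_simp
  ring

theorem isOddDistribution_sawtooth : IsOddDistribution sawtooth where
  map_add_one _ := sawtooth_periodic _
  map_neg _ := sawtooth_neg
  sum_map_add_div _ hN := sum_sawtooth_add_div hN.pos.ne' _

namespace IsV2

variable {V : ℚ → ℚ}

theorem mul_sub_half_eq_sum_sawtooth (hV : IsV2 V) {x : ℚ} {k : ℕ} (hk : 0 < k)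
    (hx : x.den ∣ 2 ^ k - 1) :
    k * (V x - 1 / 2) = ∑ i ∈ range k, sawtooth ((2 ^ i : ℕ) * x) := by
  have hM : 0 < 2 ^ k - 1 := Nat.sub_pos_of_lt (Nat.one_lt_two_pow hk.ne')
  obtain ⟨z, a, ha, rfl⟩ := exists_eq_intCast_add_natCast_div hM hx
  have hVx : V (z + (a : ℚ) / (2 ^ k - 1 : ℕ)) = ((Nat.digits 2 a).sum : ℚ) / k :=
    hV _ k a hk ha ⟨z, by push_cast [Nat.one_le_two_pow]; ring⟩
  have hfract : ∀ i, Int.fract ((2 ^ i : ℕ) * (z + (a : ℚ) / (2 ^ k - 1 : ℕ)))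
      = (2 ^ i * a % (2 ^ k - 1) : ℕ) / (2 ^ k - 1 : ℕ) := fun i => by
    rw [← Int.fract_div_natCast_eq_div_natCast_mod, mul_add, ← Int.cast_natCast (2 ^ i),
      ← Int.cast_mul, Int.fract_intCast_add, Nat.cast_mul, mul_div_assoc, Int.cast_natCast]
  simp only [sawtooth, hfract]
  rw [sum_sub_distrib, ← sum_div, ← Nat.cast_sum, sum_two_pow_mul_mod hk.ne' ha, hVx, Nat.cast_mul,
    mul_div_cancel_left₀ _ (by exact_mod_cast hM.ne'), sum_const, card_range, nsmul_eq_mul,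
    mul_sub, mul_div_cancel₀ _ (by exact_mod_cast hk.ne')]

theorem map_eq_zero (hV : IsV2 V) {x : ℚ} (hx : x.den = 1) : V x = 0 := by
  simpa using hV x 1 0 one_pos (by norm_num)
    ⟨x.num, by simpa using (Rat.coe_int_num_of_den_eq_one hx).symm⟩

theorem isOddDistribution_sub_half (hV : IsV2 V) : IsOddDistribution fun x => V x - 1 / 2 where
  map_add_one {x} hx := by
    obtain ⟨k, hk, hdvd⟩ := exists_dvd_two_pow_sub_one hx
    have hk0 : (k : ℚ) ≠ 0 := by exact_mod_cast hk.ne'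
    refine mul_left_cancel₀ hk0 ?_
    rw [hV.mul_sub_half_eq_sum_sawtooth hk hdvd, hV.mul_sub_half_eq_sum_sawtooth hk
      (by simpa using hdvd)]
    refine sum_congr rfl fun i _ => ?_
    rw [mul_add, sawtooth_periodic.nat_mul (2 ^ i)]
  map_neg {x} hx hx1 := by
    obtain ⟨k, hk, hdvd⟩ := exists_dvd_two_pow_sub_one hx
    have hk0 : (k : ℚ) ≠ 0 := by exact_mod_cast hk.ne'
    refine mul_left_cancel₀ hk0 ?_
    rw [mul_neg, hV.mul_sub_half_eq_sum_sawtooth hk hdvd, hV.mul_sub_half_eq_sum_sawtooth hk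
      (by simpa using hdvd), ← sum_neg_distrib]
    refine sum_congr rfl fun i _ => ?_
    rw [mul_neg, sawtooth_neg]
    rwa [den_natCast_mul_of_coprime (hx.coprime_two_left.pow_left i)]
  sum_map_add_div {x N} hx hN := by
    obtain ⟨k, hk, hdvd⟩ := exists_dvd_two_pow_sub_one (hx.mul hN)
    have hk0 : (k : ℚ) ≠ 0 := by exact_mod_cast hk.ne'
    have hshift : ∀ b : ℕ, (x + (b : ℚ) / N).den ∣ 2 ^ k - 1 := fun b =>
      ((Rat.add_den_dvd _ _).trans
        (mul_dvd_mul_left _ (den_natCast_div_natCast_dvd b N))).trans hdvd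
    have hNx : ((N : ℚ) * x).den ∣ 2 ^ k - 1 :=
      den_natCast_mul_dvd_iff.2 (((dvd_mul_right _ _).trans hdvd).mul_left N)
    refine mul_left_cancel₀ hk0 ?_
    rw [mul_sum, hV.mul_sub_half_eq_sum_sawtooth hk hNx]
    simp only [hV.mul_sub_half_eq_sum_sawtooth hk (hshift _)]
    rw [sum_comm]
    refine sum_congr rfl fun i _ => ?_
    rw [isOddDistribution_sawtooth.sum_map_mul_add_div hx hN (hN.coprime_two_left.pow_left i),
      mul_left_comm]

theorem map_eq_half (hV : IsV2 V) {x : ℚ} {a : ℕ} (ha : 0 < a) (hx : x.den ∣ 2 ^ a + 1)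
    (hx1 : x.den ≠ 1) : V x = 1 / 2 := by
  have hodd : Odd x.den := (Even.add_one (even_two.pow_of_ne_zero ha.ne')).of_dvd_nat hx
  have hdvd : x.den ∣ 2 ^ (a + a) - 1 :=
    hx.trans (two_pow_add_one_dvd_two_pow_sub_one (two_mul a).dvd)
  have hanti : ∀ i, sawtooth ((2 ^ (a + i) : ℕ) * x) = -sawtooth ((2 ^ i : ℕ) * x) := fun i => by
    have hden := den_natCast_mul_of_coprime (hodd.coprime_two_left.pow_left i)
    refine isOddDistribution_sawtooth.map_eq_neg_of_den_add_eq_one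
      (by rwa [hden]) (by rwa [hden]) ?_
    rw [← add_mul, ← Nat.cast_add, ← Nat.dvd_one, den_natCast_mul_dvd_iff, mul_one, pow_add,
      ← Nat.add_one_mul]
    exact hx.mul_right _
  have hzero := hV.mul_sub_half_eq_sum_sawtooth (Nat.add_pos_left ha a) hdvd
  rw [sum_range_add] at hzero
  simp only [hanti, sum_neg_distrib, add_neg_cancel] at hzero
  have ha2 : ((a + a : ℕ) : ℚ) ≠ 0 := by positivity
  linarith [(mul_eq_zero.1 hzero).resolve_left ha2]

theorem map_div_two_pow_two_mul_sub_one (hV : IsV2 V) {k a : ℕ} (hk : 0 < k) (ha : a < 2 ^ k - 1) :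
    V (a / (2 ^ (2 * k) - 1)) = V (a / (2 ^ k - 1)) / 2 := by
  have hlt : 2 ^ k ≤ 2 ^ (2 * k) := Nat.pow_le_pow_right two_pos (by omega)
  rw [hV _ (2 * k) a (by omega) (by omega) ⟨0, by simp⟩, hV _ k a hk ha ⟨0, by simp⟩]
  push_cast
  field_simp

theorem map_inv_mul_eq_quarter (hV : IsV2 V) {d k : ℕ} (hd : 0 < d) (hk : 0 < k)
    (hdk : 2 ^ d + 1 ∣ 2 ^ k - 1) : V (((2 ^ d + 1) * (2 ^ k + 1) : ℕ) : ℚ)⁻¹ = 1 / 4 := by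
  obtain ⟨a, ha⟩ := hdk
  have hk1 : 1 < 2 ^ k := Nat.one_lt_two_pow hk.ne'
  have ha0 : 0 < a := Nat.pos_of_ne_zero fun h => by
    rw [h, mul_zero] at ha
    omega
  have hlt : a < 2 ^ k - 1 := ha ▸ lt_mul_of_one_lt_left ha0 (by simp)
  have hfactor : (2 : ℚ) ^ k - 1 = (2 ^ d + 1) * a := by
    have := congrArg (Nat.cast : ℕ → ℚ) ha
    rw [Nat.cast_pred (by omega)] at this
    exact_mod_cast this
  have hquot : (a : ℚ) / (2 ^ k - 1) = ((2 ^ d + 1 : ℕ) : ℚ)⁻¹ := by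
    rw [hfactor]
    push_cast
    field_simp
  have hquot' : (a : ℚ) / (2 ^ (2 * k) - 1) = (((2 ^ d + 1) * (2 ^ k + 1) : ℕ) : ℚ)⁻¹ := by
    have hfactor' : (2 : ℚ) ^ (2 * k) - 1 = (2 ^ d + 1) * a * (2 ^ k + 1) := by
      rw [← hfactor]
      ring
    rw [hfactor']
    push_cast
    field_simp
  have hhalf : V ((2 ^ d + 1 : ℕ) : ℚ)⁻¹ = 1 / 2 := by
    refine hV.map_eq_half hd ?_ ?_ <;> rw [Rat.inv_natCast_den_of_pos (by positivity)]
    simp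
  rw [← hquot', hV.map_div_two_pow_two_mul_sub_one hk hlt, hquot, hhalf]
  norm_num

end IsV2

/-- The iterated difference at `x` of `f` along the multiplications by `n j`, `j ∈ s`: the
composition of the operators `f ↦ (x ↦ f (n j * x) - f x)`, written out as an alternating sum. -/
def iterDiff {ι : Type*} [DecidableEq ι] (f : ℚ → ℚ) (n : ι → ℕ) (s : Finset ι) (x : ℚ) : ℚ :=
  ∑ S ∈ s.powerset, (-1) ^ #(s \ S) * f ((∏ j ∈ S, n j : ℕ) * x)

/-- `x` is generic for `n` on `s` if its denominator divides `∏ j ∈ s, n j` and has a common factor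
with each `n j`. For pairwise coprime `n j` this says that `(∏ j ∈ S, n j) * x`, `S ⊆ s`, is an
integer exactly when `S = s`. -/
def IsGeneric {ι : Type*} (n : ι → ℕ) (s : Finset ι) (x : ℚ) : Prop :=
  x.den ∣ ∏ j ∈ s, n j ∧ ∀ i ∈ s, ¬ x.den.Coprime (n i)

section IterDiff

variable {ι : Type*} [DecidableEq ι] {f : ℚ → ℚ} {n : ι → ℕ} {s : Finset ι} {x y : ℚ}

theorem iterDiff_empty : iterDiff f n ∅ x = f x := by
  simp [iterDiff]

theorem iterDiff_insert {m : ι} (hm : m ∉ s) :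
    iterDiff f n (insert m s) x = iterDiff f n s (n m * x) - iterDiff f n s x := by
  rw [iterDiff, sum_powerset_insert hm, sub_eq_neg_add, iterDiff, iterDiff, ← sum_neg_distrib]
  congr 1 <;> refine sum_congr rfl fun S hS => ?_
  · have hmS : m ∉ S := fun h => hm (mem_powerset.1 hS h)
    rw [insert_sdiff_of_notMem _ hmS, card_insert_of_notMem (by simp [hm]), pow_succ]
    ring
  · have hmS : m ∉ S := fun h => hm (mem_powerset.1 hS h)
    rw [insert_sdiff_insert, sdiff_insert_of_notMem hm, prod_insert hmS, Nat.cast_mul,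
      mul_left_comm, mul_assoc]

theorem iterDiff_sub_const (hs : s.Nonempty) (c : ℚ) :
    iterDiff (fun x => f x - c) n s x = iterDiff f n s x := by
  induction hs using Finset.Nonempty.cons_induction generalizing x with
  | singleton m =>
    simp only [← insert_empty_eq m, iterDiff_insert (notMem_empty m), iterDiff_empty,
      sub_sub_sub_cancel_right]
  | cons m s hm _ ih => rw [cons_eq_insert, iterDiff_insert hm, iterDiff_insert hm, ih, ih]

theorem Vmulti_eq_iterDiff (V : ℚ → ℚ) {t : ℕ} (a : Fin t → ℕ) (x : ℚ) :
    Vmulti V a x = iterDiff V (fun j => 2 ^ a j + 1) univ x := by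
  rw [Vmulti, iterDiff, powerset_univ]
  refine sum_congr rfl fun S _ => ?_
  rw [← compl_eq_univ_sdiff, card_compl, Fintype.card_fin]
  push_cast
  rfl

namespace IsOddDistribution

theorem iterDiff_eq_of_den_sub_eq_one (hf : IsOddDistribution f) (hy : Odd y.den)
    (hxy : (x - y).den = 1) : iterDiff f n s x = iterDiff f n s y := by
  refine sum_congr rfl fun S _ => ?_
  rw [hf.map_eq_of_den_sub_eq_one (odd_den_natCast_mul _ hy)]
  rw [← mul_sub, ← Nat.dvd_one, den_natCast_mul_dvd_iff, hxy]
  exact one_dvd _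

theorem sum_iterDiff_add_div (hf : IsOddDistribution f) {N : ℕ} (hx : Odd x.den) (hN : Odd N)
    (hcop : ∀ j ∈ s, (n j).Coprime N) :
    ∑ b ∈ range N, iterDiff f n s (x + (b : ℚ) / N) = iterDiff f n s (N * x) := by
  simp only [iterDiff]
  rw [sum_comm]
  refine sum_congr rfl fun S hS => ?_
  rw [← mul_sum, hf.sum_map_mul_add_div hx hN
    (Nat.Coprime.prod_left fun j hj => hcop j (mem_powerset.1 hS hj)), mul_left_comm]

end IsOddDistribution

end IterDiff

namespace IsGeneric

variable {ι : Type*} {n : ι → ℕ} {s : Finset ι} {x : ℚ}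

theorem of_den_eq {y : ℚ} (hx : IsGeneric n s x) (hyx : y.den = x.den) : IsGeneric n s y := by
  rwa [IsGeneric, hyx]

theorem odd_den (hx : IsGeneric n s x) (hodd : ∀ i, Odd (n i)) : Odd x.den :=
  (prod_induction n Odd (fun _ _ => Odd.mul) odd_one fun i _ => hodd i).of_dvd_nat hx.1

theorem neg (hx : IsGeneric n s x) : IsGeneric n s (-x) :=
  hx.of_den_eq (Rat.neg_den x)

theorem coprime_den {m : ι} (hx : IsGeneric n s x) (hn : Pairwise (Nat.Coprime.onFun n))
    (hm : m ∉ s) : (n m).Coprime x.den :=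
  (Nat.Coprime.prod_right fun _ hj => hn (ne_of_mem_of_not_mem hj hm).symm).coprime_dvd_right hx.1

theorem add_natCast_div [DecidableEq ι] {m : ι} {b : ℕ} (hx : IsGeneric n s x)
    (hn : Pairwise (Nat.Coprime.onFun n)) (hm : m ∉ s) (hb : 0 < b) (hbm : b < n m) :
    IsGeneric n (insert m s) (x + (b : ℚ) / n m) := by
  have hden := den_natCast_div_natCast_dvd b (n m)
  have hden1 : ((b : ℚ) / n m).den ≠ 1 := fun h => by
    have hdvd := (Rat.den_div_natCast_eq_one_iff b (n m) (by omega)).1 h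
    exact hbm.not_ge (Nat.le_of_dvd hb hdvd)
  have hcop : x.den.Coprime ((b : ℚ) / n m).den :=
    ((hx.coprime_den hn hm).coprime_dvd_left hden).symm
  rw [IsGeneric, den_add_of_coprime hcop, prod_insert hm, mul_comm]
  refine ⟨mul_dvd_mul hden hx.1, fun i hi h => ?_⟩
  rcases mem_insert.1 hi with rfl | hi
  · exact hden1 (Nat.Coprime.eq_one_of_dvd h.coprime_mul_right hden)
  · exact hx.2 i hi h.coprime_mul_left

theorem den_prod_mul_ne_one {S : Finset ι} (hx : IsGeneric n s x)
    (hn : Pairwise (Nat.Coprime.onFun n)) (hS : S ⊂ s) :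
    (((∏ j ∈ S, n j : ℕ) : ℚ) * x).den ≠ 1 := by
  obtain ⟨i, his, hiS⟩ := exists_of_ssubset hS
  rw [ne_eq, ← Nat.dvd_one, den_natCast_mul_dvd_iff, mul_one]
  intro hdvd
  exact hx.2 i his <| (Nat.Coprime.prod_left fun j hj =>
    hn (ne_of_mem_of_not_mem hj hiS)).coprime_dvd_left hdvd

end IsGeneric

theorem eq_zero_of_eq_mul_natCast_mul {F : ℚ → ℚ} {r : ℚ} {d N : ℕ} (hr : 1 < |r|)
    (hN : N.Coprime d) (hper : ∀ x y : ℚ, y.den = d → (x - y).den = 1 → F x = F y)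
    (hF : ∀ x : ℚ, x.den = d → F x = r * F (N * x)) {x : ℚ} (hx : x.den = d) : F x = 0 := by
  have hiter : ∀ k : ℕ, F x = r ^ k * F ((N ^ k : ℕ) * x) := fun k => by
    induction k with
    | zero => simp
    | succ k ih =>
      have hden : ((N ^ k : ℕ) * x).den = d := by
        rw [den_natCast_mul_of_coprime (hx ▸ hN.pow_left k), hx]
      rw [ih, hF _ hden, ← mul_assoc, ← pow_succ, ← mul_assoc, ← Nat.cast_mul, pow_succ' N]
  have hd : 0 < d := hx ▸ x.den_pos
  have hreturn : F ((N ^ d.totient : ℕ) * x) = F x := by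
    refine hper _ _ hx ?_
    obtain ⟨z, hz⟩ := (Nat.ModEq.pow_totient hN).symm.dvd
    have hint : (N ^ d.totient : ℕ) * x - x = (z * x.num : ℤ) := by
      have hz : ((N ^ d.totient : ℕ) : ℚ) - 1 = d * z := by exact_mod_cast hz
      have hnum : x * d = x.num := hx ▸ x.mul_den_eq_num
      push_cast at hz ⊢
      linear_combination x * hz + z * hnum
    rw [hint, Rat.den_intCast]
  have hfix := hiter d.totient
  rw [hreturn] at hfix
  have hpow : r ^ d.totient ≠ 1 := fun h => by
    have := one_lt_pow₀ hr (Nat.totient_pos.2 hd).ne'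
    rw [← abs_pow, h, abs_one] at this
    exact this.false
  exact by_contra fun h => hpow ((mul_eq_right₀ h).1 hfix.symm)

section

variable {ι : Type*} [DecidableEq ι] {f : ℚ → ℚ} {n : ι → ℕ} {s : Finset ι} {x : ℚ}

namespace IsOddDistribution

theorem iterDiff_neg_add_iterDiff (hf : IsOddDistribution f) (hodd : ∀ i, Odd (n i))
    (hn : Pairwise (Nat.Coprime.onFun n)) (hx : IsGeneric n s x) :
    iterDiff f n s (-x) + iterDiff f n s x = 2 * f 0 := by
  rw [iterDiff, iterDiff, ← sum_add_distrib, sum_eq_single_of_mem s (mem_powerset_self s)]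
  · have hden : (((∏ j ∈ s, n j : ℕ) : ℚ) * x).den = 1 := by
      rw [← Nat.dvd_one, den_natCast_mul_dvd_iff, mul_one]
      exact hx.1
    rw [mul_neg, hf.map_eq_map_zero hden, hf.map_eq_map_zero ((Rat.neg_den _).trans hden),
      sdiff_self, bot_eq_empty, card_empty]
    ring
  · intro S hS hSs
    have hSs : S ⊂ s := (mem_powerset.1 hS).ssubset_of_ne hSs
    rw [mul_neg, hf.map_neg (odd_den_natCast_mul _ (hx.odd_den hodd))
      (hx.den_prod_mul_ne_one hn hSs)]
    ring

theorem iterDiff_sub_eq_mul (hf : IsOddDistribution f) (hodd : ∀ i, Odd (n i))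
    (hn : Pairwise (Nat.Coprime.onFun n)) {m : ι} (hm : m ∉ s)
    (hconst : ∀ y, IsGeneric n (insert m s) y → iterDiff f n (insert m s) y = f 0)
    (hx : IsGeneric n s x) :
    iterDiff f n s x - f 0 = -(n m - 2) * (iterDiff f n s (n m * x) - f 0) := by
  have hxodd := hx.odd_den hodd
  obtain ⟨N, hN⟩ := Nat.exists_eq_add_one.2 (hodd m).pos
  have hshift : ∀ b : ℕ, iterDiff f n s (n m * (x + (b : ℚ) / n m)) = iterDiff f n s (n m * x) :=
    fun b => by
    rw [mul_add, mul_div_cancel₀ _ (Nat.cast_ne_zero.2 (hodd m).pos.ne')]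
    exact hf.iterDiff_eq_of_den_sub_eq_one (odd_den_natCast_mul _ hxodd) (by simp)
  have hdistr : ∑ b ∈ range (n m), iterDiff f n s (x + (b : ℚ) / n m) = iterDiff f n s (n m * x) :=
    hf.sum_iterDiff_add_div hxodd (hodd m) fun j hj => hn (ne_of_mem_of_not_mem hj hm)
  have hsum : ∑ b ∈ range (n m), iterDiff f n (insert m s) (x + (b : ℚ) / n m)
      = (n m - 1) * iterDiff f n s (n m * x) := by
    simp only [iterDiff_insert hm, hshift]
    rw [sum_sub_distrib, hdistr, sum_const, card_range, nsmul_eq_mul, sub_one_mul]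
  have hsum' : ∑ b ∈ range (n m), iterDiff f n (insert m s) (x + (b : ℚ) / n m)
      = (n m - 1) * f 0 + (iterDiff f n s (n m * x) - iterDiff f n s x) := by
    rw [hN, sum_range_succ', ← hN, Nat.cast_zero, zero_div, add_zero, iterDiff_insert hm]
    congr 1
    have hterm : ∀ b ∈ range N, iterDiff f n (insert m s) (x + (b + 1 : ℕ) / n m) = f 0 :=
      fun b hb => hconst _ <| hx.add_natCast_div hn hm b.succ_pos <|
        hN ▸ Nat.succ_lt_succ (mem_range.1 hb)
    rw [sum_congr rfl hterm, sum_const, card_range, hN, nsmul_eq_mul, Nat.cast_add_one,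
      add_sub_cancel_right]
  linear_combination hsum' - hsum

theorem exists_iterDiff_insert_ne (hf : IsOddDistribution f) (hodd : ∀ i, Odd (n i))
    (hn : Pairwise (Nat.Coprime.onFun n)) {m : ι} (hm : m ∉ s) (hm3 : 3 < n m)
    (hs : ∃ x, IsGeneric n s x ∧ iterDiff f n s x ≠ f 0) :
    ∃ x, IsGeneric n (insert m s) x ∧ iterDiff f n (insert m s) x ≠ f 0 := by
  by_contra! hconst
  obtain ⟨x, hx, hne⟩ := hs
  have hr : 1 < |-((n m : ℚ) - 2)| := by
    have : (3 : ℚ) < n m := by exact_mod_cast hm3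
    rw [abs_neg, lt_abs]
    left
    linarith
  refine hne (sub_eq_zero.1 (eq_zero_of_eq_mul_natCast_mul (F := fun x => iterDiff f n s x - f 0)
    hr (hx.coprime_den hn hm) (fun y z hz hyz => ?_) (fun y hy => ?_) rfl))
  · rw [hf.iterDiff_eq_of_den_sub_eq_one (hz ▸ hx.odd_den hodd) hyz]
  · exact hf.iterDiff_sub_eq_mul hodd hn hm hconst (hx.of_den_eq hy)

theorem exists_iterDiff_ne_of_subset (hf : IsOddDistribution f) (hodd : ∀ i, Odd (n i))
    (hn : Pairwise (Nat.Coprime.onFun n)) {s' : Finset ι} (hss' : s ⊆ s')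
    (hn3 : ∀ m ∈ s' \ s, 3 < n m) (hs : ∃ x, IsGeneric n s x ∧ iterDiff f n s x ≠ f 0) :
    ∃ x, IsGeneric n s' x ∧ iterDiff f n s' x ≠ f 0 := by
  rw [← sdiff_union_of_subset hss']
  generalize s' \ s = r at hn3
  induction r using Finset.induction_on with
  | empty => rwa [empty_union]
  | insert m r _ ih =>
    rw [forall_mem_insert] at hn3
    rw [insert_union]
    by_cases hm : m ∈ r ∪ s
    · rw [insert_eq_of_mem hm]
      exact ih hn3.2
    · exact hf.exists_iterDiff_insert_ne hodd hn hm hn3.1 (ih hn3.2)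

theorem exists_odd_den_and_iterDiff_lt (hf : IsOddDistribution f) (hodd : ∀ i, Odd (n i))
    (hn : Pairwise (Nat.Coprime.onFun n)) (hs : ∃ x, IsGeneric n s x ∧ iterDiff f n s x ≠ f 0) :
    ∃ x : ℚ, Odd x.den ∧ iterDiff f n s x < f 0 := by
  obtain ⟨x, hx, hne⟩ := hs
  have hreflect := hf.iterDiff_neg_add_iterDiff hodd hn hx
  rcases hne.lt_or_gt with hlt | hgt
  · exact ⟨x, hx.odd_den hodd, hlt⟩
  · exact ⟨-x, hx.neg.odd_den hodd, by linarith⟩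

end IsOddDistribution

namespace IsV2

variable {V : ℚ → ℚ}

theorem exists_iterDiff_pair_eq_of_dvd (hV : IsV2 V) {i j : ι} (hij : i ≠ j) {a : ι → ℕ} {d : ℕ}
    (hd : 0 < d) (hai : 0 < a i) (haj : 0 < a j) (hcop : (2 ^ a i + 1).Coprime (2 ^ a j + 1))
    (hi : 2 ^ d + 1 ∣ 2 ^ a i + 1) (hj : 2 ^ d + 1 ∣ 2 ^ a j - 1) :
    ∃ x, IsGeneric (fun i => 2 ^ a i + 1) {i, j} x ∧
      iterDiff V (fun i => 2 ^ a i + 1) {i, j} x = -(3 / 4) := by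
  have hp1 : 2 ^ d + 1 ≠ 1 := by simp
  have hq1 : 2 ^ a j + 1 ≠ 1 := by simp
  have hnotMem : i ∉ ({j} : Finset ι) := notMem_singleton.2 hij
  let x : ℚ := (((2 ^ d + 1) * (2 ^ a j + 1) : ℕ) : ℚ)⁻¹
  have hxden : x.den = (2 ^ d + 1) * (2 ^ a j + 1) :=
    Rat.inv_natCast_den_of_pos (by positivity)
  have hVx : V x = 1 / 4 := hV.map_inv_mul_eq_quarter hd haj hj
  have hVi : V ((2 ^ a i + 1 : ℕ) * x) = 1 / 2 := by
    refine hV.map_eq_half haj ?_ fun h => ?_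
    · rw [den_natCast_mul_dvd_iff, hxden]
      exact Nat.mul_dvd_mul_right hi _
    · rw [← Nat.dvd_one, den_natCast_mul_dvd_iff, hxden, mul_one] at h
      exact hq1 (hcop.symm.eq_one_of_dvd ((Nat.dvd_mul_left _ _).trans h))
  have hVj : V ((2 ^ a j + 1 : ℕ) * x) = 1 / 2 := by
    refine hV.map_eq_half hai ?_ fun h => ?_
    · rw [den_natCast_mul_dvd_iff, hxden, mul_comm]
      exact Nat.mul_dvd_mul_left _ hi
    · rw [← Nat.dvd_one, den_natCast_mul_dvd_iff, hxden, mul_comm] at h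
      exact hp1 (Nat.dvd_one.1 (Nat.dvd_of_mul_dvd_mul_left (by positivity) h))
  have hVij : V ((2 ^ a j + 1 : ℕ) * ((2 ^ a i + 1 : ℕ) * x)) = 0 := by
    refine hV.map_eq_zero ?_
    rw [← Nat.dvd_one, den_natCast_mul_dvd_iff, den_natCast_mul_dvd_iff, hxden, mul_one]
    exact Nat.mul_dvd_mul_right hi _
  refine ⟨x, ⟨?_, ?_⟩, ?_⟩
  · rw [hxden, prod_pair hij]
    exact Nat.mul_dvd_mul_right hi _
  · simp only [mem_insert, mem_singleton, forall_eq_or_imp, forall_eq, hxden]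
    exact ⟨fun h => hp1 (h.coprime_mul_right.eq_one_of_dvd hi),
      fun h => hq1 ((Nat.coprime_self _).1 h.coprime_mul_left)⟩
  · rw [iterDiff_insert hnotMem]
    simp only [← insert_empty_eq j, iterDiff_insert (notMem_empty j), iterDiff_empty, hVx, hVi, hVj,
      hVij]
    norm_num

theorem exists_iterDiff_pair_eq (hV : IsV2 V) {i j : ι} (hij : i ≠ j) {a : ι → ℕ}
    (hai : 0 < a i) (haj : 0 < a j) (hcop : (2 ^ a i + 1).Coprime (2 ^ a j + 1)) :
    ∃ x, IsGeneric (fun i => 2 ^ a i + 1) {i, j} x ∧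
      iterDiff V (fun i => 2 ^ a i + 1) {i, j} x = -(3 / 4) := by
  obtain ⟨d, hd, ⟨hi, hj⟩ | ⟨hj, hi⟩⟩ := exists_two_pow_add_one_dvd hai.ne' hcop
  · exact hV.exists_iterDiff_pair_eq_of_dvd hij hd hai haj hcop hi hj
  · rw [pair_comm]
    exact hV.exists_iterDiff_pair_eq_of_dvd hij.symm hd haj hai hcop.symm hj hi

end IsV2

end

theorem exists_forall_ne_three_lt_two_pow_add_one {ι : Type*} [Nonempty ι] {a : ι → ℕ}
    (hpos : ∀ i, 0 < a i) (hcop : Pairwise (Nat.Coprime.onFun fun i => 2 ^ a i + 1)) :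
    ∃ p, ∀ i ≠ p, 3 < 2 ^ a i + 1 := by
  suffices ∃ p, ∀ i ≠ p, 1 < a i by
    obtain ⟨p, hp⟩ := this
    exact ⟨p, fun i hi => Nat.succ_lt_succ (Nat.pow_lt_pow_right one_lt_two (hp i hi))⟩
  by_cases h : ∃ p, a p = 1
  · obtain ⟨p, hp⟩ := h
    refine ⟨p, fun i hi => lt_of_le_of_ne (hpos i) fun hi1 => ?_⟩
    have hcop3 : (2 ^ a i + 1).Coprime (2 ^ a p + 1) := hcop hi
    rw [← hi1, hp] at hcop3
    norm_num at hcop3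
  · exact ⟨Classical.arbitrary ι, fun i _ => lt_of_le_of_ne (hpos i) fun hi => h ⟨i, hi.symm⟩⟩

theorem stmt_11_general (V : ℚ → ℚ) (hV : IsV2 V) (t : ℕ) (ht : 2 ≤ t)
    (a : Fin t → ℕ) (hpos : ∀ j, 0 < a j)
    (hcop : ∀ j k, j ≠ k → Nat.Coprime (2 ^ a j + 1) (2 ^ a k + 1)) :
    ∃ x : ℚ, Odd x.den ∧ Vmulti V a x < -(1 / 2) := by
  have : Nontrivial (Fin t) := Fin.nontrivial_iff_two_le.2 ht
  have hn : Pairwise (Nat.Coprime.onFun fun j => 2 ^ a j + 1) := fun j k hjk => hcop j k hjk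
  have hodd : ∀ j, Odd (2 ^ a j + 1) := fun j => (even_two.pow_of_ne_zero (hpos j).ne').add_one
  have hf := hV.isOddDistribution_sub_half
  have hf0 : V 0 - 1 / 2 = -(1 / 2) := by rw [hV.map_eq_zero rfl, zero_sub]
  have hVf : ∀ {s : Finset (Fin t)} {x}, s.Nonempty →
      iterDiff (fun x => V x - 1 / 2) (fun j => 2 ^ a j + 1) s x
        = iterDiff V (fun j => 2 ^ a j + 1) s x := fun hs => iterDiff_sub_const hs _
  obtain ⟨p, hp⟩ := exists_forall_ne_three_lt_two_pow_add_one hpos hn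
  obtain ⟨q, hqp⟩ := exists_ne p
  obtain ⟨x₀, hx₀, hpair⟩ :=
    hV.exists_iterDiff_pair_eq hqp.symm (hpos p) (hpos q) (hcop p q hqp.symm)
  have hbase : ∃ x, IsGeneric (fun j => 2 ^ a j + 1) {p, q} x ∧
      iterDiff (fun x => V x - 1 / 2) (fun j => 2 ^ a j + 1) {p, q} x ≠ V 0 - 1 / 2 := by
    refine ⟨x₀, hx₀, ?_⟩
    rw [hVf (insert_nonempty p _), hpair, hf0]
    norm_num
  have hlarge : ∀ m ∈ univ \ {p, q}, 3 < 2 ^ a m + 1 := fun m hm =>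
    hp m fun h => by simp [h] at hm
  have hall := hf.exists_iterDiff_ne_of_subset hodd hn (subset_univ _) hlarge hbase
  obtain ⟨x, hx, hlt⟩ := hf.exists_odd_den_and_iterDiff_lt hodd hn hall
  refine ⟨x, hx, ?_⟩
  rwa [Vmulti_eq_iterDiff, ← hVf univ_nonempty, ← hf0]

/-- For `t ≥ 3` and positive integers `a₁ > a₂ > ⋯ > a_t` with `2^{a_j}+1` pairwise coprime,
there is a rational `x` with odd denominator such that `V(2; a₁, …, a_t; x) < -1/2`. -/
theorem stmt_11 (V : ℚ → ℚ) (hV : IsV2 V) (t : ℕ) (ht : 3 ≤ t)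
    (a : Fin t → ℕ) (hpos : ∀ j, 0 < a j) (hanti : StrictAnti a)
    (hcop : ∀ j k, j ≠ k → Nat.Coprime (2 ^ a j + 1) (2 ^ a k + 1)) :
    ∃ x : ℚ, Odd x.den ∧ Vmulti V a x < -(1 / 2) := by
  exact stmt_11_general V hV t (by omega) a hpos hcop
end

section
/- Let t ≥ 3 and let a_1 > a_2 > ⋯ > a_t be positive integers such that the numbers 2^{a_1}+1, …, 2^{a_t}+1 are pairwise coprime, and let b be a positive integer with gcd(2^b + 1, 2^{a_1} + 1) = 1. Then there exists a rational number x with odd denominator such that V(2; a_1, …, a_t; x) + V(−(2^b + 1)·x) − V(−x) < −1/2. -/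
/-!
On `ℚ/ℤ`, `V` is the average of the fractional part over the orbit of doubling, so Hermite's
identity yields the distribution relation for sums of `V` over translates by `n`-torsion.
Take `n = F_m = 2 ^ 2 ^ m + 1` and let `z` have order dividing `F_0 ⋯ F_{m-1}`. Then `F_m z = 2 z`,
and `V(2 z) = V(z)`, so the average of `V(u (z + w))` over the nonzero `F_m`-torsion points `w` is
exactly `1/2` whenever `u` is coprime to `F_m`.

If `2 ^ m` is the exact power of `2` dividing `r`, then `2 ^ r + 1` acts as `F_m` on points of order
dividing `F_0 ⋯ F_m`. Coprimality makes the `2`-adic valuations of the `a_j` distinct; averaging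
over the torsion attached to the largest one removes the corresponding exponent from the iterated
difference `V(2; a_1, …; x)`. Hence `V(2; …; x) < -1/2` is inherited from two exponents, with
valuations `m` and `n`, where `x = 1 / (F_m F_n)` gives `0 - 1/2 - 1/2 + 1/4 = -3/4`.

In the last averaging step, of valuation `m`, the two extra terms cancel when `2 ^ b + 1` is coprime
to `F_m`. Otherwise `b` has valuation `m` too, and they contribute `V(-y) - 1/2`, so one needs
`V(2; …; y) + V(-y) < 0` for the smaller family. One more averaging step gives this from the bound
`-1/2` when that family has at least three members; a family of exactly three exponents is treated
by averaging over translates of an explicit point, where the mean is again `-3/4`.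
-/

section Arithmetic

open Finset
open Nat (fermatNumber)

variable {m n : ℕ}

lemma eq_zero_of_coprime_nsmul_eq_zero {G : Type*} [AddMonoid G] {g : G} (hmn : m.Coprime n)
    (hm : m • g = 0) (hn : n • g = 0) : g = 0 := by
  simpa [hmn] using gcd_nsmul_eq_zero.2 ⟨hm, hn⟩

lemma exists_modEq_two_pow {r : ℕ} (hr : r ≠ 0) : ∃ n, r ≡ 2 ^ n [MOD 2 ^ (n + 1)] := by
  obtain ⟨n, _, ⟨c, rfl⟩, rfl⟩ := Nat.exists_eq_two_pow_mul_odd hr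
  refine ⟨n, ?_⟩
  rw [show 2 ^ n * (2 * c + 1) = 2 ^ n + 2 ^ (n + 1) * c by ring]
  simp [Nat.ModEq]

lemma fermatNumber_pos (n : ℕ) : 0 < fermatNumber n := (Nat.odd_fermatNumber n).pos

lemma fermatNumber_dvd_sub_two (hmn : m < n) : fermatNumber m ∣ fermatNumber n - 2 := by
  rw [← Nat.prod_fermatNumber]
  exact dvd_prod_of_mem _ (mem_range.2 hmn)

lemma fermatNumber_dvd_two_pow_add_one {r : ℕ} (hr : r ≡ 2 ^ n [MOD 2 ^ (n + 1)]) :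
    fermatNumber n ∣ 2 ^ r + 1 := by
  have hmod : r % 2 ^ (n + 1) = 2 ^ n :=
    Eq.trans hr (Nat.mod_eq_of_lt (Nat.pow_lt_pow_succ one_lt_two))
  have hr' : r = 2 ^ n * (2 * (r / 2 ^ (n + 1)) + 1) := by
    conv_lhs => rw [← Nat.div_add_mod r (2 ^ (n + 1)), hmod]
    ring
  rw [hr', pow_mul, fermatNumber]
  simpa using (odd_two_mul_add_one (r / 2 ^ (n + 1))).nat_add_dvd_pow_add_pow (2 ^ 2 ^ n) 1

-- Modulo a common prime factor, `2` has order `2 ^ (n + 1)`.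
lemma coprime_fermatNumber_or_modEq (b n : ℕ) :
    (2 ^ b + 1).Coprime (fermatNumber n) ∨ b ≡ 2 ^ n [MOD 2 ^ (n + 1)] := by
  refine or_iff_not_imp_left.2 fun hcop ↦ ?_
  obtain ⟨p, hp, hpb, hpn⟩ := Nat.Prime.not_coprime_iff_dvd.1 hcop
  have : Fact p.Prime := ⟨hp⟩
  have hp2 : p ≠ 2 := fun h ↦ Nat.not_even_iff_odd.2 (Nat.odd_fermatNumber n) <|
    even_iff_two_dvd.2 (h ▸ hpn)
  have : Fact (2 < p) := ⟨hp.two_le.lt_of_ne' hp2⟩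
  let g : (ZMod p)ˣ := ZMod.unitOfCoprime 2 ((Nat.coprime_primes Nat.prime_two hp).2 hp2.symm)
  have hg {k : ℕ} (hk : p ∣ 2 ^ k + 1) : g ^ k = -1 := by
    ext
    push_cast [g, ZMod.coe_unitOfCoprime]
    rw [← add_eq_zero_iff_eq_neg]
    exact_mod_cast (ZMod.natCast_eq_zero_iff _ _).2 hk
  have hne : g ^ 2 ^ n ≠ 1 := fun h ↦ ZMod.neg_one_ne_one (n := p) <| by
    simpa using congrArg Units.val ((hg hpn).symm.trans h)
  have hord : orderOf g = 2 ^ (n + 1) :=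
    orderOf_eq_prime_pow hne (by rw [pow_succ, pow_mul, hg hpn, neg_one_sq])
  rw [← hord, ← pow_eq_pow_iff_modEq, hg hpb, hg hpn]

lemma natCast_floor_eq_sub_fract {K : Type*} [Ring K] [LinearOrder K] [IsStrictOrderedRing K]
    [FloorRing K] {y : K} (hy : 0 ≤ y) : (⌊y⌋₊ : K) = y - Int.fract y := by
  rw [natCast_floor_eq_intCast_floor hy, Int.self_sub_fract]

lemma sum_digits_two_eq_mod_add (n : ℕ) :
    (Nat.digits 2 n).sum = n % 2 + (Nat.digits 2 (n / 2)).sum := by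
  rcases n.eq_zero_or_pos with rfl | h
  · simp
  · rw [Nat.digits_def' one_lt_two h, List.sum_cons]

lemma sum_digits_floor_two_pow_mul {K : Type*} [Field K] [LinearOrder K]
    [IsStrictOrderedRing K] [FloorRing K] {y : K} (hy0 : 0 ≤ y) (hy1 : y < 1) (k : ℕ) :
    ((Nat.digits 2 ⌊2 ^ k * y⌋₊).sum : K) =
      ∑ i ∈ range k, (2 * Int.fract (2 ^ i * y) - Int.fract (2 ^ (i + 1) * y)) := by
  induction k with
  | zero => simp [Nat.floor_eq_zero.2 hy1]
  | succ k ih =>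
    have hdiv : ⌊2 ^ (k + 1) * y⌋₊ / 2 = ⌊2 ^ k * y⌋₊ := by
      rw [← Nat.floor_div_ofNat, pow_succ]; congr 1; ring
    have hmod : ((⌊2 ^ (k + 1) * y⌋₊ % 2 : ℕ) : K)
        = 2 * Int.fract (2 ^ k * y) - Int.fract (2 ^ (k + 1) * y) := by
      have h : (⌊2 ^ (k + 1) * y⌋₊ % 2 : ℕ) + 2 * (⌊2 ^ k * y⌋₊ : K) = ⌊2 ^ (k + 1) * y⌋₊ := by
        exact_mod_cast hdiv ▸ Nat.mod_add_div _ 2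
      rw [natCast_floor_eq_sub_fract (by positivity),
        natCast_floor_eq_sub_fract (by positivity)] at h
      linear_combination h
    rw [sum_range_succ, ← ih, sum_digits_two_eq_mod_add, hdiv, Nat.cast_add, hmod, add_comm]

end Arithmetic

/-- The group `ℚ/ℤ`. -/
abbrev RatCircle : Type := AddCircle (1 : ℚ)

namespace RatCircle

open Finset Function
open scoped BigOperators
open Nat (fermatNumber)

variable {x y z w : RatCircle} {k m n u : ℕ}

/-- The representative of a point of `ℚ/ℤ` in `[0, 1)`. -/
def frac : RatCircle → ℚ := (Int.fract_periodic ℚ).lift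

/-- Kubert's `V`-function in characteristic `2`, as the average of the fractional part over the
orbit of the doubling map; the value is `0` on points of even order, whose orbits are not
periodic. -/
noncomputable def kubertV (x : RatCircle) : ℚ :=
  𝔼 i ∈ range (minimalPeriod (2 • ·) x), frac (2 ^ i • x)

/-- The `n`-torsion of `ℚ/ℤ`, for `n ≠ 0`. -/
noncomputable def torsion (n : ℕ) : Finset RatCircle :=
  (range n).image fun c : ℕ ↦ ((c / n : ℚ) : RatCircle)

@[simp] lemma frac_coe (x : ℚ) : frac (x : RatCircle) = Int.fract x := rfl

@[simp] lemma frac_zero : frac 0 = 0 := Int.fract_zero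

@[simp] lemma coe_frac (x : RatCircle) : (frac x : RatCircle) = x := by
  induction x using QuotientAddGroup.induction_on with
  | H x => exact AddCircle.coe_fract x

lemma fract_frac (x : RatCircle) : Int.fract (frac x) = frac x := congrArg frac (coe_frac x)

lemma frac_nonneg (x : RatCircle) : 0 ≤ frac x := fract_frac x ▸ Int.fract_nonneg _

lemma frac_lt_one (x : RatCircle) : frac x < 1 := fract_frac x ▸ Int.fract_lt_one _

lemma frac_neg (hx : x ≠ 0) : frac (-x) = 1 - frac x := by
  have hfrac : Int.fract (frac x) ≠ 0 := fun h ↦ hx <| by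
    rw [← coe_frac x, ← fract_frac, h, AddCircle.coe_zero]
  rw [← coe_frac x, ← AddCircle.coe_neg, frac_coe, frac_coe, Int.fract_neg hfrac]

lemma isPeriodicPt_two_nsmul_iff :
    IsPeriodicPt (2 • · : RatCircle → RatCircle) k x ↔ 2 ^ k • x = x := by
  rw [IsPeriodicPt, IsFixedPt, smul_iterate_apply]

lemma kubertV_eq_expect (hk : 0 < k) (hx : 2 ^ k • x = x) :
    kubertV x = 𝔼 i ∈ range k, frac (2 ^ i • x) := by
  have hper : IsPeriodicPt (2 • ·) k x := isPeriodicPt_two_nsmul_iff.2 hx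
  set p := minimalPeriod (2 • ·) x with hp
  obtain ⟨c, rfl⟩ : p ∣ k := hper.minimalPeriod_dvd
  have hp0 : 0 < p := hper.minimalPeriod_pos hk
  have hsum (c : ℕ) : ∑ i ∈ range (p * c), frac (2 ^ i • x)
      = c * ∑ i ∈ range p, frac (2 ^ i • x) := by
    have hcx : ∀ c : ℕ, 2 ^ (p * c) • x = x := fun c ↦
      isPeriodicPt_two_nsmul_iff.1 ((isPeriodicPt_minimalPeriod _ x).mul_const c)
    induction c with
    | zero => simp
    | succ c ih =>
      simp only [Nat.mul_succ, sum_range_add, ih, pow_add, mul_nsmul, hcx, Nat.cast_succ]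
      ring
  have hc : (c : ℚ) ≠ 0 := by rintro h; simp_all
  rw [kubertV, ← hp, expect_eq_sum_div_card, expect_eq_sum_div_card, hsum, card_range, card_range]
  push_cast
  field_simp

lemma kubertV_zero : kubertV 0 = 0 := by
  simp [kubertV]

lemma two_pow_totient_nsmul (hn : Odd n) (hx : n • x = 0) : 2 ^ n.totient • x = x := by
  have hpow := (Nat.ModEq.pow_totient (Nat.coprime_two_left.2 hn)).of_dvd
    (addOrderOf_dvd_of_nsmul_eq_zero hx)
  simpa using nsmul_eq_nsmul_iff_modEq.2 hpow

/-- The points of `ℚ/ℤ` of odd order, on which the doubling map is periodic. -/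
def oddTorsion : AddSubgroup RatCircle where
  carrier := {x | Odd (addOrderOf x)}
  zero_mem' := by simp
  add_mem' {x y} hx hy := (hx.mul hy).of_dvd_nat
    (AddCommute.all x y).addOrderOf_add_dvd_mul_addOrderOf
  neg_mem' {x} hx := by simpa using hx

lemma mem_oddTorsion : x ∈ oddTorsion ↔ Odd (addOrderOf x) := Iff.rfl

lemma mem_oddTorsion_of_nsmul_eq_zero (hn : Odd n) (hx : n • x = 0) : x ∈ oddTorsion :=
  hn.of_dvd_nat (addOrderOf_dvd_of_nsmul_eq_zero hx)

lemma exists_two_pow_nsmul_eq_self (hx : x ∈ oddTorsion) : ∃ k, 0 < k ∧ 2 ^ k • x = x :=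
  ⟨_, Nat.totient_pos.2 hx.pos, two_pow_totient_nsmul hx (addOrderOf_nsmul_eq_zero x)⟩

lemma mem_oddTorsion_of_two_pow_nsmul_eq_self (hk : 0 < k) (hx : 2 ^ k • x = x) :
    x ∈ oddTorsion := by
  refine mem_oddTorsion_of_nsmul_eq_zero (n := 2 ^ k - 1) ?_ ?_
  · exact Nat.Even.sub_odd Nat.one_le_two_pow (even_two.pow_of_ne_zero hk.ne') odd_one
  · rw [sub_nsmul _ Nat.one_le_two_pow, hx, one_nsmul, add_neg_cancel]

lemma coe_mem_oddTorsion {x : ℚ} : (x : RatCircle) ∈ oddTorsion ↔ Odd x.den := by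
  rw [mem_oddTorsion]
  simpa using congrArg Odd (AddCircle.addOrderOf_coe_rat (p := (1 : ℚ)) (q := x))

lemma kubertV_neg (hodd : x ∈ oddTorsion) (hx : x ≠ 0) : kubertV (-x) = 1 - kubertV x := by
  obtain ⟨k, hk, hkx⟩ := exists_two_pow_nsmul_eq_self hodd
  have hne (i : ℕ) : 2 ^ i • x ≠ 0 := fun hi ↦ hx <|
    eq_zero_of_coprime_nsmul_eq_zero ((Nat.coprime_two_left.2 hodd).pow_left i) hi
      (addOrderOf_nsmul_eq_zero x)
  rw [kubertV_eq_expect hk hkx, kubertV_eq_expect hk (by rw [smul_neg, hkx])]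
  simp only [smul_neg, frac_neg (hne _), expect_sub_distrib]
  rw [expect_const (nonempty_range_iff.2 hk.ne')]

lemma sum_range_frac_two_pow_succ (hx : 2 ^ k • x = x) :
    ∑ i ∈ range k, frac (2 ^ (i + 1) • x) = ∑ i ∈ range k, frac (2 ^ i • x) := by
  have := sum_range_succ' (fun i ↦ frac (2 ^ i • x)) k
  rw [sum_range_succ, hx, pow_zero, one_nsmul] at this
  exact (add_right_cancel this).symm

lemma kubertV_two_nsmul (hx : x ∈ oddTorsion) : kubertV (2 • x) = kubertV x := by
  obtain ⟨k, hk, hkx⟩ := exists_two_pow_nsmul_eq_self hx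
  rw [kubertV_eq_expect hk hkx, kubertV_eq_expect hk (by rw [nsmul_left_comm, hkx]),
    expect_eq_sum_div_card, expect_eq_sum_div_card, ← sum_range_frac_two_pow_succ hkx]
  simp only [pow_succ, mul_nsmul']

lemma kubertV_two_pow_nsmul (hx : x ∈ oddTorsion) (v : ℕ) : kubertV (2 ^ v • x) = kubertV x := by
  induction v with
  | zero => simp
  | succ v ih => rw [pow_succ, mul_nsmul, kubertV_two_nsmul (oddTorsion.nsmul_mem hx _), ih]

lemma mem_torsion (hn : 0 < n) : x ∈ torsion n ↔ n • x = 0 := by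
  simp [torsion, AddCircle.nsmul_eq_zero_iff hn]

lemma injOn_coe_div (n : ℕ) :
    Set.InjOn (fun c : ℕ ↦ ((c / n : ℚ) : RatCircle)) (range n) := by
  have hlt {c : ℕ} (hc : c ∈ range n) : (c / n : ℚ) ∈ Set.Ico 0 (0 + 1) := by
    have hc := mem_range.1 hc
    have : (0 : ℚ) < n := by exact_mod_cast (Nat.zero_le c).trans_lt hc
    exact ⟨by positivity, by rw [zero_add, div_lt_one this]; exact_mod_cast hc⟩
  intro c hc d hd h
  have hn : (n : ℚ) ≠ 0 := by rintro h; simp_all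
  have := (AddCircle.coe_eq_coe_iff_of_mem_Ico (hlt hc) (hlt hd)).1 h
  exact_mod_cast (div_left_inj' hn).1 this

lemma card_torsion (n : ℕ) : #(torsion n) = n := by
  rw [torsion, card_image_of_injOn (injOn_coe_div n), card_range]

lemma sum_torsion_frac_add (hn : 0 < n) (z : RatCircle) :
    ∑ w ∈ torsion n, frac (z + w) = frac (n • z) + (n - 1) / 2 := by
  have hn' : (0 : ℚ) < n := by exact_mod_cast hn
  set y : ℚ := frac (n • z) with hy
  have hyz : n • (z - ((y / n : ℚ) : RatCircle)) = 0 := by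
    rw [nsmul_sub, ← AddCircle.coe_nsmul, nsmul_eq_mul, mul_div_cancel₀ _ hn'.ne', hy, coe_frac,
      sub_self]
  calc ∑ w ∈ torsion n, frac (z + w)
    _ = ∑ w ∈ torsion n, frac (((y / n : ℚ) : RatCircle) + w) := by
      refine sum_equiv (Equiv.addLeft (z - ((y / n : ℚ) : RatCircle))) (fun w ↦ ?_) fun w _ ↦ ?_
      · simp only [mem_torsion hn, Equiv.coe_addLeft, nsmul_add, hyz, zero_add]
      · rw [Equiv.coe_addLeft, ← add_assoc, add_sub_cancel]
    _ = ∑ c ∈ range n, (y + c) / n := by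
      rw [torsion, sum_image (injOn_coe_div n)]
      refine sum_congr rfl fun c hc ↦ ?_
      have hc' : (c : ℚ) + 1 ≤ n := by exact_mod_cast mem_range.1 hc
      rw [← AddCircle.coe_add, frac_coe, ← add_div, Int.fract_eq_self]
      have := frac_nonneg (n • z)
      exact ⟨by positivity, by rw [div_lt_one hn']; linarith [frac_lt_one (n • z)]⟩
    _ = y + (n - 1) / 2 := by
      have hgauss : (∑ c ∈ range n, (c : ℚ)) * 2 = n * (n - 1) := by
        rw [← Nat.cast_pred hn, ← Nat.cast_sum]; exact_mod_cast sum_range_id_mul_two n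
      rw [← sum_div, sum_add_distrib, sum_const, card_range, nsmul_eq_mul]
      field_simp
      linarith

lemma sum_torsion_nsmul (hn : 0 < n) (hu : u.Coprime n) {M : Type*}
    [AddCommMonoid M] (f : RatCircle → M) : ∑ w ∈ torsion n, f (u • w) = ∑ w ∈ torsion n, f w := by
  have hmaps : Set.MapsTo (u • · : RatCircle → RatCircle) (torsion n) (torsion n) := fun w hw ↦ by
    have hw : n • w = 0 := by simpa [mem_torsion hn] using hw
    simp [mem_torsion hn, nsmul_left_comm w u n, hw]
  have hinj : Set.InjOn (u • · : RatCircle → RatCircle) (torsion n) := fun v hv w hw h ↦ by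
    have hn0 : n • (v - w) = 0 := by simp_all [mem_torsion, nsmul_sub]
    have hu0 : u • (v - w) = 0 := by simpa [nsmul_sub, sub_eq_zero] using h
    exact sub_eq_zero.1 (eq_zero_of_coprime_nsmul_eq_zero hu hu0 hn0)
  exact sum_nbij (u • ·) hmaps hinj (surjOn_of_injOn_of_card_le _ hmaps hinj le_rfl) fun _ _ ↦ rfl

lemma sum_torsion_kubertV (hn : Odd n) (hu : u.Coprime n) (hz : z ∈ oddTorsion) :
    ∑ w ∈ torsion n, kubertV (u • (z + w)) = kubertV (n • u • z) + (n - 1) / 2 := by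
  set k := (n * addOrderOf z).totient
  have hodd : Odd (n * addOrderOf z) := hn.mul hz
  have hk : 0 < k := Nat.totient_pos.2 hodd.pos
  have hperiod {x : RatCircle} (hx : (n * addOrderOf z) • x = 0) : 2 ^ k • x = x :=
    two_pow_totient_nsmul hodd hx
  have hz0 (m : ℕ) : (m * addOrderOf z) • z = 0 := by simp [mul_nsmul']
  have hw (w) (hw : w ∈ torsion n) : 2 ^ k • u • (z + w) = u • (z + w) := hperiod <| by
    rw [nsmul_left_comm, nsmul_add, hz0, mul_nsmul, (mem_torsion hn.pos).1 hw]
    simp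
  calc ∑ w ∈ torsion n, kubertV (u • (z + w))
    _ = 𝔼 i ∈ range k, ∑ w ∈ torsion n, frac ((2 ^ i * u) • z + (2 ^ i * u) • w) := by
      rw [expect_sum_comm]
      refine sum_congr rfl fun w h ↦ ?_
      simp only [kubertV_eq_expect hk (hw w h), ← nsmul_add, mul_nsmul']
    _ = 𝔼 i ∈ range k, (frac (2 ^ i • n • u • z) + (n - 1) / 2) := by
      refine expect_congr rfl fun i _ ↦ ?_
      have hcop : (2 ^ i * u).Coprime n := ((Nat.coprime_two_left.2 hn).pow_left i).mul_left hu
      rw [sum_torsion_nsmul hn.pos hcop (fun w ↦ frac ((2 ^ i * u) • z + w)),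
        sum_torsion_frac_add hn.pos, mul_nsmul', nsmul_left_comm _ _ n]
    _ = kubertV (n • u • z) + (n - 1) / 2 := by
      have hnz : 2 ^ k • n • u • z = n • u • z := hperiod <| by
        rw [nsmul_left_comm _ n, nsmul_left_comm _ u, hz0]; simp
      rw [expect_add_distrib, expect_const (nonempty_range_iff.2 hk.ne'), kubertV_eq_expect hk hnz]

lemma coe_nsmul_div_eq_self {k : ℕ} (hk : 0 < k) (a : ℕ) :
    2 ^ k • ((a / (2 ^ k - 1) : ℚ) : RatCircle) = ((a / (2 ^ k - 1) : ℚ) : RatCircle) := by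
  have hpow : (2 : ℚ) ^ k - 1 ≠ 0 := (sub_pos.2 (one_lt_pow₀ one_lt_two hk.ne')).ne'
  rw [← AddCircle.coe_nsmul, ← sub_eq_zero, ← AddCircle.coe_sub, AddCircle.coe_eq_zero_iff]
  refine ⟨a, ?_⟩
  push_cast [nsmul_eq_mul, zsmul_eq_mul]
  field_simp

lemma kubertV_coe_div {a : ℕ} (hk : 0 < k) (ha : a < 2 ^ k - 1) :
    kubertV ((a / (2 ^ k - 1) : ℚ) : RatCircle) = (Nat.digits 2 a).sum / k := by
  set y : ℚ := a / (2 ^ k - 1) with hy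
  have hpow : (0 : ℚ) < 2 ^ k - 1 := sub_pos.2 (one_lt_pow₀ one_lt_two hk.ne')
  have hper : 2 ^ k • (y : RatCircle) = y := coe_nsmul_div_eq_self hk a
  have hy0 : 0 ≤ y := by positivity
  have hy1 : y < 1 := by
    rw [hy, div_lt_one hpow, lt_sub_iff_add_lt]
    exact_mod_cast Nat.add_lt_of_lt_sub ha
  have hfloor : ⌊2 ^ k * y⌋₊ = a := by
    have : 2 ^ k * y = y + a := by rw [hy]; field_simp; ring
    rw [this, Nat.floor_add_natCast hy0, Nat.floor_eq_zero.2 hy1, zero_add]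
  have hfrac (i : ℕ) : Int.fract (2 ^ i * y) = frac (2 ^ i • (y : RatCircle)) := by
    rw [← AddCircle.coe_nsmul, frac_coe, nsmul_eq_mul, Nat.cast_pow, Nat.cast_two]
  have hsum := sum_digits_floor_two_pow_mul hy0 hy1 k
  simp only [hfloor, hfrac, sum_sub_distrib, ← mul_sum, sum_range_frac_two_pow_succ hper] at hsum
  rw [kubertV_eq_expect hk hper, expect_eq_sum_div_card, card_range, hsum]
  congr 1
  ring

lemma _root_.IsV2.apply_eq_kubertV {V : ℚ → ℚ} (hV : IsV2 V) {x : ℚ}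
    (hx : (x : RatCircle) ∈ oddTorsion) : V x = kubertV x := by
  obtain ⟨k, hk, hkx⟩ := exists_two_pow_nsmul_eq_self hx
  have hpow : ((2 ^ k - 1 : ℕ) : ℚ) = 2 ^ k - 1 := by simp [Nat.cast_sub Nat.one_le_two_pow]
  have htors : (2 ^ k - 1) • (x : RatCircle) = 0 := by
    rw [sub_nsmul _ Nat.one_le_two_pow, hkx, one_nsmul, add_neg_cancel]
  have hpos : 0 < 2 ^ k - 1 := Nat.sub_pos_of_lt (Nat.one_lt_two_pow hk.ne')
  obtain ⟨a, ha, hax⟩ := (AddCircle.nsmul_eq_zero_iff hpos).1 htors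
  rw [mul_one, hpow] at hax
  rw [← hax, kubertV_coe_div hk ha]
  refine hV x k a hk ha ?_
  rw [← sub_eq_zero, ← AddCircle.coe_sub, AddCircle.coe_eq_zero_iff] at hax
  obtain ⟨z, hz⟩ := hax
  exact ⟨-z, by push_cast; rw [zsmul_eq_mul] at hz; linarith⟩

lemma kubertV_eq_half (hk : k ≠ 0) (hx : (2 ^ k + 1) • x = 0) (hx0 : x ≠ 0) :
    kubertV x = 1 / 2 := by
  have hodd : x ∈ oddTorsion :=
    mem_oddTorsion_of_nsmul_eq_zero ((even_two.pow_of_ne_zero hk).add_odd odd_one) hx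
  have hneg : 2 ^ k • x = -x := by rwa [add_nsmul, one_nsmul, add_eq_zero_iff_eq_neg] at hx
  have := kubertV_two_pow_nsmul hodd k
  rw [hneg, kubertV_neg hodd hx0] at this
  linarith

/-- The subgroup of points killed by `F_n - 2 = F_0 ⋯ F_{n-1} = 2 ^ 2 ^ n - 1`. -/
def fermatLevel (n : ℕ) : AddSubgroup RatCircle :=
  (nsmulAddMonoidHom (fermatNumber n - 2)).ker

lemma mem_fermatLevel : x ∈ fermatLevel n ↔ (fermatNumber n - 2) • x = 0 := Iff.rfl

lemma mem_fermatLevel_of_dvd (hmn : m ∣ fermatNumber n - 2) (hx : m • x = 0) :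
    x ∈ fermatLevel n :=
  addOrderOf_dvd_iff_nsmul_eq_zero.1 ((addOrderOf_dvd_of_nsmul_eq_zero hx).trans hmn)

lemma fermatLevel_mono : Monotone fermatLevel := fun m n hmn x hx ↦ by
  refine mem_fermatLevel_of_dvd ?_ hx
  rw [← Nat.prod_fermatNumber, ← Nat.prod_fermatNumber]
  exact prod_dvd_prod_of_subset _ _ _ (range_mono hmn)

lemma fermatNumber_nsmul_eq (hx : x ∈ fermatLevel n) : fermatNumber n • x = 2 • x := by
  rw [← Nat.sub_add_cancel (Nat.two_lt_fermatNumber n).le, add_nsmul, mem_fermatLevel.1 hx,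
    zero_add]

lemma two_pow_two_pow_nsmul_eq_self (hx : x ∈ fermatLevel n) : 2 ^ 2 ^ n • x = x := by
  have := fermatNumber_nsmul_eq hx
  rwa [fermatNumber, add_nsmul, one_nsmul, two_nsmul, add_left_inj] at this

lemma fermatLevel_le_oddTorsion (n : ℕ) : fermatLevel n ≤ oddTorsion := fun _ hx ↦
  mem_oddTorsion_of_two_pow_nsmul_eq_self (Nat.two_pow_pos n) (two_pow_two_pow_nsmul_eq_self hx)

lemma two_pow_nsmul_congr {r s : ℕ} (hx : 2 ^ k • x = x) (hrs : r ≡ s [MOD k]) :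
    2 ^ r • x = 2 ^ s • x := by
  have hper : IsPeriodicPt (2 • ·) k x := isPeriodicPt_two_nsmul_iff.2 hx
  rw [← smul_iterate_apply, ← smul_iterate_apply, ← hper.iterate_mod_apply, hrs,
    hper.iterate_mod_apply]

lemma two_pow_add_one_nsmul {r : ℕ} (hr : r ≡ 2 ^ n [MOD 2 ^ (n + 1)])
    (hx : x ∈ fermatLevel (n + 1)) : (2 ^ r + 1) • x = fermatNumber n • x := by
  rw [fermatNumber, add_nsmul, add_nsmul,
    two_pow_nsmul_congr (two_pow_two_pow_nsmul_eq_self hx) hr]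

/-- The nonzero points of `ℚ/ℤ` killed by the Fermat number `F_n`. -/
noncomputable def fermatTorsion (n : ℕ) : Finset RatCircle := (torsion (fermatNumber n)).erase 0

lemma mem_fermatTorsion : w ∈ fermatTorsion n ↔ w ≠ 0 ∧ fermatNumber n • w = 0 := by
  rw [fermatTorsion, mem_erase, mem_torsion (fermatNumber_pos n)]

lemma cast_card_fermatTorsion (n : ℕ) : (#(fermatTorsion n) : ℚ) = fermatNumber n - 1 := by
  have h0 : (0 : RatCircle) ∈ torsion (fermatNumber n) := by simp [mem_torsion (fermatNumber_pos n)]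
  rw [fermatTorsion, cast_card_erase_of_mem h0, card_torsion]

lemma fermatTorsion_nonempty (n : ℕ) : (fermatTorsion n).Nonempty := by
  rw [← card_pos, ← Nat.cast_pos (α := ℚ), cast_card_fermatTorsion, sub_pos]
  exact_mod_cast one_lt_two.trans (Nat.two_lt_fermatNumber n)

lemma mem_fermatLevel_succ_of_mem_fermatTorsion (hw : w ∈ fermatTorsion n) :
    w ∈ fermatLevel (n + 1) :=
  mem_fermatLevel_of_dvd (fermatNumber_dvd_sub_two n.lt_succ_self) (mem_fermatTorsion.1 hw).2

lemma add_mem_fermatLevel_succ (hy : y ∈ fermatLevel n) (hw : w ∈ fermatTorsion n) :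
    y + w ∈ fermatLevel (n + 1) :=
  add_mem (fermatLevel_mono n.le_succ hy) (mem_fermatLevel_succ_of_mem_fermatTorsion hw)

lemma two_pow_add_one_nsmul_add {r : ℕ} (hr : r ≡ 2 ^ n [MOD 2 ^ (n + 1)])
    (hy : y ∈ fermatLevel n) (hw : w ∈ fermatTorsion n) : (2 ^ r + 1) • (y + w) = 2 • y := by
  rw [two_pow_add_one_nsmul hr (add_mem_fermatLevel_succ hy hw), nsmul_add,
    fermatNumber_nsmul_eq hy, (mem_fermatTorsion.1 hw).2, add_zero]

lemma expect_kubertV_nsmul_add_of_eq (hu : u.Coprime (fermatNumber n)) (hz : z ∈ oddTorsion)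
    (hV : kubertV (fermatNumber n • u • z) = kubertV (u • z)) :
    𝔼 w ∈ fermatTorsion n, kubertV (u • (z + w)) = 1 / 2 := by
  have hcard : (fermatNumber n - 1 : ℚ) ≠ 0 := by
    rw [← cast_card_fermatTorsion]
    exact_mod_cast (card_pos.2 (fermatTorsion_nonempty n)).ne'
  have h0 : (0 : RatCircle) ∈ torsion (fermatNumber n) := by simp [mem_torsion (fermatNumber_pos n)]
  rw [expect_eq_sum_div_card, cast_card_fermatTorsion, fermatTorsion, sum_erase_eq_sub h0,
    sum_torsion_kubertV (Nat.odd_fermatNumber n) hu hz, hV, add_zero]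
  field_simp
  ring

lemma expect_kubertV_nsmul_add (hu : u.Coprime (fermatNumber n)) (hz : z ∈ fermatLevel n) :
    𝔼 w ∈ fermatTorsion n, kubertV (u • (z + w)) = 1 / 2 := by
  refine expect_kubertV_nsmul_add_of_eq hu (fermatLevel_le_oddTorsion n hz) ?_
  rw [nsmul_left_comm, fermatNumber_nsmul_eq hz, nsmul_left_comm, kubertV_two_nsmul]
  exact nsmul_mem (fermatLevel_le_oddTorsion n hz) u

lemma expect_kubertV_neg_nsmul_add (hu : u.Coprime (fermatNumber n)) (hz : z ∈ fermatLevel n) :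
    𝔼 w ∈ fermatTorsion n, kubertV (-(u • (z + w))) = 1 / 2 := by
  rw [← expect_kubertV_nsmul_add hu (neg_mem hz)]
  refine expect_equiv (Equiv.neg _) (fun w ↦ ?_) fun w _ ↦ ?_
  · simp [mem_fermatTorsion]
  · rw [Equiv.neg_apply, ← smul_neg, neg_add]

variable {ι : Type*} {a : ι → ℕ} {i : ι} {A : Finset ι}

lemma exists_mem_oddTorsion_of_expect_lt {f : RatCircle → ℚ} {c : ℚ} (hy : y ∈ oddTorsion)
    (h : 𝔼 w ∈ fermatTorsion n, f (y + w) < c) : ∃ x ∈ oddTorsion, f x < c := by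
  obtain ⟨w, hw, hlt⟩ := exists_lt_of_expect_lt (fermatTorsion_nonempty _) h
  exact ⟨y + w, add_mem hy (fermatLevel_le_oddTorsion _
    (mem_fermatLevel_succ_of_mem_fermatTorsion hw)), hlt⟩

/-- The function `V(2; (a i)_{i ∈ A}; x)` on `ℚ/ℤ`, indexed by a finite set `A`. -/
noncomputable def multiV (a : ι → ℕ) (A : Finset ι) (x : RatCircle) : ℚ :=
  ∑ S ∈ A.powerset, (-1) ^ (#A - #S) * kubertV ((∏ j ∈ S, (2 ^ a j + 1)) • x)

lemma multiV_empty (a : ι → ℕ) (x : RatCircle) : multiV a ∅ x = kubertV x := by simp [multiV]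

lemma multiV_insert [DecidableEq ι] (hi : i ∉ A) (x : RatCircle) :
    multiV a (insert i A) x = multiV a A ((2 ^ a i + 1) • x) - multiV a A x := by
  rw [multiV, sum_powerset_insert hi, card_insert_of_notMem hi, multiV, multiV, add_comm,
    sub_eq_add_neg, ← sum_neg_distrib]
  congr 1 <;> refine sum_congr rfl fun S hS ↦ ?_
  · rw [card_insert_of_notMem fun h ↦ hi (mem_powerset.1 hS h),
      prod_insert fun h ↦ hi (mem_powerset.1 hS h), Nat.add_sub_add_right, mul_comm (2 ^ a i + 1),
      mul_nsmul']
  · rw [Nat.sub_add_comm (card_le_card (mem_powerset.1 hS)), pow_succ]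
    ring

lemma multiV_two_nsmul (hx : x ∈ oddTorsion) : multiV a A (2 • x) = multiV a A x := by
  refine sum_congr rfl fun S _ ↦ ?_
  rw [nsmul_left_comm, kubertV_two_nsmul (nsmul_mem hx _)]

lemma expect_multiV_add_eq_zero (hA : A.Nonempty)
    (hcop : ∀ i ∈ A, (2 ^ a i + 1).Coprime (fermatNumber n))
    (hy : y ∈ fermatLevel n) : 𝔼 w ∈ fermatTorsion n, multiV a A (y + w) = 0 := by
  have havg (S) (hS : S ∈ A.powerset) :
      𝔼 w ∈ fermatTorsion n, kubertV ((∏ j ∈ S, (2 ^ a j + 1)) • (y + w)) = 1 / 2 :=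
    expect_kubertV_nsmul_add (Nat.Coprime.prod_left fun i hi ↦ hcop i (mem_powerset.1 hS hi)) hy
  have hsign : ∑ S ∈ A.powerset, (-1 : ℚ) ^ (#A - #S) = 0 := by
    simpa [hA.ne_empty] using sum_pow_mul_eq_add_pow (1 : ℚ) (-1) A
  simp only [multiV]
  rw [expect_sum_comm]
  simp only [← mul_expect]
  rw [sum_congr rfl fun S hS ↦ by rw [havg S hS], ← sum_mul, hsign, zero_mul]

lemma expect_multiV_insert_add [DecidableEq ι] (hi : i ∉ A) (hA : A.Nonempty)
    (hcop : ∀ i ∈ A, (2 ^ a i + 1).Coprime (fermatNumber n))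
    (hr : a i ≡ 2 ^ n [MOD 2 ^ (n + 1)]) (hy : y ∈ fermatLevel n) :
    𝔼 w ∈ fermatTorsion n, multiV a (insert i A) (y + w) = multiV a A y := by
  have hconst (w) (hw : w ∈ fermatTorsion n) :
      multiV a (insert i A) (y + w) = multiV a A y - multiV a A (y + w) := by
    rw [multiV_insert hi, two_pow_add_one_nsmul_add hr hy hw,
      multiV_two_nsmul (fermatLevel_le_oddTorsion n hy)]
  rw [expect_congr rfl hconst, expect_sub_distrib, expect_multiV_add_eq_zero hA hcop hy, sub_zero,
    expect_const (fermatTorsion_nonempty n)]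

lemma expect_kubertV_neg_add (hz : z ∈ fermatLevel n) :
    𝔼 w ∈ fermatTorsion n, kubertV (-(z + w)) = 1 / 2 := by
  simpa using expect_kubertV_neg_nsmul_add (Nat.coprime_one_left _) hz

-- Dividing by `2 ^ k + 1` keeps the digits and doubles the period.
lemma kubertV_coe_div_mul {a : ℕ} (hk : 0 < k) (ha : a < 2 ^ k - 1) :
    kubertV ((a / ((2 ^ k - 1) * (2 ^ k + 1)) : ℚ) : RatCircle)
      = kubertV ((a / (2 ^ k - 1) : ℚ) : RatCircle) / 2 := by
  have hpow : ((2 : ℚ) ^ k - 1) * (2 ^ k + 1) = 2 ^ (k * 2) - 1 := by ring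
  have ha' : a < 2 ^ (k * 2) - 1 :=
    ha.trans_le <| Nat.sub_le_sub_right (Nat.pow_le_pow_right two_pos (by lia)) 1
  rw [hpow, kubertV_coe_div hk ha, kubertV_coe_div (by lia) ha']
  push_cast
  ring

lemma kubertV_of_mem_fermatTorsion (hw : w ∈ fermatTorsion n) : kubertV w = 1 / 2 :=
  kubertV_eq_half (Nat.two_pow_pos n).ne' (mem_fermatTorsion.1 hw).2 (mem_fermatTorsion.1 hw).1

lemma nsmul_mem_fermatTorsion (hu : u.Coprime (fermatNumber n)) (hw : w ∈ fermatTorsion n) :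
    u • w ∈ fermatTorsion n := by
  obtain ⟨hw0, hw⟩ := mem_fermatTorsion.1 hw
  exact mem_fermatTorsion.2 ⟨fun h ↦ hw0 (eq_zero_of_coprime_nsmul_eq_zero hu h hw),
    by rw [nsmul_left_comm, hw, nsmul_zero]⟩

lemma nsmul_eq_zero_of_mem_fermatTorsion (hu : fermatNumber n ∣ u) (hw : w ∈ fermatTorsion n) :
    u • w = 0 :=
  addOrderOf_dvd_iff_nsmul_eq_zero.1
    ((addOrderOf_dvd_of_nsmul_eq_zero (mem_fermatTorsion.1 hw).2).trans hu)

lemma addOrderOf_one_div (hn : 0 < n) : addOrderOf ((1 / n : ℚ) : RatCircle) = n :=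
  AddCircle.addOrderOf_period_div hn

lemma one_div_mem_fermatTorsion (n : ℕ) :
    ((1 / fermatNumber n : ℚ) : RatCircle) ∈ fermatTorsion n := by
  have hord := addOrderOf_one_div (fermatNumber_pos n)
  refine mem_fermatTorsion.2 ⟨fun h ↦ ?_, addOrderOf_dvd_iff_nsmul_eq_zero.1 hord.dvd⟩
  have := Nat.two_lt_fermatNumber n
  rw [h, addOrderOf_zero] at hord
  lia

lemma kubertV_one_div_mul (hmn : m ≠ n) :
    kubertV ((1 / (fermatNumber m * fermatNumber n) : ℚ) : RatCircle) = 1 / 4 := by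
  wlog hlt : m < n generalizing m n
  · rw [mul_comm]
    exact this hmn.symm (by lia)
  obtain ⟨c, hc⟩ := fermatNumber_dvd_sub_two hlt
  have hpow : fermatNumber n - 2 = 2 ^ 2 ^ n - 1 := by simp [fermatNumber]
  have hcpos : 0 < c := Nat.pos_of_ne_zero fun h ↦ by
    have := Nat.two_lt_fermatNumber n
    simp only [h, mul_zero] at hc
    lia
  have hclt : c < 2 ^ 2 ^ n - 1 := by
    rw [← hpow, hc]
    exact lt_mul_of_one_lt_left hcpos (one_lt_two.trans (Nat.two_lt_fermatNumber m))
  have hmc : (2 : ℚ) ^ 2 ^ n - 1 = fermatNumber m * c := by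
    rw [← Nat.cast_mul, ← hc, hpow]; simp [Nat.cast_sub Nat.one_le_two_pow]
  have hm0 : (fermatNumber m : ℚ) ≠ 0 := by exact_mod_cast (fermatNumber_pos m).ne'
  have hc0 : (c : ℚ) ≠ 0 := by exact_mod_cast hcpos.ne'
  have hhalf := kubertV_coe_div_mul (Nat.two_pow_pos n) hclt
  have hn : (2 : ℚ) ^ 2 ^ n + 1 = fermatNumber n := by simp [fermatNumber]
  rw [hn, hmc, show (c : ℚ) / (fermatNumber m * c) = 1 / fermatNumber m by field_simp,
    show (c : ℚ) / (fermatNumber m * c * fermatNumber n) = 1 / (fermatNumber m * fermatNumber n) by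
      field_simp, kubertV_of_mem_fermatTorsion (one_div_mem_fermatTorsion m)] at hhalf
  rw [hhalf]; norm_num

lemma nsmul_coe_one_div_mul (hm : m ≠ 0) (n : ℕ) :
    m • ((1 / (m * n) : ℚ) : RatCircle) = ((1 / n : ℚ) : RatCircle) := by
  have : (m : ℚ) ≠ 0 := by exact_mod_cast hm
  rw [← AddCircle.coe_nsmul, nsmul_eq_mul]
  congr 1
  field_simp

lemma nsmul_mem_fermatTorsion_of_dvd (hmu : m ∣ u) (hu : u.Coprime (fermatNumber n))
    (hx : m • x ∈ fermatTorsion n) : u • x ∈ fermatTorsion n := by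
  obtain ⟨c, rfl⟩ := hmu
  rw [mul_comm, mul_nsmul']
  exact nsmul_mem_fermatTorsion hu.coprime_mul_left hx

lemma exists_kubertV_eq_quarter {L N : ℕ} (hmn : m ≠ n) (hL : fermatNumber m ∣ L)
    (hN : fermatNumber n ∣ N) (hLn : L.Coprime (fermatNumber n))
    (hNm : N.Coprime (fermatNumber m)) :
    ∃ q ∈ fermatLevel (max m n + 1),
      L • q ∈ fermatTorsion n ∧ N • q ∈ fermatTorsion m ∧ kubertV q = 1 / 4 := by
  set q : RatCircle := ((1 / (fermatNumber m * fermatNumber n) : ℚ) : RatCircle) with hq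
  have hmq : fermatNumber m • q ∈ fermatTorsion n := by
    rw [hq, nsmul_coe_one_div_mul (fermatNumber_pos m).ne']
    exact one_div_mem_fermatTorsion n
  have hnq : fermatNumber n • q ∈ fermatTorsion m := by
    rw [hq, mul_comm, nsmul_coe_one_div_mul (fermatNumber_pos n).ne']
    exact one_div_mem_fermatTorsion m
  refine ⟨q, mem_fermatLevel_of_dvd (m := fermatNumber m * fermatNumber n) ?_ ?_,
    nsmul_mem_fermatTorsion_of_dvd hL hLn hmq, nsmul_mem_fermatTorsion_of_dvd hN hNm hnq,
    kubertV_one_div_mul hmn⟩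
  · exact (Nat.coprime_fermatNumber_fermatNumber hmn).mul_dvd_of_dvd_of_dvd
      (fermatNumber_dvd_sub_two (by lia)) (fermatNumber_dvd_sub_two (by lia))
  · rw [mul_nsmul', (mem_fermatTorsion.1 hnq).2]

lemma multiV_singleton (a : ι → ℕ) (i : ι) (x : RatCircle) :
    multiV a {i} x = kubertV ((2 ^ a i + 1) • x) - kubertV x := by
  classical
  rw [← insert_empty_eq, multiV_insert (notMem_empty i), multiV_empty, multiV_empty]

/-- The quantity `V(2; (a i)_{i ∈ A}; x) + V(-(2 ^ b + 1) x) - V(-x)` on `ℚ/ℤ`. -/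
noncomputable def twistedMultiV (a : ι → ℕ) (b : ℕ) (A : Finset ι) (x : RatCircle) : ℚ :=
  multiV a A x + kubertV (-((2 ^ b + 1) • x)) - kubertV (-x)

/-- A family of exponents `a i` with pairwise coprime numbers `2 ^ a i + 1`, where `v i` is the
`2`-adic valuation of `a i`, expressed by a congruence. -/
structure IsCoprimeFamily (a v : ι → ℕ) : Prop where
  modEq (i : ι) : a i ≡ 2 ^ v i [MOD 2 ^ (v i + 1)]
  coprime : Pairwise fun i j ↦ (2 ^ a i + 1).Coprime (2 ^ a j + 1)

namespace IsCoprimeFamily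

variable {v : ι → ℕ} {b : ℕ} {j : ι}

lemma fermatNumber_dvd (h : IsCoprimeFamily a v) (i : ι) : fermatNumber (v i) ∣ 2 ^ a i + 1 :=
  fermatNumber_dvd_two_pow_add_one (h.modEq i)

lemma coprime_fermatNumber (h : IsCoprimeFamily a v) (hij : i ≠ j) :
    (2 ^ a i + 1).Coprime (fermatNumber (v j)) :=
  (h.coprime hij).coprime_dvd_right (h.fermatNumber_dvd j)

lemma injective (h : IsCoprimeFamily a v) : Injective v := fun i j hij ↦ by_contra fun hne ↦ by
  have hone := Nat.Coprime.eq_one_of_dvd (h.coprime_fermatNumber hne).symm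
    (hij ▸ h.fermatNumber_dvd i)
  have := Nat.two_lt_fermatNumber (v j)
  lia

lemma exists_kubertV_nsmul_eq_quarter {k : ι} (h : IsCoprimeFamily a v) (hij : i ≠ j)
    (hjk : j ≠ k) (hvik : v i < v k) : ∃ z ∈ fermatLevel (v k + 1),
      (2 ^ a i + 1) • z ∈ fermatTorsion (v k) ∧
      (2 ^ a k + 1) • (2 ^ a j + 1) • z ∈ fermatTorsion (v i) ∧
      kubertV ((2 ^ a j + 1) • z) = 1 / 4 := by
  have hik : i ≠ k := fun h ↦ hvik.ne (congrArg v h)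
  obtain ⟨q, hq, hiq, hkq, hquarter⟩ := exists_kubertV_eq_quarter hvik.ne
    (h.fermatNumber_dvd i) (h.fermatNumber_dvd k) (h.coprime_fermatNumber hik)
    (h.coprime_fermatNumber hik.symm)
  rw [max_eq_right hvik.le] at hq
  have hikq : ((2 ^ a k + 1) * (2 ^ a i + 1)) • q = 0 := by
    rw [mul_nsmul', nsmul_eq_zero_of_mem_fermatTorsion (h.fermatNumber_dvd k) hiq]
  have hcop : (2 ^ a j + 1).Coprime (addOrderOf q) :=
    ((h.coprime hjk).mul_right (h.coprime hij.symm)).coprime_dvd_right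
      (addOrderOf_dvd_of_nsmul_eq_zero hikq)
  obtain ⟨p, hp⟩ := exists_nsmul_eq_self_of_coprime hcop
  rw [nsmul_left_comm] at hp
  obtain ⟨hiq0, hiq⟩ := mem_fermatTorsion.1 hiq
  -- `z = p • q` is the preimage of `q` under `2 ^ a j + 1` in the subgroup generated by `q`
  refine ⟨p • q, nsmul_mem hq p, mem_fermatTorsion.2 ⟨fun h0 ↦ hiq0 ?_, ?_⟩, by rwa [hp],
    by rwa [hp]⟩
  · rw [← hp, nsmul_left_comm, h0, nsmul_zero]
  · rw [nsmul_left_comm _ p, nsmul_left_comm _ p, hiq, nsmul_zero]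

lemma exists_insert_sup_le [DecidableEq ι] (h : IsCoprimeFamily a v) (hA : A.Nonempty) :
    ∃ i B, i ∉ B ∧ insert i B = A ∧ (B.sup fun j ↦ v j + 1) ≤ v i := by
  obtain ⟨i, hi, hmax⟩ := A.exists_max_image v hA
  refine ⟨i, A.erase i, notMem_erase i A, insert_erase hi, Finset.sup_le fun j hj ↦ ?_⟩
  obtain ⟨hne, hj⟩ := mem_erase.1 hj
  exact (hmax j hj).lt_of_ne (h.injective.ne hne)

lemma exists_multiV_pair_lt [DecidableEq ι] (h : IsCoprimeFamily a v) (hij : i ≠ j) :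
    ∃ y ∈ fermatLevel (({i, j} : Finset ι).sup fun k ↦ v k + 1), multiV a {i, j} y < -1 / 2 := by
  obtain ⟨q, hq, hiq, hjq, hquarter⟩ := exists_kubertV_eq_quarter (h.injective.ne hij)
    (h.fermatNumber_dvd i) (h.fermatNumber_dvd j) (h.coprime_fermatNumber hij)
    (h.coprime_fermatNumber hij.symm)
  refine ⟨q, by simpa [← max_add] using hq, ?_⟩
  rw [multiV_insert (by simpa using hij), multiV_singleton, multiV_singleton, hquarter,
    nsmul_eq_zero_of_mem_fermatTorsion (h.fermatNumber_dvd j) hiq, kubertV_zero,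
    kubertV_of_mem_fermatTorsion hiq, kubertV_of_mem_fermatTorsion hjq]
  norm_num

lemma expect_multiV_insert_add [DecidableEq ι] (h : IsCoprimeFamily a v) (hi : i ∉ A)
    (hA : A.Nonempty) (hy : y ∈ fermatLevel (v i)) :
    𝔼 w ∈ fermatTorsion (v i), multiV a (insert i A) (y + w) = multiV a A y :=
  RatCircle.expect_multiV_insert_add hi hA
    (fun _ hj ↦ h.coprime_fermatNumber (ne_of_mem_of_not_mem hj hi)) (h.modEq i) hy

lemma add_mem_fermatLevel_sup [DecidableEq ι] (hy : y ∈ fermatLevel (v i))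
    (hw : w ∈ fermatTorsion (v i)) :
    y + w ∈ fermatLevel ((insert i A).sup fun j ↦ v j + 1) :=
  fermatLevel_mono (le_sup (f := fun j ↦ v j + 1) (mem_insert_self i A))
    (add_mem_fermatLevel_succ hy hw)

lemma exists_multiV_lt (h : IsCoprimeFamily a v) (hA : 2 ≤ #A) :
    ∃ y ∈ fermatLevel (A.sup fun i ↦ v i + 1), multiV a A y < -1 / 2 := by
  classical
  induction A using Finset.strongInduction with
  | H A ih =>
    obtain ⟨i, B, hi, rfl, hsup⟩ := h.exists_insert_sup_le (card_pos.1 (two_pos.trans_le hA))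
    rw [card_insert_of_notMem hi] at hA
    obtain hB | hB : #B = 1 ∨ 2 ≤ #B := by lia
    · obtain ⟨j, rfl⟩ := card_eq_one.1 hB
      exact h.exists_multiV_pair_lt (by simpa using hi)
    · obtain ⟨y, hy, hlt⟩ := ih B (ssubset_insert hi) hB
      have hy : y ∈ fermatLevel (v i) := fermatLevel_mono hsup hy
      rw [← h.expect_multiV_insert_add hi (card_pos.1 (by lia)) hy] at hlt
      obtain ⟨w, hw, hlt⟩ := exists_lt_of_expect_lt (fermatTorsion_nonempty _) hlt
      exact ⟨y + w, add_mem_fermatLevel_sup hy hw, hlt⟩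

lemma exists_multiV_add_kubertV_neg_lt_zero (h : IsCoprimeFamily a v) (hA : 3 ≤ #A) :
    ∃ y ∈ fermatLevel (A.sup fun i ↦ v i + 1), multiV a A y + kubertV (-y) < 0 := by
  classical
  obtain ⟨i, B, hi, rfl, hsup⟩ := h.exists_insert_sup_le (card_pos.1 (three_pos.trans_le hA))
  rw [card_insert_of_notMem hi] at hA
  obtain ⟨y, hy, hlt⟩ := h.exists_multiV_lt (A := B) (by lia)
  have hy : y ∈ fermatLevel (v i) := fermatLevel_mono hsup hy
  have havg : 𝔼 w ∈ fermatTorsion (v i),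
      (multiV a (insert i B) (y + w) + kubertV (-(y + w))) < 0 := by
    rw [expect_add_distrib, h.expect_multiV_insert_add hi (card_pos.1 (by lia)) hy,
      expect_kubertV_neg_add hy]
    linarith
  obtain ⟨w, hw, hlt⟩ := exists_lt_of_expect_lt (fermatTorsion_nonempty _) havg
  exact ⟨y + w, add_mem_fermatLevel_sup hy hw, hlt⟩

lemma expect_twistedMultiV_insert_add_of_coprime [DecidableEq ι] (h : IsCoprimeFamily a v)
    (hi : i ∉ A) (hA : A.Nonempty) (hy : y ∈ fermatLevel (v i))
    (hb : (2 ^ b + 1).Coprime (fermatNumber (v i))) :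
    𝔼 w ∈ fermatTorsion (v i), twistedMultiV a b (insert i A) (y + w) = multiV a A y := by
  simp only [twistedMultiV]
  rw [expect_sub_distrib, expect_add_distrib, h.expect_multiV_insert_add hi hA hy,
    expect_kubertV_neg_nsmul_add hb hy, expect_kubertV_neg_add hy, add_sub_cancel_right]

lemma expect_twistedMultiV_insert_add_of_modEq [DecidableEq ι] (h : IsCoprimeFamily a v)
    (hi : i ∉ A) (hA : A.Nonempty) (hy : y ∈ fermatLevel (v i))
    (hb : b ≡ 2 ^ v i [MOD 2 ^ (v i + 1)]) :
    𝔼 w ∈ fermatTorsion (v i), twistedMultiV a b (insert i A) (y + w)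
      = multiV a A y + kubertV (-y) - 1 / 2 := by
  have hconst (w) (hw : w ∈ fermatTorsion (v i)) :
      kubertV (-((2 ^ b + 1) • (y + w))) = kubertV (-y) := by
    rw [two_pow_add_one_nsmul_add hb hy hw, ← smul_neg,
      kubertV_two_nsmul (neg_mem (fermatLevel_le_oddTorsion _ hy))]
  simp only [twistedMultiV]
  rw [expect_sub_distrib, expect_add_distrib, h.expect_multiV_insert_add hi hA hy,
    expect_congr rfl hconst, expect_const (fermatTorsion_nonempty _), expect_kubertV_neg_add hy]

lemma twistedMultiV_triple_eq [DecidableEq ι] {k : ι} (h : IsCoprimeFamily a v) (hij : i ≠ j)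
    (hik : i ≠ k) (hjk : j ≠ k) (hb : b ≡ 2 ^ v k [MOD 2 ^ (v k + 1)])
    (hx : x ∈ fermatLevel (v k + 1))
    (hji : (2 ^ a j + 1) • (2 ^ a i + 1) • x ∈ fermatTorsion (v k))
    (hkj : (2 ^ a k + 1) • (2 ^ a j + 1) • x ∈ fermatTorsion (v i))
    (hki : (2 ^ a k + 1) • (2 ^ a i + 1) • x ∈ fermatTorsion (v j))
    (hquarter : kubertV ((2 ^ a j + 1) • x) = 1 / 4) :
    twistedMultiV a b {i, j, k} x = kubertV ((2 ^ a i + 1) • x) - 5 / 4 := by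
  have hodd : x ∈ oddTorsion := fermatLevel_le_oddTorsion _ hx
  have hkx : (2 ^ a k + 1) • x ≠ 0 := fun h0 ↦ (mem_fermatTorsion.1 hkj).1 <| by
    rw [nsmul_left_comm, h0, nsmul_zero]
  have hx0 : x ≠ 0 := by rintro rfl; exact hkx (nsmul_zero _)
  have hbk : (2 ^ b + 1) • x = (2 ^ a k + 1) • x := by
    rw [two_pow_add_one_nsmul hb hx, two_pow_add_one_nsmul (h.modEq k) hx]
  have hkji : (2 ^ a k + 1) • (2 ^ a j + 1) • (2 ^ a i + 1) • x = 0 :=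
    nsmul_eq_zero_of_mem_fermatTorsion (h.fermatNumber_dvd k) hji
  rw [twistedMultiV, hbk, kubertV_neg (nsmul_mem hodd _) hkx, kubertV_neg hodd hx0,
    multiV_insert (by simp [hij, hik]), multiV_insert (by simpa using hjk),
    multiV_insert (by simpa using hjk)]
  simp only [multiV_singleton]
  rw [hkji, kubertV_zero, kubertV_of_mem_fermatTorsion hji, kubertV_of_mem_fermatTorsion hkj,
    kubertV_of_mem_fermatTorsion hki, hquarter]
  ring

lemma twistedMultiV_triple_add_eq [DecidableEq ι] {e : RatCircle} {k : ι}
    (h : IsCoprimeFamily a v) (hij : i ≠ j) (hik : i ≠ k) (hvjk : v j < v k)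
    (hb : b ≡ 2 ^ v k [MOD 2 ^ (v k + 1)]) (hz : z ∈ fermatLevel (v k + 1))
    (hiz : (2 ^ a i + 1) • z ∈ fermatTorsion (v k))
    (hkjz : (2 ^ a k + 1) • (2 ^ a j + 1) • z ∈ fermatTorsion (v i))
    (hquarter : kubertV ((2 ^ a j + 1) • z) = 1 / 4) (he : e ∈ fermatTorsion (v j)) :
    twistedMultiV a b {i, j, k} (z + e) = kubertV ((2 ^ a i + 1) • (z + e)) - 5 / 4 := by
  have hjk : j ≠ k := fun h ↦ hvjk.ne (congrArg v h)
  have hj : (2 ^ a j + 1) • (z + e) = (2 ^ a j + 1) • z := by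
    rw [nsmul_add, nsmul_eq_zero_of_mem_fermatTorsion (h.fermatNumber_dvd j) he, add_zero]
  have hki : (2 ^ a k + 1) • (2 ^ a i + 1) • (z + e) = (2 ^ a k + 1) • (2 ^ a i + 1) • e := by
    rw [nsmul_add, nsmul_add, nsmul_eq_zero_of_mem_fermatTorsion (h.fermatNumber_dvd k) hiz,
      zero_add]
  refine h.twistedMultiV_triple_eq hij hik hjk hb (add_mem hz ?_) ?_ ?_ ?_ ?_
  · exact fermatLevel_mono (by lia) (mem_fermatLevel_succ_of_mem_fermatTorsion he)
  · rw [nsmul_left_comm, hj, nsmul_left_comm]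
    exact nsmul_mem_fermatTorsion (h.coprime_fermatNumber hjk) hiz
  · rwa [hj]
  · rw [hki]
    exact nsmul_mem_fermatTorsion (h.coprime_fermatNumber hjk.symm)
      (nsmul_mem_fermatTorsion (h.coprime_fermatNumber hij) he)
  · rwa [hj]

lemma exists_twistedMultiV_triple_lt [DecidableEq ι] {k : ι} (h : IsCoprimeFamily a v)
    (hij : i ≠ j) (hvik : v i < v k) (hvjk : v j < v k)
    (hb : b ≡ 2 ^ v k [MOD 2 ^ (v k + 1)]) :
    ∃ x ∈ oddTorsion, twistedMultiV a b {i, j, k} x < -1 / 2 := by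
  have hik : i ≠ k := fun h ↦ hvik.ne (congrArg v h)
  have hjk : j ≠ k := fun h ↦ hvjk.ne (congrArg v h)
  obtain ⟨z, hz, hiz, hkjz, hquarter⟩ := h.exists_kubertV_nsmul_eq_quarter hij hjk hvik
  have hodd : z ∈ oddTorsion := fermatLevel_le_oddTorsion _ hz
  have hjiz : fermatNumber (v j) • (2 ^ a i + 1) • z ∈ fermatTorsion (v k) :=
    nsmul_mem_fermatTorsion (Nat.coprime_fermatNumber_fermatNumber hvjk.ne) hiz
  have havg : 𝔼 e ∈ fermatTorsion (v j), kubertV ((2 ^ a i + 1) • (z + e)) = 1 / 2 :=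
    expect_kubertV_nsmul_add_of_eq (h.coprime_fermatNumber hij) hodd <| by
      rw [kubertV_of_mem_fermatTorsion hjiz, kubertV_of_mem_fermatTorsion hiz]
  refine exists_mem_oddTorsion_of_expect_lt (n := v j) hodd ?_
  rw [expect_congr rfl fun e he ↦
      h.twistedMultiV_triple_add_eq hij hik hvjk hb hz hiz hkjz hquarter he,
    expect_sub_distrib, havg, expect_const (fermatTorsion_nonempty _)]
  norm_num

lemma exists_twistedMultiV_lt (h : IsCoprimeFamily a v) (hA : 3 ≤ #A) (b : ℕ) :
    ∃ x ∈ oddTorsion, twistedMultiV a b A x < -1 / 2 := by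
  classical
  obtain ⟨k, B, hk, rfl, hsup⟩ := h.exists_insert_sup_le (card_pos.1 (three_pos.trans_le hA))
  rw [card_insert_of_notMem hk] at hA
  have hB : B.Nonempty := card_pos.1 (by lia)
  obtain hb | hb := coprime_fermatNumber_or_modEq b (v k)
  · obtain ⟨y, hy, hlt⟩ := h.exists_multiV_lt (A := B) (by lia)
    have hy : y ∈ fermatLevel (v k) := fermatLevel_mono hsup hy
    refine exists_mem_oddTorsion_of_expect_lt (fermatLevel_le_oddTorsion _ hy) (n := v k) ?_
    rwa [h.expect_twistedMultiV_insert_add_of_coprime hk hB hy hb]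
  obtain hcard | hcard : #B = 2 ∨ 3 ≤ #B := by lia
  · obtain ⟨i, j, hij, rfl⟩ := card_eq_two.1 hcard
    have hv : v i < v k ∧ v j < v k := by simpa [Nat.succ_le_iff] using hsup
    rw [show insert k {i, j} = ({i, j, k} : Finset ι) by grind]
    exact h.exists_twistedMultiV_triple_lt hij hv.1 hv.2 hb
  · obtain ⟨y, hy, hlt⟩ := h.exists_multiV_add_kubertV_neg_lt_zero hcard
    have hy : y ∈ fermatLevel (v k) := fermatLevel_mono hsup hy
    refine exists_mem_oddTorsion_of_expect_lt (fermatLevel_le_oddTorsion _ hy) (n := v k) ?_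
    rw [h.expect_twistedMultiV_insert_add_of_modEq hk hB hy hb]
    linarith

end IsCoprimeFamily

lemma vmulti_eq_multiV {V : ℚ → ℚ} (hV : IsV2 V) {t : ℕ} (a : Fin t → ℕ) {x : ℚ}
    (hx : (x : RatCircle) ∈ oddTorsion) : Vmulti V a x = multiV a univ x := by
  rw [Vmulti, multiV, powerset_univ, card_univ, Fintype.card_fin]
  refine sum_congr rfl fun S _ ↦ ?_
  have hcoe : (((∏ j ∈ S, ((2 : ℚ) ^ a j + 1)) * x : ℚ) : RatCircle)
      = (∏ j ∈ S, (2 ^ a j + 1)) • (x : RatCircle) := by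
    rw [← AddCircle.coe_nsmul, nsmul_eq_mul]
    push_cast
    rfl
  rw [hV.apply_eq_kubertV (hcoe ▸ nsmul_mem hx _), hcoe]

lemma vmulti_add_sub_eq_twistedMultiV {V : ℚ → ℚ} (hV : IsV2 V) {t : ℕ} (a : Fin t → ℕ) (b : ℕ)
    {x : ℚ} (hx : (x : RatCircle) ∈ oddTorsion) :
    Vmulti V a x + V (-(((2 : ℚ) ^ b + 1) * x)) - V (-x) = twistedMultiV a b univ x := by
  have hcoe : ((-(((2 : ℚ) ^ b + 1) * x) : ℚ) : RatCircle)
      = -((2 ^ b + 1) • (x : RatCircle)) := by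
    rw [← AddCircle.coe_nsmul, ← AddCircle.coe_neg, nsmul_eq_mul]
    push_cast
    rfl
  rw [twistedMultiV, vmulti_eq_multiV hV a hx,
    hV.apply_eq_kubertV (hcoe ▸ neg_mem (nsmul_mem hx _)), hcoe,
    hV.apply_eq_kubertV (AddCircle.coe_neg (p := (1 : ℚ)) ▸ neg_mem hx), AddCircle.coe_neg]

end RatCircle

open RatCircle in
theorem stmt_12_general (V : ℚ → ℚ) (hV : IsV2 V) (t : ℕ) (ht : 3 ≤ t) (a : Fin t → ℕ)
    (hpos : ∀ j, 0 < a j) (hcop : ∀ j k, j ≠ k → Nat.Coprime (2 ^ a j + 1) (2 ^ a k + 1))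
    (b : ℕ) :
    ∃ x : ℚ, Odd x.den ∧
      Vmulti V a x + V (-(((2 : ℚ) ^ b + 1) * x)) - V (-x) < -(1 / 2) := by
  choose v hv using fun j ↦ exists_modEq_two_pow (hpos j).ne'
  have h : IsCoprimeFamily a v := ⟨hv, hcop⟩
  obtain ⟨x, hx, hlt⟩ := h.exists_twistedMultiV_lt (A := Finset.univ) (by simpa using ht) b
  rw [← coe_frac x] at hx hlt
  refine ⟨frac x, coe_mem_oddTorsion.1 hx, ?_⟩
  rwa [vmulti_add_sub_eq_twistedMultiV hV a b hx, ← neg_div]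

/-- For `t ≥ 3`, positive integers `a₁ > a₂ > ⋯ > a_t` with `2^{a_j}+1` pairwise coprime,
and a positive integer `b` with `gcd(2^b+1, 2^{a₁}+1) = 1`, there is a rational `x`
with odd denominator such that `V(2; a₁, …, a_t; x) + V(-(2^b+1)x) - V(-x) < -1/2`. -/
theorem stmt_12 (V : ℚ → ℚ) (hV : IsV2 V) (t : ℕ) (ht : 3 ≤ t)
    (a : Fin t → ℕ) (hpos : ∀ j, 0 < a j) (hanti : StrictAnti a)
    (hcop : ∀ j k, j ≠ k → Nat.Coprime (2 ^ a j + 1) (2 ^ a k + 1))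
    (b : ℕ) (hb : 0 < b)
    (hbcop : Nat.Coprime (2 ^ b + 1) (2 ^ a ⟨0, by omega⟩ + 1)) :
    ∃ x : ℚ, Odd x.den ∧
      Vmulti V a x + V (-(((2 : ℚ) ^ b + 1) * x)) - V (-x) < -(1 / 2) :=
  stmt_12_general V hV t ht a hpos hcop b
end

section
/- Let t ≥ 3 and let a_1 > a_2 > ⋯ > a_t be positive integers such that the numbers 2^{a_1}+1, …, 2^{a_t}+1 are pairwise coprime. Then there exists a rational number x with odd denominator such that V(2; a_1, …, a_t; x) + V(−x) < 0. -/
/-!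
On `ℚ / ℤ` the function `V` is the mean of the fractional part over a period of doubling. It
satisfies `V (2x) = V x`, `V x + V (-x) = 1` for `x ≠ 0`, and, for a subgroup `H` of odd order `N`,
the distribution relation `∑ w ∈ H, V (z + w) = V (N z) + (N - 1) / 2`. Write `d i = 2 ^ a i + 1`
and let `v i` be the 2-adic valuation of `a i`. The Fermat number `F = F_{v m}` divides `d m`, so
the coprimality assumption makes `v` injective and `F` coprime to the other `d i`.

Let `v m` exceed the other valuations and let `x` be fixed by `2 ^ 2 ^ v m`, so that `d m` and `F`
both act on `x` as `2`. If `H` is the `F`-torsion, the mixed difference over `insert m T` at `x + w`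
equals the one over `T` at `x` minus the one over `T` at `x + w`; by the distribution relation its
mean over the nonzero `w ∈ H` is the mixed difference over `T` at `x`. Hence a value below `-1/2`
over `T` yields one over `insert m T`, and, as `V (-(x + w))` has mean `1/2` over the nonzero `w`,
also a point where the mixed difference plus `V (-·)` is negative. For two indices with
`v i < v j` one takes `x = 1 / (F_{v i} F_{v j})`: both `d i x` and `d j x` have `V = 1/2`, and
`V x < 1/2` because the first half of the binary period of `x` consists of zeros.
-/

open Finset

section MixedDifference

variable {ι A R : Type*} [AddCommGroup A]

/-- The mixed difference of `f` along multiplication by the integers `P i`, `i ∈ T`: the result of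
applying to `f` the operators `g ↦ (x ↦ g (P i • x) - g x)` for all `i ∈ T`, expanded over subsets
of `T`. -/
def mixedDiff [Ring R] (f : A → R) (P : ι → ℕ) (T : Finset ι) (x : A) : R :=
  ∑ S ∈ T.powerset, (-1) ^ (#T - #S) * f ((∏ i ∈ S, P i) • x)

section Ring

variable [Ring R] {f : A → R} {P : ι → ℕ} {T : Finset ι} {m : ι}

lemma mixedDiff_empty (x : A) : mixedDiff f P ∅ x = f x := by
  simp [mixedDiff]

lemma mixedDiff_insert [DecidableEq ι] (hm : m ∉ T) (x : A) :
    mixedDiff f P (insert m T) x = mixedDiff f P T (P m • x) - mixedDiff f P T x := by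
  rw [mixedDiff, sum_powerset_insert hm, add_comm, sub_eq_add_neg, mixedDiff, mixedDiff,
    ← sum_neg_distrib]
  congr 1 <;> refine sum_congr rfl fun S hS ↦ ?_ <;> rw [mem_powerset] at hS
  · have hmS : m ∉ S := fun h ↦ hm (hS h)
    rw [card_insert_of_notMem hm, card_insert_of_notMem hmS, Nat.add_sub_add_right,
      prod_insert hmS, mul_comm (P m), mul_nsmul']
  · rw [card_insert_of_notMem hm, Nat.sub_add_comm (card_le_card hS), pow_succ, mul_neg_one,
      neg_mul]

lemma mixedDiff_pair [DecidableEq ι] {i j : ι} (hij : i ≠ j) (x : A) :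
    mixedDiff f P {i, j} x = f ((P i * P j) • x) - f (P i • x) - (f (P j • x) - f x) := by
  simp only [← insert_empty_eq j, mixedDiff_insert (notMem_empty j), mixedDiff_empty,
    mixedDiff_insert (T := insert j ∅) (m := i) (by simpa using hij), mul_nsmul']
  rw [← mul_nsmul', mul_comm, mul_nsmul']

lemma mixedDiff_const_eq_zero (c : R) (P : ι → ℕ) (hT : T.Nonempty) (x : A) :
    mixedDiff (fun _ ↦ c) P T x = 0 := by
  classical
  obtain ⟨i, hi⟩ := hT
  rw [← insert_erase hi, mixedDiff_insert (notMem_erase i T)]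
  exact sub_self _

lemma mixedDiff_nsmul_of_invariant {k : ℕ} {x : A} (h : ∀ n : ℕ, f (k • n • x) = f (n • x)) :
    mixedDiff f P T (k • x) = mixedDiff f P T x := by
  simp only [mixedDiff, fun n : ℕ ↦ smul_comm n k x, h]

lemma sum_mixedDiff_add_of_distribution (H : AddSubgroup A) [Fintype H] {C : R}
    (hf : ∀ z, ∑ w : H, f (z + w) = f (Nat.card H • z) + C)
    (hcop : ∀ i ∈ T, (Nat.card H).Coprime (P i)) (hT : T.Nonempty) (x : A) :
    ∑ w : H, mixedDiff f P T (x + w) = mixedDiff f P T (Nat.card H • x) := by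
  have sum_translate {S : Finset ι} (hS : S ∈ T.powerset) :
      ∑ w : H, f ((∏ i ∈ S, P i) • (x + w)) =
        f ((∏ i ∈ S, P i) • (Nat.card H • x)) + C := by
    have hS' : (Nat.card H).Coprime (∏ i ∈ S, P i) :=
      Nat.Coprime.prod_right fun i hi ↦ hcop i (mem_powerset.mp hS hi)
    rw [smul_comm, ← hf, ← Equiv.sum_comp (nsmulCoprime hS') fun w : H ↦ f (_ + (w : A))]
    simp [smul_add]
  calc ∑ w : H, mixedDiff f P T (x + w)
      = ∑ S ∈ T.powerset, (-1) ^ (#T - #S) * ∑ w : H, f ((∏ i ∈ S, P i) • (x + w)) := by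
        simp only [mixedDiff, mul_sum]
        exact sum_comm
    _ = ∑ S ∈ T.powerset, (-1) ^ (#T - #S) * (f ((∏ i ∈ S, P i) • (Nat.card H • x)) + C) :=
        sum_congr rfl fun S hS ↦ by rw [sum_translate hS]
    _ = mixedDiff f P T (Nat.card H • x) + mixedDiff (fun _ ↦ C) P T x := by
        simp only [mixedDiff, mul_add, sum_add_distrib]
    _ = mixedDiff f P T (Nat.card H • x) := by
        rw [mixedDiff_const_eq_zero C P hT, add_zero]

end Ring

lemma exists_mixedDiff_insert_add_lt_zero [Field R] [LinearOrder R] [IsStrictOrderedRing R]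
    [DecidableEq ι] {f : A → R} {P : ι → ℕ} {T : Finset ι} {m : ι}
    (H : AddSubgroup A) [Fintype H] {C c : R} {x : A}
    (hf : ∀ z, ∑ w : H, f (z + w) = f (Nat.card H • z) + C)
    (hcop : ∀ i ∈ T, (Nat.card H).Coprime (P i)) (hT : T.Nonempty) (hmT : m ∉ T)
    (hPH : ∀ w ∈ H, P m • w = 0) (hH : 1 < Nat.card H)
    (hPx : mixedDiff f P T (P m • x) = mixedDiff f P T x)
    (hHx : mixedDiff f P T (Nat.card H • x) = mixedDiff f P T x)
    {φ : H → R} (hφ : ∑ w, φ w = φ 0 + (Nat.card H - 1) * c)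
    (hneg : mixedDiff f P T x + c < 0) :
    ∃ w : H, mixedDiff f P (insert m T) (x + w) + φ w < 0 := by
  classical
  have insert_eq (w : H) : mixedDiff f P (insert m T) (x + w) =
      mixedDiff f P T x - mixedDiff f P T (x + w) := by
    rw [mixedDiff_insert hmT, smul_add, hPH w w.2, add_zero, hPx]
  have insert_zero : mixedDiff f P (insert m T) x = 0 := by
    rw [mixedDiff_insert hmT, hPx, sub_self]
  have sum_erase_zero :
      ∑ w ∈ univ.erase (0 : H), (mixedDiff f P (insert m T) (x + w) + φ w) =
        (Nat.card H - 1) * (mixedDiff f P T x + c) := by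
    rw [sum_erase_eq_sub (mem_univ _), sum_add_distrib, hφ]
    simp only [ZeroMemClass.coe_zero, add_zero, insert_zero, insert_eq, sum_sub_distrib,
      sum_mixedDiff_add_of_distribution H hf hcop hT, hHx, sum_const, card_univ,
      ← Nat.card_eq_fintype_card, nsmul_eq_mul]
    ring
  have hcard : (0 : R) < Nat.card H - 1 := sub_pos.mpr (mod_cast hH)
  by_contra! hnonneg
  have sum_nonneg_erase := sum_nonneg fun w (_ : w ∈ univ.erase (0 : H)) ↦ hnonneg w
  rw [sum_erase_zero] at sum_nonneg_erase
  exact sum_nonneg_erase.not_gt (mul_neg_of_pos_of_neg hcard hneg)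

end MixedDifference

section Digits

variable {𝕜 : Type*} [Field 𝕜] [LinearOrder 𝕜] [IsStrictOrderedRing 𝕜] [FloorRing 𝕜]

lemma sum_div_two_pow_add_sum_digits {K a : ℕ} (ha : a < 2 ^ K) :
    ∑ i ∈ range K, a / 2 ^ (i + 1) + (Nat.digits 2 a).sum = a := by
  induction K generalizing a with
  | zero => simp_all
  | succ K ih =>
    rcases Nat.eq_zero_or_pos a with rfl | hpos
    · simp
    have hhalf := ih (a := a / 2) (by rw [pow_succ] at ha; omega)
    simp only [Nat.div_div_eq_div_mul, ← pow_succ'] at hhalf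
    rw [sum_range_succ', Nat.digits_def' one_lt_two hpos, List.sum_cons]
    omega

lemma mul_div_mul_sub_one {a c n : ℕ} (ha : a < c * n - 1) : c * a / (c * n - 1) = a / n := by
  obtain ⟨N, hN⟩ : ∃ N, c * n = N + 1 := ⟨c * n - 1, by omega⟩
  rw [hN, Nat.add_sub_cancel] at ha ⊢
  have hn : 0 < n := Nat.pos_of_ne_zero (by rintro rfl; simp at hN)
  have hc : 0 < c := Nat.pos_of_ne_zero (by rintro rfl; simp at hN)
  have hq : a / n + 1 ≤ c := Nat.div_lt_of_lt_mul (by lia)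
  apply Nat.div_eq_of_lt_le
  · calc a / n * N ≤ a / n * (c * n) := Nat.mul_le_mul_left _ (by omega)
      _ = c * (a / n * n) := by ring
      _ ≤ c * a := Nat.mul_le_mul_left c (Nat.div_mul_le_self a n)
  · rcases hq.eq_or_lt with hq | hq
    · rw [hq]
      exact Nat.mul_lt_mul_of_pos_left ha hc
    · have hupper : a + 1 ≤ (a / n + 1) * n := Nat.lt_mul_of_div_lt (Nat.lt_succ_self _) hn
      have hmul : c * a + c ≤ (a / n + 1) * N + (a / n + 1) := calc
        c * a + c = c * (a + 1) := by ring
        _ ≤ c * ((a / n + 1) * n) := Nat.mul_le_mul_left c hupper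
        _ = (a / n + 1) * (c * n) := by ring
        _ = (a / n + 1) * N + (a / n + 1) := by rw [hN, mul_add_one]
      omega

lemma floor_mul_div_mul_sub_one {a c n : ℕ} (ha : a < c * n - 1) :
    (⌊(c * (a / (c * n - 1 : ℕ)) : 𝕜)⌋ : 𝕜) = (a / n : ℕ) := by
  rw [← mul_div_assoc, ← Nat.cast_mul, ← Int.natCast_floor_eq_floor (by positivity),
    Nat.floor_div_eq_div, mul_div_mul_sub_one ha, Int.cast_natCast]

lemma sum_fract_two_pow_mul_div {K a : ℕ} (ha : a < 2 ^ K - 1) :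
    ∑ i ∈ range K, Int.fract (2 ^ i * (a / (2 ^ K - 1)) : 𝕜) = (Nat.digits 2 a).sum := by
  have hN : ((2 ^ K - 1 : ℕ) : 𝕜) = 2 ^ K - 1 := by simp [Nat.cast_sub Nat.one_le_two_pow]
  have hN0 : (2 ^ K - 1 : 𝕜) ≠ 0 := by rw [← hN]; exact_mod_cast (by omega)
  have floor_eq {i : ℕ} (hi : i < K) :
      (⌊(2 ^ i * (a / (2 ^ K - 1)) : 𝕜)⌋ : 𝕜) = (a / 2 ^ (K - i) : ℕ) := by
    have hK : 2 ^ i * 2 ^ (K - i) = 2 ^ K := by rw [← pow_add, Nat.add_sub_cancel' hi.le]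
    have := floor_mul_div_mul_sub_one (𝕜 := 𝕜) (a := a) (c := 2 ^ i) (n := 2 ^ (K - i))
      (by rwa [hK])
    rwa [hK, hN, Nat.cast_pow, Nat.cast_ofNat] at this
  have sum_floor : ∑ i ∈ range K, a / 2 ^ (K - i) = ∑ i ∈ range K, a / 2 ^ (i + 1) := by
    rw [← sum_range_reflect]
    exact sum_congr rfl fun i hi ↦ by congr 2; have := mem_range.mp hi; omega
  have digits := sum_div_two_pow_add_sum_digits (K := K) (a := a) (by omega)
  calc ∑ i ∈ range K, Int.fract (2 ^ i * (a / (2 ^ K - 1)) : 𝕜)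
      = (∑ i ∈ range K, 2 ^ i) * (a / (2 ^ K - 1)) - (∑ i ∈ range K, a / 2 ^ (K - i) : ℕ) := by
        rw [sum_mul, Nat.cast_sum, ← sum_sub_distrib]
        exact sum_congr rfl fun i hi ↦ by rw [Int.fract, floor_eq (mem_range.mp hi)]
    _ = a - (∑ i ∈ range K, a / 2 ^ (i + 1) : ℕ) := by
        rw [geom_sum_eq (by norm_num), sum_floor]
        field_simp
        norm_num
    _ = (Nat.digits 2 a).sum := by
        rw [sub_eq_iff_eq_add', ← Nat.cast_add, digits]

end Digits

lemma card_nsmul_eq_zero_of_mem {A : Type*} [AddGroup A] {H : AddSubgroup A} {w : A}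
    (hw : w ∈ H) : Nat.card H • w = 0 :=
  congrArg Subtype.val (card_nsmul_eq_zero' (x := (⟨w, hw⟩ : H)))

section CircleFract

variable {𝕜 : Type*} [Field 𝕜] [LinearOrder 𝕜] [IsStrictOrderedRing 𝕜] [FloorRing 𝕜]

local notation "𝕋" => AddCircle (1 : 𝕜)

/-- The fractional part as a function on `𝕜 / ℤ`, with values in `[0, 1)`. -/
def circleFract : 𝕋 → 𝕜 := (Int.fract_periodic 𝕜).lift

lemma circleFract_coe (r : 𝕜) : circleFract (r : 𝕋) = Int.fract r := rfl

lemma circleFract_lt_one (x : 𝕋) : circleFract x < 1 := by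
  induction x using QuotientAddGroup.induction_on with | H r => exact Int.fract_lt_one r

lemma circleFract_add_circleFract_neg {x : 𝕋} (hx : x ≠ 0) :
    circleFract x + circleFract (-x) = 1 := by
  induction x using QuotientAddGroup.induction_on with | H r =>
  have hr : Int.fract r ≠ 0 := fun h ↦ hx <| by
    rw [← AddCircle.coe_fract, h, AddCircle.coe_zero]
  change Int.fract r + Int.fract (-r) = 1
  rw [Int.fract_neg hr, add_sub_cancel]

lemma image_range_div_card_eq_map_subtype (H : AddSubgroup 𝕋) [Fintype H] :
    (range (Nat.card H)).image (fun u : ℕ ↦ ((u / Nat.card H : 𝕜) : 𝕋)) =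
      univ.map (Function.Embedding.subtype (· ∈ H)) := by
  symm
  apply eq_of_subset_of_card_le
  · intro w hw
    have hwH : w ∈ H := by simpa using hw
    have htors : Nat.card H • w = 0 := card_nsmul_eq_zero_of_mem hwH
    obtain ⟨u, hu, rfl⟩ := (AddCircle.nsmul_eq_zero_iff Nat.card_pos).mp htors
    exact mem_image.mpr ⟨u, mem_range.mpr hu, by rw [mul_one]⟩
  · calc _ ≤ #(range (Nat.card H)) := card_image_le
      _ = _ := by rw [card_range, card_map, card_univ, Nat.card_eq_fintype_card]

lemma mem_addSubgroup_of_card_nsmul_eq_zero {H : AddSubgroup 𝕋} [Finite H] {x : 𝕋}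
    (hx : Nat.card H • x = 0) : x ∈ H := by
  cases nonempty_fintype H
  obtain ⟨u, hu, rfl⟩ := (AddCircle.nsmul_eq_zero_iff Nat.card_pos).mp hx
  have := image_range_div_card_eq_map_subtype H ▸
    mem_image_of_mem (fun u : ℕ ↦ ((u / Nat.card H : 𝕜) : 𝕋)) (mem_range.mpr hu)
  simpa using this

lemma sum_addSubgroup_eq_sum_range {M : Type*} [AddCommMonoid M] (H : AddSubgroup 𝕋) [Fintype H]
    (g : 𝕋 → M) : ∑ w : H, g w = ∑ u ∈ range (Nat.card H), g ((u / Nat.card H : 𝕜) : 𝕋) := by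
  have himage := image_range_div_card_eq_map_subtype H
  have hinj : Set.InjOn (fun u : ℕ ↦ ((u / Nat.card H : 𝕜) : 𝕋)) (range (Nat.card H)) := by
    rw [← card_image_iff, himage, card_map, card_univ, card_range, Nat.card_eq_fintype_card]
  rw [← sum_image (f := g) hinj, himage, sum_map]
  rfl

lemma circleFract_coe_div_add_coe_div {M u : ℕ} (hu : u < M) {θ : 𝕜} (h0 : 0 ≤ θ) (h1 : θ < 1) :
    circleFract (((θ / M : 𝕜) : 𝕋) + ((u / M : 𝕜) : 𝕋)) = (θ + u) / M := by
  have hM : (0 : 𝕜) < M := mod_cast Nat.zero_lt_of_lt hu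
  have hu1 : (u + 1 : 𝕜) ≤ M := mod_cast hu
  rw [← AddCircle.coe_add, circleFract_coe, ← add_div, Int.fract_eq_self]
  exact ⟨by positivity, by rw [div_lt_one hM]; linarith⟩

lemma sum_range_add_div {M : ℕ} (hM : 0 < M) (θ : 𝕜) :
    ∑ u ∈ range M, (θ + u) / M = θ + (M - 1) / 2 := by
  have hM0 : (M : 𝕜) ≠ 0 := Nat.cast_ne_zero.mpr hM.ne'
  have gauss : (∑ u ∈ range M, (u : 𝕜)) * 2 = M * (M - 1) := by
    have := congrArg (Nat.cast (R := 𝕜)) (sum_range_id_mul_two M)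
    simpa [Nat.cast_sub hM] using this
  rw [← sum_div, sum_add_distrib, sum_const, card_range, nsmul_eq_mul]
  field_simp
  linarith

lemma sum_circleFract_add (H : AddSubgroup 𝕋) [Fintype H] (z : 𝕋) :
    ∑ w : H, circleFract (z + (w : 𝕋)) =
      circleFract (Nat.card H • z : 𝕋) + (Nat.card H - 1) / 2 := by
  induction z using QuotientAddGroup.induction_on with | H r =>
  set M := Nat.card H
  set θ := Int.fract (M * r) with hθ
  have hshift : ((r - θ / M : 𝕜) : 𝕋) ∈ H := mem_addSubgroup_of_card_nsmul_eq_zero <| by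
    have hM0 : (M : 𝕜) ≠ 0 := Nat.cast_ne_zero.mpr Nat.card_pos.ne'
    rw [← AddCircle.coe_nsmul, AddCircle.coe_eq_zero_iff]
    refine ⟨⌊M * r⌋, ?_⟩
    rw [zsmul_one, nsmul_eq_mul, mul_sub, mul_div_cancel₀ _ hM0, hθ, Int.self_sub_fract]
  calc ∑ w : H, circleFract ((r : 𝕋) + (w : 𝕋))
      = ∑ w : H, circleFract (((θ / M : 𝕜) : 𝕋) + (w : 𝕋)) := by
        rw [← Equiv.sum_comp (Equiv.addLeft (⟨_, hshift⟩ : H))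
          fun w ↦ circleFract (((θ / M : 𝕜) : 𝕋) + (w : 𝕋))]
        refine sum_congr rfl fun w _ ↦ congrArg circleFract ?_
        simp [← add_assoc]
    _ = ∑ u ∈ range M, circleFract (((θ / M : 𝕜) : 𝕋) + ((u / M : 𝕜) : 𝕋)) :=
        sum_addSubgroup_eq_sum_range H fun w ↦ circleFract (((θ / M : 𝕜) : 𝕋) + w)
    _ = ∑ u ∈ range M, (θ + u) / M :=
        sum_congr rfl fun u hu ↦ circleFract_coe_div_add_coe_div (mem_range.mp hu)
          (Int.fract_nonneg _) (Int.fract_lt_one _)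
    _ = θ + (M - 1) / 2 := sum_range_add_div Nat.card_pos θ
    _ = circleFract (M • (r : 𝕋) : 𝕋) + (M - 1) / 2 := by
        rw [← AddCircle.coe_nsmul, circleFract_coe, nsmul_eq_mul]

end CircleFract

section DoublingMean

variable {𝕜 : Type*} [Field 𝕜] [LinearOrder 𝕜] [IsStrictOrderedRing 𝕜] [FloorRing 𝕜]
  {K : ℕ} {x : AddCircle (1 : 𝕜)}

local notation "𝕋" => AddCircle (1 : 𝕜)

/-- The mean of the fractional part over the first `K` points of the orbit of `x` under doubling.
This is the Kubert function `V` at every point whose period under doubling divides `K`. -/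
def doublingMean (K : ℕ) (x : 𝕋) : 𝕜 :=
  birkhoffAverage 𝕜 (2 • ·) circleFract K x

lemma doublingMean_eq_sum_div (K : ℕ) (x : 𝕋) :
    doublingMean K x = (∑ i ∈ range K, circleFract (2 ^ i • x : 𝕋)) / K := by
  simp only [doublingMean, birkhoffAverage, birkhoffSum, smul_iterate, smul_eq_mul, div_eq_inv_mul]

lemma doublingMean_zero (K : ℕ) : doublingMean K (0 : 𝕋) = 0 := by
  have hzero : circleFract (0 : 𝕋) = 0 := Int.fract_zero
  rw [doublingMean_eq_sum_div]
  simp [hzero]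

lemma doublingMean_lt_one (hK : 0 < K) (x : 𝕋) : doublingMean K x < 1 := by
  rw [doublingMean_eq_sum_div, div_lt_one (mod_cast hK)]
  calc ∑ i ∈ range K, circleFract (2 ^ i • x : 𝕋) < ∑ _i ∈ range K, 1 :=
        sum_lt_sum_of_nonempty (nonempty_range_iff.mpr hK.ne') fun _ _ ↦ circleFract_lt_one _
    _ = K := by simp

lemma doublingMean_two_nsmul (hx : 2 ^ K • x = x) :
    doublingMean K (2 • x : 𝕋) = doublingMean K x := by
  rw [← sub_eq_zero, doublingMean, doublingMean, birkhoffAverage_apply_sub_birkhoffAverage,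
    smul_iterate_apply, hx, sub_self, smul_zero]

lemma doublingMean_two_pow_nsmul (hx : 2 ^ K • x = x) (n : ℕ) :
    doublingMean K (2 ^ n • x : 𝕋) = doublingMean K x := by
  induction n with
  | zero => simp
  | succ n ih => rw [pow_succ', mul_nsmul', doublingMean_two_nsmul (by rw [smul_comm, hx]), ih]

lemma doublingMean_add_doublingMean_neg (hK : 0 < K) (hx : 2 ^ K • x ≠ 0) :
    doublingMean K x + doublingMean K (-x) = 1 := by
  have hK0 : (K : 𝕜) ≠ 0 := Nat.cast_ne_zero.mpr hK.ne'
  have hne {i : ℕ} (hi : i ∈ range K) : 2 ^ i • x ≠ 0 := fun h ↦ hx <| by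
    rw [← Nat.sub_add_cancel (mem_range.mp hi).le, pow_add, mul_nsmul', h, smul_zero]
  rw [doublingMean_eq_sum_div, doublingMean_eq_sum_div, ← add_div, ← sum_add_distrib,
    div_eq_one_iff_eq hK0]
  calc ∑ i ∈ range K, (circleFract (2 ^ i • x : 𝕋) + circleFract (2 ^ i • -x : 𝕋))
      = ∑ _i ∈ range K, 1 := sum_congr rfl fun i hi ↦ by
        rw [smul_neg, circleFract_add_circleFract_neg (hne hi)]
    _ = K := by simp

lemma doublingMean_eq_half {n : ℕ} (hK : 0 < K) (hx : 2 ^ K • x = x) (hx0 : x ≠ 0)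
    (hn : (2 ^ n + 1) • x = 0) : doublingMean K x = 1 / 2 := by
  have hneg : 2 ^ n • x = -x := eq_neg_of_add_eq_zero_left (by rwa [succ_nsmul] at hn)
  have hsum := doublingMean_add_doublingMean_neg hK (hx.symm ▸ hx0)
  rw [← hneg, doublingMean_two_pow_nsmul hx] at hsum
  linarith

lemma doublingMean_eq_of_period_dvd {k : ℕ} (hK : 0 < K) (hkK : k ∣ K) (hx : 2 ^ k • x = x) :
    doublingMean K x = doublingMean k x := by
  obtain ⟨n, rfl⟩ := hkK
  have hsum (n : ℕ) : birkhoffSum (2 • ·) circleFract (k * n) x =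
      n * birkhoffSum (2 • ·) circleFract k x := by
    induction n with
    | zero => simp
    | succ n ih =>
      rw [Nat.mul_succ, add_comm, birkhoffSum_add, smul_iterate_apply, hx, ih]
      push_cast
      ring
  have hn0 : (n : 𝕜) ≠ 0 := Nat.cast_ne_zero.mpr (Nat.pos_of_mul_pos_left hK).ne'
  rw [doublingMean, birkhoffAverage, hsum, Nat.cast_mul, mul_inv, smul_eq_mul, mul_assoc,
    inv_mul_cancel_left₀ hn0, doublingMean, birkhoffAverage, smul_eq_mul]

lemma sum_doublingMean_add (hK : 0 < K) (H : AddSubgroup 𝕋) [Fintype H]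
    (hH : Odd (Nat.card H)) (z : 𝕋) :
    ∑ w : H, doublingMean K (z + (w : 𝕋)) =
      doublingMean K (Nat.card H • z : 𝕋) + (Nat.card H - 1) / 2 := by
  have hK0 : (K : 𝕜) ≠ 0 := Nat.cast_ne_zero.mpr hK.ne'
  have orbit_sum (i : ℕ) : ∑ w : H, circleFract (2 ^ i • (z + (w : 𝕋)) : 𝕋) =
      circleFract (2 ^ i • (Nat.card H • z) : 𝕋) + (Nat.card H - 1) / 2 := by
    have hcop : (Nat.card H).Coprime (2 ^ i) := hH.coprime_two_right.pow_right i
    rw [smul_comm, ← sum_circleFract_add,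
      ← Equiv.sum_comp (nsmulCoprime hcop) fun w ↦ circleFract (_ + (w : 𝕋))]
    simp [smul_add]
  simp only [doublingMean_eq_sum_div]
  rw [← sum_div, sum_comm, sum_congr rfl fun i _ ↦ orbit_sum i, sum_add_distrib, sum_const,
    card_range, add_div, nsmul_eq_mul, mul_div_cancel_left₀ _ hK0]

lemma doublingMean_coe_div {a : ℕ} (ha : a < 2 ^ K - 1) :
    doublingMean K ((a / (2 ^ K - 1) : 𝕜) : 𝕋) = ((Nat.digits 2 a).sum : ℕ) / K := by
  rw [doublingMean_eq_sum_div, ← sum_fract_two_pow_mul_div ha]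
  simp only [← AddCircle.coe_nsmul, circleFract_coe, nsmul_eq_mul, Nat.cast_pow, Nat.cast_ofNat]

lemma doublingMean_two_mul_coe_div_lt_half {a : ℕ} (ha : a < 2 ^ K - 1) :
    doublingMean (2 * K) ((a / (2 ^ (2 * K) - 1) : 𝕜) : 𝕋) < 1 / 2 := by
  have hK : 0 < K := Nat.pos_of_ne_zero (by rintro rfl; simp at ha)
  have hle : 2 ^ K ≤ 2 ^ (2 * K) := Nat.pow_le_pow_right two_pos (by omega)
  have hlt := doublingMean_lt_one hK ((a / (2 ^ K - 1) : 𝕜) : 𝕋)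
  rw [doublingMean_coe_div ha] at hlt
  rw [doublingMean_coe_div (by omega), Nat.cast_mul, mul_comm, ← div_div, Nat.cast_ofNat]
  linarith

end DoublingMean

section TwoPowMultiples

variable {A : Type*} [AddCommGroup A] {x : A}

lemma two_pow_nsmul_eq_self_iff {K : ℕ} : 2 ^ K • x = x ↔ (2 ^ K - 1) • x = 0 := by
  rw [sub_nsmul x Nat.one_le_two_pow, one_nsmul, add_neg_eq_zero]

lemma two_pow_nsmul_eq_self_of_dvd {k K : ℕ} (hkK : k ∣ K) (hx : 2 ^ k • x = x) :
    2 ^ K • x = x := by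
  rw [two_pow_nsmul_eq_self_iff, ← addOrderOf_dvd_iff_nsmul_eq_zero] at hx ⊢
  exact hx.trans (Nat.pow_sub_one_dvd_pow_sub_one 2 hkK)

lemma two_pow_add_one_nsmul_eq_two_nsmul {k a : ℕ} (hka : k ∣ a) (hx : 2 ^ k • x = x) :
    (2 ^ a + 1) • x = 2 • x := by
  rw [succ_nsmul, two_pow_nsmul_eq_self_of_dvd hka hx, two_nsmul]

lemma two_pow_two_pow_succ_nsmul_of_fermatNumber_nsmul {n : ℕ} (hx : n.fermatNumber • x = 0) :
    2 ^ 2 ^ (n + 1) • x = x := by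
  rw [Nat.fermatNumber, succ_nsmul, add_eq_zero_iff_eq_neg] at hx
  rw [pow_succ, pow_mul, pow_two, mul_nsmul, hx, smul_neg, hx, neg_neg]

lemma two_pow_two_pow_succ_nsmul_add_of_mem {n : ℕ} {H : AddSubgroup A}
    (hH : Nat.card H = n.fermatNumber) {w : A} (hx : 2 ^ 2 ^ n • x = x) (hw : w ∈ H) :
    2 ^ 2 ^ (n + 1) • (x + w) = x + w := by
  rw [smul_add, two_pow_nsmul_eq_self_of_dvd (pow_dvd_pow 2 n.le_succ) hx,
    two_pow_two_pow_succ_nsmul_of_fermatNumber_nsmul (hH ▸ card_nsmul_eq_zero_of_mem hw)]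

end TwoPowMultiples

section FermatDivisors

lemma fermatNumber_padicValNat_dvd_two_pow_add_one {a : ℕ} (ha : a ≠ 0) :
    (padicValNat 2 a).fermatNumber ∣ 2 ^ a + 1 := by
  obtain ⟨k, hk⟩ : 2 ^ padicValNat 2 a ∣ a := pow_padicValNat_dvd
  have hodd : Odd k := Nat.not_even_iff_odd.mp fun heven ↦
    pow_succ_padicValNat_not_dvd (p := 2) ha <| by
      rw [pow_succ]
      exact (mul_dvd_mul_left _ heven.two_dvd).trans hk.symm.dvd
  have hdvd := hodd.nat_add_dvd_pow_add_pow (2 ^ 2 ^ padicValNat 2 a) 1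
  rwa [one_pow, ← pow_mul, ← hk] at hdvd

lemma two_pow_two_pow_succ_sub_one (n : ℕ) :
    2 ^ 2 ^ (n + 1) - 1 = (2 ^ 2 ^ n - 1) * n.fermatNumber := by
  rw [Nat.fermatNumber, mul_comm, pow_succ, pow_mul, ← Nat.sq_sub_sq, one_pow]

lemma fermatNumber_dvd_two_pow_two_pow_sub_one {m n : ℕ} (hmn : m < n) :
    m.fermatNumber ∣ 2 ^ 2 ^ n - 1 := by
  have h : 2 ^ 2 ^ n - 1 = n.fermatNumber - 2 := by rw [Nat.fermatNumber]; omega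
  rw [h, ← Nat.prod_fermatNumber]
  exact dvd_prod_of_mem _ (mem_range.mpr hmn)

variable {ι : Type*} {a : ι → ℕ}

lemma coprime_fermatNumber_padicValNat (hpos : ∀ i, 0 < a i)
    (hcop : Pairwise (Function.onFun Nat.Coprime fun i ↦ 2 ^ a i + 1)) {i j : ι} (hij : i ≠ j) :
    (padicValNat 2 (a i)).fermatNumber.Coprime (2 ^ a j + 1) :=
  (hcop hij).coprime_dvd_left (fermatNumber_padicValNat_dvd_two_pow_add_one (hpos i).ne')

lemma padicValNat_two_injective (hpos : ∀ i, 0 < a i)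
    (hcop : Pairwise (Function.onFun Nat.Coprime fun i ↦ 2 ^ a i + 1)) :
    Function.Injective fun i ↦ padicValNat 2 (a i) := by
  intro i j (hv : padicValNat 2 (a i) = padicValNat 2 (a j))
  by_contra hij
  have h1 : (padicValNat 2 (a j)).fermatNumber = 1 :=
    (hv ▸ coprime_fermatNumber_padicValNat hpos hcop hij).eq_one_of_dvd
      (fermatNumber_padicValNat_dvd_two_pow_add_one (hpos j).ne')
  exact Nat.fermatNumber_ne_one _ h1

end FermatDivisors

section NegativeMixedDifference

variable {𝕜 : Type*} [Field 𝕜] [LinearOrder 𝕜] [IsStrictOrderedRing 𝕜] [FloorRing 𝕜]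

local notation "𝕋" => AddCircle (1 : 𝕜)

lemma exists_finite_addSubgroup_card_eq {N : ℕ} (hN : 0 < N) :
    ∃ (H : AddSubgroup 𝕋) (_ : Finite H), Nat.card H = N := by
  have hcard : Nat.card (AddSubgroup.zmultiples ((1 / N : 𝕜) : 𝕋)) = N := by
    rw [Nat.card_zmultiples, AddCircle.addOrderOf_period_div hN]
  exact ⟨_, Nat.finite_of_card_ne_zero (hcard.symm ▸ hN.ne'), hcard⟩

lemma exists_addOrderOf_eq_fermatNumber_mul_and_doublingMean_lt_half {m n : ℕ} (hmn : m < n) :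
    ∃ x : 𝕋, addOrderOf x = m.fermatNumber * n.fermatNumber ∧
      doublingMean (2 ^ (n + 1)) x < 1 / 2 := by
  obtain ⟨E, hE⟩ := fermatNumber_dvd_two_pow_two_pow_sub_one hmn
  have hm := Nat.three_le_fermatNumber m
  have hpos : 0 < m.fermatNumber * n.fermatNumber :=
    Nat.mul_pos (by omega) (by have := Nat.three_le_fermatNumber n; omega)
  have hn1 : 1 < 2 ^ 2 ^ n := Nat.one_lt_two_pow (by positivity)
  have hE0 : 0 < E := Nat.pos_of_ne_zero (by rintro rfl; omega)
  have hElt : E < 2 ^ 2 ^ n - 1 := by nlinarith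
  have hfactor : (2 ^ 2 ^ (n + 1) - 1 : 𝕜) = (m.fermatNumber * n.fermatNumber : ℕ) * E := by
    have := congrArg (Nat.cast (R := 𝕜)) (two_pow_two_pow_succ_sub_one n)
    rw [Nat.cast_sub Nat.one_le_two_pow, hE, mul_right_comm, Nat.cast_mul _ E] at this
    simpa using this
  refine ⟨((1 / (m.fermatNumber * n.fermatNumber : ℕ) : 𝕜) : 𝕋),
    AddCircle.addOrderOf_period_div hpos, ?_⟩
  have hlt := doublingMean_two_mul_coe_div_lt_half (𝕜 := 𝕜) hElt
  rwa [← pow_succ', hfactor, div_mul_cancel_right₀ (Nat.cast_ne_zero.mpr hE0.ne'), ← one_div]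
    at hlt

variable {ι : Type*} {a : ι → ℕ} {K : ℕ} {T : Finset ι}

lemma exists_mixedDiff_pair_lt [DecidableEq ι] (hpos : ∀ i, 0 < a i)
    (hcop : Pairwise (Function.onFun Nat.Coprime fun i ↦ 2 ^ a i + 1)) {i j : ι}
    (hij : padicValNat 2 (a i) < padicValNat 2 (a j)) (hK : 0 < K)
    (hjK : 2 ^ (padicValNat 2 (a j) + 1) ∣ K) :
    ∃ x : 𝕋, 2 ^ 2 ^ (padicValNat 2 (a j) + 1) • x = x ∧
      mixedDiff (doublingMean K) (fun i ↦ 2 ^ a i + 1) {i, j} x < -1 / 2 := by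
  obtain ⟨x, horder, hlt⟩ :=
    exists_addOrderOf_eq_fermatNumber_mul_and_doublingMean_lt_half (𝕜 := 𝕜) hij
  have hne : i ≠ j := ne_of_apply_ne (fun i ↦ padicValNat 2 (a i)) hij.ne
  have hx : 2 ^ 2 ^ (padicValNat 2 (a j) + 1) • x = x := by
    rw [two_pow_nsmul_eq_self_iff, ← addOrderOf_dvd_iff_nsmul_eq_zero, horder,
      two_pow_two_pow_succ_sub_one]
    exact mul_dvd_mul_right (fermatNumber_dvd_two_pow_two_pow_sub_one hij) _
  have hxK : 2 ^ K • x = x := two_pow_nsmul_eq_self_of_dvd hjK hx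
  have hzero : ((2 ^ a i + 1) * (2 ^ a j + 1)) • x = 0 := by
    rw [← addOrderOf_dvd_iff_nsmul_eq_zero, horder]
    exact mul_dvd_mul (fermatNumber_padicValNat_dvd_two_pow_add_one (hpos i).ne')
      (fermatNumber_padicValNat_dvd_two_pow_add_one (hpos j).ne')
  have ne_zero {k l : ι} (hkl : k ≠ l) (hk : (padicValNat 2 (a k)).fermatNumber ∣ addOrderOf x) :
      (2 ^ a l + 1) • x ≠ 0 := fun h ↦ by
    have h1 := (coprime_fermatNumber_padicValNat hpos hcop hkl).eq_one_of_dvd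
      (hk.trans (addOrderOf_dvd_of_nsmul_eq_zero h))
    exact (Nat.fermatNumber_ne_one _) h1
  have hi : doublingMean K ((2 ^ a i + 1) • x : 𝕋) = 1 / 2 :=
    doublingMean_eq_half (n := a j) hK (by rw [smul_comm, hxK])
      (ne_zero hne.symm (horder ▸ dvd_mul_left _ _)) (by rw [← mul_nsmul, hzero])
  have hj : doublingMean K ((2 ^ a j + 1) • x : 𝕋) = 1 / 2 :=
    doublingMean_eq_half (n := a i) hK (by rw [smul_comm, hxK])
      (ne_zero hne (horder ▸ dvd_mul_right _ _)) (by rw [← mul_nsmul', hzero])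
  refine ⟨x, hx, ?_⟩
  rw [mixedDiff_pair hne, hzero, hi, hj, doublingMean_eq_of_period_dvd hK hjK hx,
    doublingMean_zero]
  linarith

lemma exists_mixedDiff_insert_doublingMean_add_lt_zero [DecidableEq ι]
    (hpos : ∀ i, 0 < a i) (hcop : Pairwise (Function.onFun Nat.Coprime fun i ↦ 2 ^ a i + 1))
    (hK : 0 < K) {m : ι} (hmK : 2 ^ padicValNat 2 (a m) ∣ K) (hT : T.Nonempty) (hmT : m ∉ T)
    (H : AddSubgroup 𝕋) [Fintype H] (hH : Nat.card H = (padicValNat 2 (a m)).fermatNumber) {x : 𝕋}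
    (hx : 2 ^ 2 ^ padicValNat 2 (a m) • x = x) {φ : H → 𝕜}
    (hφ : ∑ w, φ w = φ 0 + (Nat.card H - 1) / 2)
    (hneg : mixedDiff (doublingMean K) (fun i ↦ 2 ^ a i + 1) T x < -1 / 2) :
    ∃ w : H,
      mixedDiff (doublingMean K) (fun i ↦ 2 ^ a i + 1) (insert m T) (x + (w : 𝕋)) + φ w < 0 := by
  have hxK := two_pow_nsmul_eq_self_of_dvd hmK hx
  have invariant : mixedDiff (doublingMean K) (fun i ↦ 2 ^ a i + 1) T (2 • x : 𝕋) =
      mixedDiff (doublingMean K) (fun i ↦ 2 ^ a i + 1) T x :=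
    mixedDiff_nsmul_of_invariant fun n ↦ doublingMean_two_nsmul (by rw [smul_comm, hxK])
  have hodd : Odd (Nat.card H) := hH ▸ Nat.odd_fermatNumber _
  refine exists_mixedDiff_insert_add_lt_zero (c := 1 / 2) H (sum_doublingMean_add hK H hodd)
    (fun i hi ↦ ?_) hT hmT (fun w hw ↦ ?_) ?_ ?_ ?_ (hφ.trans (by ring)) (by linarith)
  · exact hH ▸ coprime_fermatNumber_padicValNat hpos hcop (ne_of_mem_of_not_mem hi hmT).symm
  · obtain ⟨k, hk⟩ := fermatNumber_padicValNat_dvd_two_pow_add_one (hpos m).ne'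
    rw [hk, mul_nsmul, ← hH, card_nsmul_eq_zero_of_mem hw, smul_zero]
  · have := Nat.three_le_fermatNumber (padicValNat 2 (a m))
    omega
  · rw [two_pow_add_one_nsmul_eq_two_nsmul pow_padicValNat_dvd hx, invariant]
  · rw [hH, Nat.fermatNumber, two_pow_add_one_nsmul_eq_two_nsmul dvd_rfl hx, invariant]

lemma exists_mixedDiff_lt (hpos : ∀ i, 0 < a i)
    (hcop : Pairwise (Function.onFun Nat.Coprime fun i ↦ 2 ^ a i + 1)) (hK : 0 < K) {n : ℕ}
    (hn : ∀ i ∈ T, padicValNat 2 (a i) < n) (hnK : 2 ^ n ∣ K) (hT : 2 ≤ #T) :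
    ∃ x : 𝕋, 2 ^ 2 ^ n • x = x ∧
      mixedDiff (doublingMean K) (fun i ↦ 2 ^ a i + 1) T x < -1 / 2 := by
  classical
  induction T using induction_on_max_value (fun i ↦ padicValNat 2 (a i)) generalizing n with
  | empty => simp at hT
  | insert m T hmT hmax ih =>
    have hvm : padicValNat 2 (a m) < n := hn m (mem_insert_self m T)
    have hlt : ∀ i ∈ T, padicValNat 2 (a i) < padicValNat 2 (a m) := fun i hi ↦
      (hmax i hi).lt_of_ne ((padicValNat_two_injective hpos hcop).ne
        (ne_of_mem_of_not_mem hi hmT))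
    rw [card_insert_of_notMem hmT] at hT
    suffices ∃ x : 𝕋, 2 ^ 2 ^ (padicValNat 2 (a m) + 1) • x = x ∧
        mixedDiff (doublingMean K) (fun i ↦ 2 ^ a i + 1) (insert m T) x < -1 / 2 by
      obtain ⟨x, hx, hneg⟩ := this
      exact ⟨x, two_pow_nsmul_eq_self_of_dvd (pow_dvd_pow 2 hvm) hx, hneg⟩
    rcases (by omega : #T = 1 ∨ 2 ≤ #T) with hcard | hcard
    · obtain ⟨i, rfl⟩ := card_eq_one.mp hcard
      rw [pair_comm]
      exact exists_mixedDiff_pair_lt hpos hcop (hlt i (mem_singleton_self i)) hK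
        ((pow_dvd_pow 2 hvm).trans hnK)
    · have hmK : 2 ^ padicValNat 2 (a m) ∣ K := (pow_dvd_pow 2 hvm.le).trans hnK
      obtain ⟨x, hx, hneg⟩ := ih hlt hmK hcard
      obtain ⟨H, _, hH⟩ := exists_finite_addSubgroup_card_eq (𝕜 := 𝕜)
        (Nat.odd_fermatNumber (padicValNat 2 (a m))).pos
      have := Fintype.ofFinite H
      obtain ⟨w, hw⟩ := exists_mixedDiff_insert_doublingMean_add_lt_zero hpos hcop hK hmK
        (card_pos.mp (by omega)) hmT H hH hx (φ := fun _ ↦ 1 / 2)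
        (by rw [sum_const, card_univ, ← Nat.card_eq_fintype_card, nsmul_eq_mul]; ring) hneg
      exact ⟨x + w, two_pow_two_pow_succ_nsmul_add_of_mem hH hx w.2, by linarith⟩

lemma exists_mixedDiff_add_doublingMean_neg_lt_zero (hpos : ∀ i, 0 < a i)
    (hcop : Pairwise (Function.onFun Nat.Coprime fun i ↦ 2 ^ a i + 1)) (hT : 3 ≤ #T) :
    ∃ K > 0, ∃ x : 𝕋, 2 ^ K • x = x ∧
      mixedDiff (doublingMean K) (fun i ↦ 2 ^ a i + 1) T x + doublingMean K (-x) < 0 := by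
  classical
  obtain ⟨m, hm, hmax⟩ := exists_max_image T (fun i ↦ padicValNat 2 (a i)) (card_pos.mp (by omega))
  have hlt : ∀ i ∈ T.erase m, padicValNat 2 (a i) < padicValNat 2 (a m) := fun i hi ↦
    (hmax i (mem_of_mem_erase hi)).lt_of_ne
      ((padicValNat_two_injective hpos hcop).ne (ne_of_mem_erase hi))
  have hcard : 2 ≤ #(T.erase m) := by rw [card_erase_of_mem hm]; omega
  set K := 2 ^ (padicValNat 2 (a m) + 1)
  have hK : 0 < K := by positivity
  have hmK : 2 ^ padicValNat 2 (a m) ∣ K := pow_dvd_pow 2 (Nat.le_succ _)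
  obtain ⟨x, hx, hneg⟩ := exists_mixedDiff_lt (𝕜 := 𝕜) hpos hcop hK hlt hmK hcard
  obtain ⟨H, _, hH⟩ := exists_finite_addSubgroup_card_eq (𝕜 := 𝕜)
    (Nat.odd_fermatNumber (padicValNat 2 (a m))).pos
  have := Fintype.ofFinite H
  have sum_neg : ∑ w : H, doublingMean K (-(x + (w : 𝕋))) =
      doublingMean K (-(x + ((0 : H) : 𝕋))) + (Nat.card H - 1) / 2 := by
    have hF : Nat.card H • (-x) = 2 • (-x) := by
      rw [hH, Nat.fermatNumber]
      exact two_pow_add_one_nsmul_eq_two_nsmul dvd_rfl (by rw [smul_neg, hx])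
    have hxK : 2 ^ K • (-x) = -x := by rw [smul_neg, two_pow_nsmul_eq_self_of_dvd hmK hx]
    have hsum := sum_doublingMean_add hK H (hH ▸ Nat.odd_fermatNumber _) (-x)
    rw [hF, doublingMean_two_nsmul hxK] at hsum
    rw [← Equiv.sum_comp (Equiv.neg H)]
    simpa [neg_add_rev, add_comm] using hsum
  obtain ⟨w, hw⟩ := exists_mixedDiff_insert_doublingMean_add_lt_zero hpos hcop hK hmK
    (card_pos.mp (by omega)) (notMem_erase m T) H hH hx
    (φ := fun w ↦ doublingMean K (-(x + (w : 𝕋)))) sum_neg hneg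
  rw [insert_erase hm] at hw
  exact ⟨K, hK, x + w, two_pow_two_pow_succ_nsmul_add_of_mem hH hx w.2, hw⟩

end NegativeMixedDifference

section KubertFunction

variable {V : ℚ → ℚ} {K : ℕ} {q : ℚ}

lemma IsV2.eq_doublingMean (hV : IsV2 V) (hK : 0 < K)
    (hq : 2 ^ K • (q : AddCircle (1 : ℚ)) = q) : V q = doublingMean K (q : AddCircle (1 : ℚ)) := by
  have hN : 0 < 2 ^ K - 1 := Nat.sub_pos_of_lt (Nat.one_lt_two_pow hK.ne')
  obtain ⟨a, ha, haq⟩ := (AddCircle.nsmul_eq_zero_iff hN).mp (two_pow_nsmul_eq_self_iff.mp hq)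
  have hcast : ((2 ^ K - 1 : ℕ) : ℚ) = 2 ^ K - 1 := by simp [Nat.cast_sub Nat.one_le_two_pow]
  rw [mul_one, hcast] at haq
  obtain ⟨z, hz⟩ := (AddCircle.coe_eq_zero_iff (1 : ℚ)).mp
    (show ((q - a / (2 ^ K - 1) : ℚ) : AddCircle (1 : ℚ)) = 0 by
      rw [AddCircle.coe_sub, haq, sub_self])
  rw [hV q K a hK ha ⟨z, by rw [← hz, zsmul_one]⟩, ← haq, doublingMean_coe_div ha]

lemma IsV2.vmulti_eq_mixedDiff (hV : IsV2 V) (hK : 0 < K)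
    (hq : 2 ^ K • (q : AddCircle (1 : ℚ)) = q) {t : ℕ} (r : Fin t → ℕ) :
    Vmulti V r q = mixedDiff (doublingMean K) (fun i ↦ 2 ^ r i + 1) univ
      (q : AddCircle (1 : ℚ)) := by
  rw [Vmulti, mixedDiff, powerset_univ, card_univ, Fintype.card_fin]
  refine sum_congr rfl fun S _ ↦ ?_
  have hmul : (∏ i ∈ S, ((2 : ℚ) ^ r i + 1)) * q = (∏ i ∈ S, (2 ^ r i + 1) : ℕ) • q := by
    simp [nsmul_eq_mul]
  rw [hmul, hV.eq_doublingMean hK (by rw [AddCircle.coe_nsmul, smul_comm, hq]),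
    AddCircle.coe_nsmul]

lemma odd_den_of_two_pow_nsmul_eq_self (hK : 0 < K)
    (hq : 2 ^ K • (q : AddCircle (1 : ℚ)) = q) : Odd q.den := by
  have hdvd : q.den ∣ 2 ^ K - 1 := by
    rw [← AddCircle.addOrderOf_coe_rat (p := (1 : ℚ)), mul_one,
      addOrderOf_dvd_iff_nsmul_eq_zero, ← two_pow_nsmul_eq_self_iff]
    exact hq
  exact (Nat.Even.sub_odd Nat.one_le_two_pow (even_two.pow_of_ne_zero hK.ne') odd_one).of_dvd_nat
    hdvd

end KubertFunction

/-- For `t ≥ 3` and positive integers `a₁ > a₂ > ⋯ > a_t` with `2^{a_j}+1` pairwise coprime,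
there is a rational `x` with odd denominator such that `V(2; a₁, …, a_t; x) + V(-x) < 0`. -/
theorem stmt_13 (V : ℚ → ℚ) (hV : IsV2 V) (t : ℕ) (ht : 3 ≤ t)
    (a : Fin t → ℕ) (hpos : ∀ j, 0 < a j) (hanti : StrictAnti a)
    (hcop : ∀ j k, j ≠ k → Nat.Coprime (2 ^ a j + 1) (2 ^ a k + 1)) :
    ∃ x : ℚ, Odd x.den ∧ Vmulti V a x + V (-x) < 0 := by
  obtain ⟨K, hK, x, hx, hneg⟩ := exists_mixedDiff_add_doublingMean_neg_lt_zero
    (𝕜 := ℚ) (T := univ) hpos (fun i j hij ↦ hcop i j hij) (by simpa using ht)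
  obtain ⟨q, rfl⟩ := QuotientAddGroup.mk_surjective x
  refine ⟨q, odd_den_of_two_pow_nsmul_eq_self hK hx, ?_⟩
  rw [hV.vmulti_eq_mixedDiff hK hx, hV.eq_doublingMean hK (q := -q)]
  · exact hneg
  · rw [AddCircle.coe_neg, smul_neg, hx]
end
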